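/- arXiv:2009.00554 — 13 statements merged into one kernel-verified Lean document; each statement's English description precedes it below -/
import Mathlib

section
/- Let d ≥ 0, n = 3^d, and let D_n = ⟨a, b | a^n = b^2 = (ab)^2 = 1⟩ be the dihedral group of order 2n. Let G = Cay(D_n, C) with C = {a^{3^i} b | 0 ≤ i ≤ d}. For a positive integer i, let [i]_3 ∈ {1,2} denote the rightmost nonzero digit of the base-3 representation of i. Then the set M = {a^i | 1 ≤ i < n, [i]_3 = 1} ∪ {a^i b | 1 ≤ i < n, [i]_3 = 2} ∪ {1, b} has exactly n + 1 elements, and every element of M has exactly one neighbor in M in the graph G (so M induces a perfect matching on n+1 vertices). -/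
/-- The rightmost nonzero digit of the base-3 representation of `i`
(junk value for `i = 0`). -/
def rightmostBase3 (i : ℕ) : ℕ := (i / 3 ^ (padicValNat 3 i)) % 3

/-!
Let `A` be the set of residues mod `3 ^ d` whose rightmost nonzero ternary digit is `1`, together
with `0`. Since `sr x` is `b a ^ x = a ^ (-x) b`, and negation exchanges the digits `1` and `2`,
both the rotations and the reflections in `M` are indexed by `A`. As `A` and `-A` cover
`ZMod (3 ^ d)` and meet only in `0`, we get `|M| = 2 |A| = 3 ^ d + 1`.

The elements `r x` and `sr y` are adjacent iff `x + y + 3 ^ k = 0` for some `k ≤ d`. For `x, y ∈ A`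
this is a vanishing sum of three terms `3 ^ v * u` with `u ≡ 1` mod `3`. Counting the terms not
divisible by `3`, and dividing by `3` when there are none, shows that all three have the same
exponent `v`, so `y = -x - 3 ^ v` is determined by `x`.
-/

open DihedralGroup SimpleGraph

section Counting

open scoped Pointwise

theorem two_mul_ncard_eq_card_add_one {α : Type*} [InvolutiveNeg α] [Finite α] {A : Set α} {c : α}
    (hunion : A ∪ -A = Set.univ) (hinter : A ∩ -A = {c}) : 2 * A.ncard = Nat.card α + 1 := by
  have h := Set.ncard_union_add_ncard_inter A (-A)
  rw [hunion, hinter, Set.ncard_univ, Set.ncard_singleton, Set.ncard_neg] at h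
  rw [two_mul, h]

end Counting

section Dihedral

variable {n : ℕ} {A T : Set (ZMod n)}

theorem ncard_image_r_union_image_sr (hA : A.Finite) :
    (r '' A ∪ sr '' A).ncard = 2 * A.ncard := by
  have hr : Function.Injective (r : ZMod n → _) := fun _ _ ↦ r.inj
  have hs : Function.Injective (sr : ZMod n → _) := fun _ _ ↦ sr.inj
  have hdisj : Disjoint (r '' A) (sr '' A) := by
    rw [Set.disjoint_left]
    rintro _ ⟨x, -, rfl⟩ ⟨y, -, h⟩
    cases h
  rw [Set.ncard_union_eq hdisj (hA.image _) (hA.image _), Set.ncard_image_of_injective _ hr,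
    Set.ncard_image_of_injective _ hs, two_mul]

theorem not_mulCayley_image_sr_adj_r_r (x y : ZMod n) : ¬(mulCayley (sr '' T)).Adj (r x) (r y) := by
  simp [mulCayley_adj]

theorem not_mulCayley_image_sr_adj_sr_sr (x y : ZMod n) :
    ¬(mulCayley (sr '' T)).Adj (sr x) (sr y) := by
  simp [mulCayley_adj]

theorem mulCayley_image_sr_adj_r_sr (x y : ZMod n) :
    (mulCayley (sr '' T)).Adj (r x) (sr y) ↔ x + y ∈ T := by
  simp [mulCayley_adj, add_comm y x]

theorem mulCayley_image_sr_adj_sr_r (x y : ZMod n) :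
    (mulCayley (sr '' T)).Adj (sr x) (r y) ↔ x + y ∈ T := by
  rw [adj_comm, mulCayley_image_sr_adj_r_sr, add_comm]

theorem existsUnique_mulCayley_image_sr_adj (h : ∀ x ∈ A, ∃! y, y ∈ A ∧ x + y ∈ T) :
    ∀ g ∈ r '' A ∪ sr '' A, ∃! g', g' ∈ r '' A ∪ sr '' A ∧ (mulCayley (sr '' T)).Adj g g' := by
  rintro _ (⟨x, hx, rfl⟩ | ⟨x, hx, rfl⟩)
  · obtain ⟨y, ⟨hyA, hyT⟩, hunique⟩ := h x hx
    refine ⟨sr y, ⟨.inr ⟨y, hyA, rfl⟩, (mulCayley_image_sr_adj_r_sr x y).2 hyT⟩, ?_⟩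
    rintro _ ⟨⟨z, -, rfl⟩ | ⟨z, hz, rfl⟩, hadj⟩
    · exact absurd hadj (not_mulCayley_image_sr_adj_r_r x z)
    · rw [hunique z ⟨hz, (mulCayley_image_sr_adj_r_sr x z).1 hadj⟩]
  · obtain ⟨y, ⟨hyA, hyT⟩, hunique⟩ := h x hx
    refine ⟨r y, ⟨.inl ⟨y, hyA, rfl⟩, (mulCayley_image_sr_adj_sr_r x y).2 hyT⟩, ?_⟩
    rintro _ ⟨⟨z, hz, rfl⟩ | ⟨z, -, rfl⟩, hadj⟩
    · rw [hunique z ⟨hz, (mulCayley_image_sr_adj_sr_r x z).1 hadj⟩]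
    · exact absurd hadj (not_mulCayley_image_sr_adj_sr_sr x z)

end Dihedral

section VanishingSums

variable {ι : Type*} [Fintype ι] {q : ℕ} {v : ι → ℕ} {u : ι → ℤ}

theorem sum_pow_mul_modEq_card (hu : ∀ i, u i ≡ 1 [ZMOD q]) :
    ∑ i, (q : ℤ) ^ v i * u i ≡ Fintype.card {i // v i = 0} [ZMOD q] := by
  classical
  have hterm (i : ι) : (q : ℤ) ^ v i * u i ≡ if v i = 0 then 1 else 0 [ZMOD q] := by
    split_ifs with hi
    · simpa [hi] using hu i
    · exact Int.modEq_zero_iff_dvd.2 ((dvd_pow_self _ hi).mul_right _)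
  calc ∑ i, (q : ℤ) ^ v i * u i
      ≡ ∑ i, (if v i = 0 then 1 else 0 : ℤ) [ZMOD q] := Int.ModEq.sum fun i _ ↦ hterm i
    _ = Fintype.card {i // v i = 0} := by simp [Fintype.card_subtype]

theorem eq_of_pow_dvd_sum_pow_mul {d : ℕ} (hcard : Fintype.card ι ≤ q) (hv : ∀ i, v i ≤ d)
    (hu : ∀ i, u i ≡ 1 [ZMOD q]) (hdvd : (q : ℤ) ^ d ∣ ∑ i, (q : ℤ) ^ v i * u i) (i j : ι) :
    v i = v j := by
  induction d generalizing v with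
  | zero => rw [Nat.le_zero.1 (hv i), Nat.le_zero.1 (hv j)]
  | succ d ih =>
    have hq : (q : ℤ) ≠ 0 :=
      Nat.cast_ne_zero.2 ((Fintype.card_pos_iff.2 ⟨i⟩).trans_le hcard).ne'
    have hcard_dvd : q ∣ Fintype.card {i // v i = 0} := by
      rw [← Int.natCast_dvd_natCast, ← (sum_pow_mul_modEq_card hu).dvd_iff]
      exact (dvd_pow_self _ d.succ_ne_zero).trans hdvd
    by_cases hzero : ∃ k, v k = 0
    · obtain ⟨k, hk⟩ := hzero
      have hle : Fintype.card ι ≤ Fintype.card {i // v i = 0} :=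
        hcard.trans (Nat.le_of_dvd (Fintype.card_pos_iff.2 ⟨k, hk⟩) hcard_dvd)
      have hall : ∀ i, v i = 0 := by
        by_contra! hne
        obtain ⟨l, hl⟩ := hne
        exact (Fintype.card_subtype_lt (p := fun i ↦ v i = 0) hl).not_ge hle
      rw [hall i, hall j]
    · have hsucc : ∀ i, ∃ w, v i = w + 1 :=
        fun i ↦ Nat.exists_eq_succ_of_ne_zero fun hi ↦ hzero ⟨i, hi⟩
      choose w hw using hsucc
      have hdvd' : (q : ℤ) ^ d ∣ ∑ i, (q : ℤ) ^ w i * u i := by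
        refine Int.dvd_of_mul_dvd_mul_left hq ?_
        simpa only [hw, pow_succ', mul_assoc, Finset.mul_sum] using hdvd
      rw [hw i, hw j, ih (fun i ↦ by have := hv i; have := hw i; omega) hdvd']

end VanishingSums

theorem rightmostBase3_eq_one_or_two {i : ℕ} (hi : i ≠ 0) :
    rightmostBase3 i = 1 ∨ rightmostBase3 i = 2 := by
  have hne : rightmostBase3 i ≠ 0 := fun h ↦ pow_succ_padicValNat_not_dvd hi <| by
    rw [pow_succ, ← Nat.dvd_div_iff_mul_dvd pow_padicValNat_dvd]
    exact Nat.dvd_of_mod_eq_zero h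
  have hlt : rightmostBase3 i < 3 := Nat.mod_lt _ three_pos
  omega

theorem exists_eq_three_pow_mul {d i : ℕ} (hi : i ≠ 0) (hid : i < 3 ^ d) :
    ∃ v ≤ d, ∃ u, u % 3 = rightmostBase3 i ∧ i = 3 ^ v * u := by
  have hdvd : 3 ^ padicValNat 3 i ∣ i := pow_padicValNat_dvd
  have hle : 3 ^ padicValNat 3 i ≤ 3 ^ d :=
    (Nat.le_of_dvd (Nat.pos_of_ne_zero hi) hdvd).trans hid.le
  exact ⟨padicValNat 3 i, (Nat.pow_le_pow_iff_right (by norm_num)).1 hle,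
    i / 3 ^ padicValNat 3 i, rfl, (Nat.mul_div_cancel' hdvd).symm⟩

theorem zmod_three_pow_eq_zero (d : ℕ) : (3 : ZMod (3 ^ d)) ^ d = 0 := by
  exact_mod_cast ZMod.natCast_self (3 ^ d)

theorem exponent_eq_of_sum_eq_zero {d v w k : ℕ} {s t : ℤ} (hv : v ≤ d) (hw : w ≤ d) (hk : k ≤ d)
    (hs : s ≡ 1 [ZMOD 3]) (ht : t ≡ 1 [ZMOD 3])
    (h : (3 ^ v * s + 3 ^ w * t + 3 ^ k : ZMod (3 ^ d)) = 0) : v = k := by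
  have hdvd : (3 : ℤ) ^ d ∣ 3 ^ v * s + 3 ^ w * t + 3 ^ k := by
    have := (ZMod.intCast_zmod_eq_zero_iff_dvd (3 ^ v * s + 3 ^ w * t + 3 ^ k) (3 ^ d)).1
      (by exact_mod_cast h)
    exact_mod_cast this
  refine eq_of_pow_dvd_sum_pow_mul (q := 3) (v := ![v, w, k]) (u := ![s, t, 1]) (d := d)
    (Fintype.card_fin 3).le ?_ ?_ ?_ 0 2
  · simp [Fin.forall_fin_succ, hv, hw, hk]
  · simp [Fin.forall_fin_succ, hs, ht, Int.ModEq.refl]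
  · simpa [Fin.sum_univ_three] using hdvd

/-- The residues mod `3 ^ d` whose rightmost nonzero ternary digit is `1`, together with `0`, which
is represented as `3 ^ d * 1`. -/
def trailingOne (d : ℕ) : Set (ZMod (3 ^ d)) :=
  {x | ∃ v ≤ d, ∃ u : ℤ, u ≡ 1 [ZMOD 3] ∧ x = 3 ^ v * u}

namespace trailingOne

variable {d : ℕ}

theorem zero_mem : (0 : ZMod (3 ^ d)) ∈ trailingOne d :=
  ⟨d, le_rfl, 1, rfl, by simp [zmod_three_pow_eq_zero]⟩

theorem natCast_mem {i : ℕ} (hi : i ≠ 0) (hid : i < 3 ^ d) (h : rightmostBase3 i = 1) :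
    (i : ZMod (3 ^ d)) ∈ trailingOne d := by
  obtain ⟨v, hv, u, hu, hiu⟩ := exists_eq_three_pow_mul hi hid
  exact ⟨v, hv, u, by rw [Int.ModEq]; omega, by rw [hiu]; push_cast; rfl⟩

theorem neg_natCast_mem {i : ℕ} (hi : i ≠ 0) (hid : i < 3 ^ d) (h : rightmostBase3 i = 2) :
    -(i : ZMod (3 ^ d)) ∈ trailingOne d := by
  obtain ⟨v, hv, u, hu, hiu⟩ := exists_eq_three_pow_mul hi hid
  exact ⟨v, hv, -u, by rw [Int.ModEq]; omega, by rw [hiu]; push_cast; ring⟩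

theorem eq_zero_of_neg_mem {x : ZMod (3 ^ d)} (hx : x ∈ trailingOne d)
    (hneg : -x ∈ trailingOne d) : x = 0 := by
  obtain ⟨v, hv, s, hs, hxs⟩ := hx
  obtain ⟨w, hw, t, ht, hxt⟩ := hneg
  have hvd : v = d := exponent_eq_of_sum_eq_zero hv hw le_rfl hs ht <| by
    rw [← hxs, ← hxt, zmod_three_pow_eq_zero]
    ring
  rw [hxs, hvd, zmod_three_pow_eq_zero, zero_mul]

theorem mem_iff_exists_natCast {x : ZMod (3 ^ d)} :
    x ∈ trailingOne d ↔ x = 0 ∨ ∃ i : ℕ, 1 ≤ i ∧ i < 3 ^ d ∧ rightmostBase3 i = 1 ∧ x = i := by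
  constructor
  · intro hx
    refine or_iff_not_imp_left.2 fun hx0 ↦ ?_
    have hval : x.val ≠ 0 := (ZMod.val_ne_zero x).2 hx0
    refine ⟨x.val, Nat.one_le_iff_ne_zero.2 hval, x.val_lt, ?_, (ZMod.natCast_zmod_val x).symm⟩
    refine (rightmostBase3_eq_one_or_two hval).resolve_right fun h2 ↦ hx0 ?_
    exact eq_zero_of_neg_mem hx (by simpa using neg_natCast_mem hval x.val_lt h2)
  · rintro (rfl | ⟨i, hi, hid, h1, rfl⟩)
    · exact zero_mem
    · exact natCast_mem (Nat.one_le_iff_ne_zero.1 hi) hid h1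

theorem mem_iff_exists_neg_natCast {x : ZMod (3 ^ d)} :
    x ∈ trailingOne d ↔ x = 0 ∨ ∃ i : ℕ, 1 ≤ i ∧ i < 3 ^ d ∧ rightmostBase3 i = 2 ∧ x = -i := by
  constructor
  · intro hx
    refine or_iff_not_imp_left.2 fun hx0 ↦ ?_
    have hval : (-x).val ≠ 0 := (ZMod.val_ne_zero _).2 (neg_ne_zero.2 hx0)
    refine ⟨(-x).val, Nat.one_le_iff_ne_zero.2 hval, (-x).val_lt, ?_, by simp⟩
    refine (rightmostBase3_eq_one_or_two hval).resolve_left fun h1 ↦ hx0 ?_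
    exact eq_zero_of_neg_mem hx (by simpa using natCast_mem hval (-x).val_lt h1)
  · rintro (rfl | ⟨i, hi, hid, h2, rfl⟩)
    · exact zero_mem
    · exact neg_natCast_mem (Nat.one_le_iff_ne_zero.1 hi) hid h2

theorem mem_or_neg_mem (x : ZMod (3 ^ d)) : x ∈ trailingOne d ∨ -x ∈ trailingOne d := by
  by_cases hx0 : x = 0
  · exact .inl (hx0 ▸ zero_mem)
  have hval : x.val ≠ 0 := (ZMod.val_ne_zero x).2 hx0
  rw [← ZMod.natCast_zmod_val x]
  exact (rightmostBase3_eq_one_or_two hval).imp (natCast_mem hval x.val_lt)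
    (neg_natCast_mem hval x.val_lt)

open scoped Pointwise in
theorem two_mul_ncard (d : ℕ) : 2 * (trailingOne d).ncard = 3 ^ d + 1 := by
  have hunion : trailingOne d ∪ -trailingOne d = Set.univ := Set.eq_univ_of_forall mem_or_neg_mem
  have hinter : trailingOne d ∩ -trailingOne d = {0} := by
    refine Set.eq_singleton_iff_unique_mem.2 ⟨⟨zero_mem, ?_⟩, fun x hx ↦ ?_⟩
    · simpa using zero_mem
    · exact eq_zero_of_neg_mem hx.1 hx.2
  rw [two_mul_ncard_eq_card_add_one hunion hinter, Nat.card_zmod]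

theorem existsUnique_add_eq_neg_three_pow {x : ZMod (3 ^ d)} (hx : x ∈ trailingOne d) :
    ∃! y, y ∈ trailingOne d ∧ ∃ k ≤ d, x + y = -3 ^ k := by
  obtain ⟨v, hv, s, hs, hxs⟩ := hx
  refine ⟨-x - 3 ^ v, ⟨⟨v, hv, -s - 1, ?_, ?_⟩, v, hv, by ring⟩, ?_⟩
  · rw [Int.ModEq] at hs ⊢
    omega
  · rw [hxs]
    push_cast
    ring
  · rintro y ⟨⟨w, hw, t, ht, hyt⟩, k, hk, hy⟩
    have hvk : v = k := exponent_eq_of_sum_eq_zero hv hw hk hs ht <| by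
      rw [← hxs, ← hyt, hy, neg_add_cancel]
    rw [hvk]
    linear_combination hy

end trailingOne

/-- Theorem: for `n = 3^d`, in the Cayley graph of the dihedral group `D_n` with
connection set `C = {a^(3^i) * b | 0 ≤ i ≤ d}`, the set
`M = {a^i | [i]_3 = 1} ∪ {a^i b | [i]_3 = 2} ∪ {1, b}` has `n + 1` elements and
every element of `M` has exactly one neighbor in `M`. -/
theorem stmt0 (d n : ℕ) (hn : n = 3 ^ d)
    (a b : DihedralGroup n) (ha : a = DihedralGroup.r 1) (hb : b = DihedralGroup.sr 0)
    (C : Set (DihedralGroup n)) (hC : C = {x | ∃ i : ℕ, i ≤ d ∧ x = a ^ (3 ^ i) * b})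
    (G : SimpleGraph (DihedralGroup n))
    (hG : G = SimpleGraph.fromRel (fun x y => x⁻¹ * y ∈ C))
    (M : Set (DihedralGroup n))
    (hM : M = {x | ∃ i : ℕ, 1 ≤ i ∧ i < n ∧ rightmostBase3 i = 1 ∧ x = a ^ i}
        ∪ {x | ∃ i : ℕ, 1 ≤ i ∧ i < n ∧ rightmostBase3 i = 2 ∧ x = a ^ i * b}
        ∪ {1, b}) :
    M.ncard = n + 1 ∧ ∀ x ∈ M, ∃! y, y ∈ M ∧ G.Adj x y := by
  subst hn ha hb
  have hC' : C = sr '' {x | ∃ k ≤ d, x = -3 ^ k} := by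
    ext (x | x) <;> simp [hC]
  have hG' : G = mulCayley (sr '' {x | ∃ k ≤ d, x = -3 ^ k}) := by
    ext x y
    rw [hG, hC', fromRel_adj, mulCayley_adj]
  have hM' : M = r '' trailingOne d ∪ sr '' trailingOne d := by
    ext (x | x)
    · simp [hM, one_def, -r_zero, trailingOne.mem_iff_exists_natCast]
    · simp [hM, one_def, -r_zero, trailingOne.mem_iff_exists_neg_natCast]
  rw [hM', hG']
  refine ⟨?_, existsUnique_mulCayley_image_sr_adj fun x hx ↦
    trailingOne.existsUnique_add_eq_neg_three_pow hx⟩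
  rw [ncard_image_r_union_image_sr (Set.toFinite _), trailingOne.two_mul_ncard]
end

section
/- Let n ≥ 2 and let SG_n = Cay(S_n, {(1 2),(1 3),…,(1 n)}) be the star graph. Then there exists a set K of permutations of {1,…,n} with 2·|K| > n! such that every element of K has at most one neighbor in K, i.e., the subgraph of SG_n induced by K has maximum degree at most 1. -/
/-!
Call a permutation *off-fixing* if it fixes a point other than the centre `a`, and flip the sign of
the off-fixing permutations. Multiplying by `swap a r` reverses the sign, so two adjacent
permutations get the same twisted sign only when exactly one of them is off-fixing; for a given
permutation this leaves at most one value of `r`. On the other hand the signs of all permutations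
sum to zero, while the signs of those that are not off-fixing sum to the determinant of the
all-ones matrix with its diagonal zeroed except at `a`, which is `±1`. So the twisted signs sum to
`±2`, and the larger of the two classes contains more than half of the permutations.
-/

open Equiv Equiv.Perm Finset

/-- The star graph on the permutations of `α` with centre `a`: the Cayley graph of the symmetric
group with respect to the transpositions moving `a`, which act by left multiplication. -/
def permStarGraph {α : Type*} [DecidableEq α] (a : α) : SimpleGraph (Perm α) :=
  SimpleGraph.fromRel fun π τ => ∃ r : α, r ≠ a ∧ τ = swap a r * π

/-- A permutation is off-fixing at `a` if it has a fixed point other than `a`. The sign of such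
permutations is flipped in `twistedSign`. -/
def IsOffFixing {α : Type*} (a : α) (σ : Perm α) : Prop :=
  ∃ i, i ≠ a ∧ σ i = i

instance {α : Type*} [Fintype α] [DecidableEq α] (a : α) : DecidablePred (IsOffFixing a) :=
  fun σ => inferInstanceAs (Decidable (∃ i, i ≠ a ∧ σ i = i))

/-- The sign of a permutation, negated if the permutation fixes a point other than `a`. Its two
level sets are the candidates for a large set inducing a subgraph of maximum degree at most one. -/
def twistedSign {α : Type*} [Fintype α] [DecidableEq α] (a : α) (σ : Perm α) : ℤˣ :=
  if IsOffFixing a σ then -sign σ else sign σ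

/-- The all-ones matrix with every diagonal entry except the one at `a` replaced by zero. In the
Leibniz expansion of its determinant exactly the permutations that are not `IsOffFixing a`
contribute. -/
def offDiagonalOnes {α : Type*} [DecidableEq α] (R : Type*) [Zero R] [One R] (a : α) :
    Matrix α α R :=
  Matrix.of fun i j => if i = j ∧ j ≠ a then 0 else 1

section Neighbors

variable {α : Type*} [DecidableEq α] {a r : α} {π τ : Perm α}

lemma permStarGraph_adj : (permStarGraph a).Adj π τ ↔ ∃ r, r ≠ a ∧ τ = swap a r * π := by
  rw [permStarGraph, SimpleGraph.fromRel_adj]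
  constructor
  · rintro ⟨-, h | ⟨r, hr, rfl⟩⟩
    · exact h
    · exact ⟨r, hr, (swap_mul_self_mul a r τ).symm⟩
  · rintro ⟨r, hr, rfl⟩
    refine ⟨fun h => hr ?_, .inl ⟨r, hr, rfl⟩⟩
    exact (swap_eq_one_iff.mp (mul_eq_right.mp h.symm)).symm

lemma eq_of_not_isOffFixing_swap_mul {i : α} (hi : i ≠ a) (hπ : π i = i)
    (h : ¬IsOffFixing a (swap a r * π)) : r = i := by
  by_contra hri
  exact h ⟨i, hi, by rw [mul_apply, hπ, swap_apply_of_ne_of_ne hi (Ne.symm hri)]⟩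

lemma apply_eq_of_isOffFixing_swap_mul (hπ : ¬IsOffFixing a π)
    (h : IsOffFixing a (swap a r * π)) : π r = a := by
  obtain ⟨i, hi, hfix⟩ := h
  have hπi : π i = swap a r i := swap_apply_eq_iff.mp hfix
  obtain rfl : i = r := by
    by_contra hir
    exact hπ ⟨i, hi, hπi.trans (swap_apply_of_ne_of_ne hi hir)⟩
  rwa [swap_apply_right] at hπi

lemma exists_forall_isOffFixing_swap_mul_iff_or_eq (a : α) (π : Perm α) :
    ∃ r₀, ∀ r, (IsOffFixing a (swap a r * π) ↔ IsOffFixing a π) ∨ r = r₀ := by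
  by_cases hπ : IsOffFixing a π
  · obtain ⟨i, hi, hfix⟩ := hπ
    refine ⟨i, fun r => or_iff_not_imp_left.mpr fun hr => ?_⟩
    exact eq_of_not_isOffFixing_swap_mul hi hfix fun h => hr (iff_of_true h ⟨i, hi, hfix⟩)
  · refine ⟨π⁻¹ a, fun r => or_iff_not_imp_left.mpr fun hr => ?_⟩
    rw [eq_inv_iff_eq]
    exact apply_eq_of_isOffFixing_swap_mul hπ (by tauto)

variable [Fintype α]

lemma isOffFixing_swap_mul_iff_not_of_twistedSign_eq (hr : r ≠ a)
    (h : twistedSign a (swap a r * π) = twistedSign a π) :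
    IsOffFixing a (swap a r * π) ↔ ¬IsOffFixing a π := by
  have hsign : sign (swap a r * π) = -sign π := by
    rw [Perm.sign_mul, sign_swap hr.symm, neg_one_mul]
  unfold twistedSign at h
  split_ifs at h <;> simp_all [units_ne_neg_self]

lemma ncard_adj_twistedSign_eq_le_one {u : ℤˣ} (hπ : twistedSign a π = u) :
    {τ ∈ {σ | twistedSign a σ = u} | (permStarGraph a).Adj π τ}.ncard ≤ 1 := by
  obtain ⟨r₀, hr₀⟩ := exists_forall_isOffFixing_swap_mul_iff_or_eq a π
  have hsub : {τ ∈ {σ | twistedSign a σ = u} | (permStarGraph a).Adj π τ} ⊆ {swap a r₀ * π} := by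
    rintro τ ⟨hτ, hadj⟩
    obtain ⟨r, hr, rfl⟩ := permStarGraph_adj.mp hadj
    have hiff := isOffFixing_swap_mul_iff_not_of_twistedSign_eq hr (hτ.trans hπ.symm)
    obtain rfl : r = r₀ := (hr₀ r).resolve_left (by tauto)
    rfl
  simpa only [Set.ncard_singleton] using Set.ncard_le_ncard hsub

end Neighbors

section Counting

variable {α : Type*} [Fintype α] [DecidableEq α]

lemma det_offDiagonalOnes (R : Type*) [CommRing R] (a : α) :
    (offDiagonalOnes R a).det = (-1) ^ (Fintype.card α - 1) := by
  let d : α → R := Function.update (fun _ => -1) a 1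
  have hrow : ∑ k, d k • Matrix.diagonal d k = fun _ => 1 := by
    ext j
    by_cases hj : j = a <;> simp [d, Matrix.diagonal_apply, hj]
  calc (offDiagonalOnes R a).det
      = ((Matrix.diagonal d).updateRow a fun _ => 1).det := by
        refine Matrix.det_eq_of_forall_row_eq_smul_add_const
          (fun i => if i = a then 0 else 1) a (if_pos rfl) fun i j => ?_
        by_cases hi : i = a <;> by_cases hij : i = j <;>
          simp_all [offDiagonalOnes, d, Matrix.updateRow_apply]
    _ = d a • (Matrix.diagonal d).det := by rw [← hrow, Matrix.det_updateRow_sum]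
    _ = (-1) ^ (Fintype.card α - 1) := by
        rw [Matrix.det_diagonal, prod_update_of_mem (mem_univ a)]
        simp [d, card_sdiff]

lemma prod_offDiagonalOnes (R : Type*) [CommMonoidWithZero R] (a : α) (σ : Perm α) :
    ∏ i, offDiagonalOnes R a (σ i) i = if IsOffFixing a σ then 0 else 1 := by
  split_ifs with h
  · obtain ⟨i, hi, hfix⟩ := h
    exact prod_eq_zero (mem_univ i) (if_pos ⟨hfix, hi⟩)
  · exact prod_eq_one fun i _ => if_neg fun hi => h ⟨i, hi.2, hi.1⟩

lemma sum_ite_isOffFixing_sign (a : α) :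
    ∑ σ, (if IsOffFixing a σ then 0 else (sign σ : ℤ)) = (-1) ^ (Fintype.card α - 1) := by
  simpa only [Matrix.det_apply', prod_offDiagonalOnes, mul_ite, mul_zero, mul_one, Int.cast_id]
    using det_offDiagonalOnes ℤ a

lemma sum_sign_eq_zero [Nontrivial α] : ∑ σ : Perm α, (sign σ : ℤ) = 0 := by
  obtain ⟨a, b, hab⟩ := exists_pair_ne α
  have hneg : ∑ σ : Perm α, (sign σ : ℤ) = ∑ σ : Perm α, -(sign σ : ℤ) :=
    Fintype.sum_equiv (Equiv.mulLeft (swap a b)) _ _ fun σ => by simp [sign_swap hab]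
  rw [sum_neg_distrib] at hneg
  exact self_eq_neg.mp hneg

lemma sum_twistedSign [Nontrivial α] (a : α) :
    ∑ σ, (twistedSign a σ : ℤ) = 2 * (-1) ^ (Fintype.card α - 1) := by
  have hterm (σ : Perm α) : (twistedSign a σ : ℤ) =
      2 * (if IsOffFixing a σ then 0 else (sign σ : ℤ)) - sign σ := by
    rw [twistedSign]
    split_ifs <;> push_cast <;> ring
  simp_rw [hterm]
  rw [sum_sub_distrib, ← mul_sum, sum_ite_isOffFixing_sign, sum_sign_eq_zero, sub_zero]

lemma two_mul_card_fiber_units_int {ι : Type*} [Fintype ι] (f : ι → ℤˣ) (u : ℤˣ) :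
    (2 * #{x | f x = u} : ℤ) = Fintype.card ι + u * ∑ x, (f x : ℤ) := by
  have hterm (v : ℤˣ) : (2 * if v = u then 1 else 0 : ℤ) = 1 + u * v := by
    revert u v; decide
  calc (2 * #{x | f x = u} : ℤ)
      = ∑ x, 2 * if f x = u then 1 else 0 := by rw [← mul_sum, sum_boole]
    _ = ∑ x, (1 + u * (f x : ℤ)) := by simp_rw [hterm]
    _ = Fintype.card ι + u * ∑ x, (f x : ℤ) := by
        rw [sum_add_distrib, ← mul_sum]; simp

lemma two_mul_card_twistedSign_eq [Nontrivial α] (a : α) :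
    2 * #{σ | twistedSign a σ = (-1) ^ (Fintype.card α - 1)} = (Fintype.card α).factorial + 2 := by
  have h := two_mul_card_fiber_units_int (twistedSign a) ((-1) ^ (Fintype.card α - 1))
  rw [sum_twistedSign, Fintype.card_perm] at h
  push_cast at h
  rw [mul_left_comm, ← mul_pow, neg_one_mul, neg_neg, one_pow, mul_one] at h
  exact_mod_cast h

end Counting

theorem stmt3_general {α : Type*} [Fintype α] [DecidableEq α] [Nontrivial α] (a : α) :
    ∃ K : Set (Perm α), 2 * K.ncard = (Fintype.card α).factorial + 2 ∧
      ∀ π ∈ K, {τ ∈ K | (permStarGraph a).Adj π τ}.ncard ≤ 1 := by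
  refine ⟨{σ | twistedSign a σ = (-1) ^ (Fintype.card α - 1)}, ?_,
    fun π hπ => ncard_adj_twistedSign_eq_le_one hπ⟩
  rw [← two_mul_card_twistedSign_eq a, ← Set.ncard_coe_finset, coe_filter_univ]

/-- The star graph `SG_n = Cay(S_n, {(1 2),…,(1 n)})` (vertices: permutations of
`Fin n`, with `1` corresponding to `0`) has an induced subgraph on more than half
the vertices of maximum degree at most `1`. -/
theorem stmt3 (n : ℕ) [NeZero n] (hn : 2 ≤ n)
    (SG : SimpleGraph (Equiv.Perm (Fin n)))
    (hSG : SG = SimpleGraph.fromRel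
      (fun π τ => ∃ r : Fin n, r ≠ 0 ∧ τ = Equiv.swap 0 r * π)) :
    ∃ K : Set (Equiv.Perm (Fin n)),
      2 * K.ncard > Nat.factorial n ∧
      ∀ π ∈ K, ({τ ∈ K | SG.Adj π τ} : Set (Equiv.Perm (Fin n))).ncard ≤ 1 := by
  subst hSG
  have : Nontrivial (Fin n) := Fin.nontrivial_iff_two_le.mpr hn
  obtain ⟨K, hcard, hdeg⟩ := stmt3_general (0 : Fin n)
  rw [Fintype.card_fin] at hcard
  exact ⟨K, by omega, hdeg⟩
end

section
/- Let G be a d-regular simple graph on n vertices with d ≥ 1, and let K be a set of vertices such that the subgraph induced by K has maximum degree at most 1. Then (2d − 1)·|K| ≤ d·n. -/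
/-!
Double count the edges between `K` and its complement: a vertex of `K` spends at most one of its
`d` edges inside `K`, so it sends at least `d - 1` of them outside, while a vertex outside `K`
receives at most `d`. Hence `(d - 1) * |K| ≤ d * (n - |K|)`.
-/

theorem sub_le_ncard_compl_inter {α : Type*} {s t : Set α} (ht : t.Finite) {m k : ℕ}
    (hm : m ≤ t.ncard) (hk : (s ∩ t).ncard ≤ k) :
    m - k ≤ (sᶜ ∩ t).ncard := by
  have split := Set.ncard_inter_add_ncard_sdiff_eq_ncard t s ht
  rw [Set.inter_comm, Set.sdiff_eq_compl_inter] at split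
  lia

section EdgeCounting

variable {V : Type*} (G : SimpleGraph V)

theorem ncard_mul_le_ncard_mul_of_neighborSet {s t : Set V} (hs : s.Finite) (ht : t.Finite)
    {m n : ℕ} (hm : ∀ a ∈ s, m ≤ (t ∩ G.neighborSet a).ncard)
    (hn : ∀ b ∈ t, (s ∩ G.neighborSet b).ncard ≤ n) :
    s.ncard * m ≤ t.ncard * n := by
  classical
  lift s to Finset V using hs
  lift t to Finset V using ht
  have above (a : V) :
      (t.bipartiteAbove G.Adj a : Set V) = (t : Set V) ∩ G.neighborSet a := by
    ext b
    simp
  have below (b : V) :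
      (s.bipartiteBelow G.Adj b : Set V) = (s : Set V) ∩ G.neighborSet b := by
    ext a
    simp [G.adj_comm]
  simp only [← above, ← below, Set.ncard_coe_finset, Finset.mem_coe] at hm hn ⊢
  exact Finset.card_mul_le_card_mul G.Adj hm hn

variable [Finite V] {K : Set V} {δ Δ k : ℕ}

theorem ncard_mul_sub_le_ncard_compl_mul (hδ : ∀ v ∈ K, δ ≤ (G.neighborSet v).ncard)
    (hΔ : ∀ v ∉ K, (G.neighborSet v).ncard ≤ Δ)
    (hk : ∀ v ∈ K, (K ∩ G.neighborSet v).ncard ≤ k) :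
    K.ncard * (δ - k) ≤ Kᶜ.ncard * Δ :=
  ncard_mul_le_ncard_mul_of_neighborSet G K.toFinite Kᶜ.toFinite
    (fun v hv ↦ sub_le_ncard_compl_inter (Set.toFinite _) (hδ v hv) (hk v hv))
    (fun v hv ↦ (Set.ncard_le_ncard Set.inter_subset_right).trans (hΔ v hv))

theorem stmt5_general (hδ : ∀ v ∈ K, δ ≤ (G.neighborSet v).ncard)
    (hΔ : ∀ v ∉ K, (G.neighborSet v).ncard ≤ Δ)
    (hk : ∀ v ∈ K, (K ∩ G.neighborSet v).ncard ≤ k) :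
    (δ + Δ - k) * K.ncard ≤ Δ * Nat.card V :=
  calc
    (δ + Δ - k) * K.ncard ≤ (δ - k + Δ) * K.ncard := by gcongr; lia
    _ = K.ncard * (δ - k) + K.ncard * Δ := by ring
    _ ≤ Kᶜ.ncard * Δ + K.ncard * Δ := by
      gcongr ?_ + _
      exact ncard_mul_sub_le_ncard_compl_mul G hδ hΔ hk
    _ = Δ * (K.ncard + Kᶜ.ncard) := by ring
    _ = Δ * Nat.card V := by rw [Set.ncard_add_ncard_compl]

end EdgeCounting

/-- In a `d`-regular graph on `n` vertices, any vertex set `K` inducing a subgraph of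
maximum degree at most `1` satisfies `(2d − 1)·|K| ≤ d·n`. -/
theorem stmt5 {V : Type*} [Fintype V] (G : SimpleGraph V) (d : ℕ) (hd : 1 ≤ d)
    (hreg : ∀ v : V, (G.neighborSet v).ncard = d)
    (K : Set V) (hK : ∀ v ∈ K, (K ∩ G.neighborSet v).ncard ≤ 1) :
    (2 * d - 1) * K.ncard ≤ d * Fintype.card V := by
  rw [two_mul, ← Nat.card_eq_fintype_card]
  exact stmt5_general G (fun v _ ↦ (hreg v).ge) (fun v _ ↦ (hreg v).le) hK
end

section
/- Let m ≥ 1 and N = 2m+1. For m+1 ≤ k ≤ N define the map c_k on {1,…,N} by c_k(i) = i+m if i < k−m; c_k(i) = i+m+1 if k−m ≤ i ≤ m; c_k(i) = i−m if m < i < k; c_k(k) = k; and c_k(i) = i−m−1 if k < i ≤ N. Let Γ = S_N if m is odd and Γ = A_N (the alternating group) if m is even. Then: each c_k is a permutation of {1,…,N} of order 2 belonging to Γ; the set M = {π ∈ Γ | π(1) ≥ m+1} has exactly (m+1)·|Γ|/(2m+1) elements; and in the Cayley graph Cay(Γ, C) with C = {c_k | m+1 ≤ k ≤ N}, every element of M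 has exactly one neighbor in M (so M induces a perfect matching on a d/(2d−1)-fraction of the vertices, where d = m+1). -/
/-- The map `c_k` on `{1,…,2m+1}` from Theorem `thm:alternatingtight`. -/
def ckFun (m k i : ℕ) : ℕ :=
  if i < k - m then i + m
  else if i ≤ m then i + m + 1
  else if i < k then i - m
  else if i = k then i
  else i - m - 1

/-!
The point `k` is the only fixed point of the involution `c_k`, which is therefore a product of `m`
transpositions and has sign `(-1) ^ m`; this is why `Γ` depends on the parity of `m`.
Moreover `c_k` exchanges `{1, …, m}` with `{m+1, …, N} \ {k}`. So if `π(1) ≥ m+1`, then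
`c_k(π(1)) ≥ m+1` exactly for `k = π(1)`, and this `k` gives the only neighbor of `π` in `M`.
The size of `M` follows from the transitivity of `Γ`: every point is the image of `1` under the
same number of elements of `Γ`.
-/

section GroupAction

open MulAction

theorem ncard_setOf_smul_mem_mul_card {G α : Type*} [Group G] [MulAction G α]
    [IsPretransitive G α] (a : α) (s : Set α) :
    {g : G | g • a ∈ s}.ncard * Nat.card α = s.ncard * Nat.card G := by
  let e : G ⧸ stabilizer G a ≃ α :=
    Equiv.ofBijective (ofQuotientStabilizer G a)
      ⟨injective_ofQuotientStabilizer G a, fun b ↦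
        let ⟨g, hg⟩ := exists_smul_eq G a b
        ⟨g, hg⟩⟩
  have card_fibers : {g : G | g • a ∈ s}.ncard = Nat.card (stabilizer G a) * s.ncard := by
    rw [← Set.ncard_preimage_of_injective_subset_range e.injective
      (by simp only [e.surjective.range_eq, Set.subset_univ])]
    exact QuotientGroup.card_preimage_mk (stabilizer G a) (e ⁻¹' s)
  rw [card_fibers, ← index_stabilizer_of_transitive G a, ← (stabilizer G a).card_mul_index]
  ring

theorem ncard_setOf_mem_and_smul_mem_mul_card {G α : Type*} [Group G] [MulAction G α]
    (H : Subgroup G) [IsPretransitive H α] (a : α) (s : Set α) :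
    {g : G | g ∈ H ∧ g • a ∈ s}.ncard * Nat.card α = s.ncard * Nat.card H := by
  have image_eq : {g : G | g ∈ H ∧ g • a ∈ s} = Subtype.val '' {h : H | h • a ∈ s} := by
    ext g
    simp [Subgroup.smul_def, and_comm]
  rw [image_eq, Set.ncard_image_of_injective _ Subtype.val_injective,
    ncard_setOf_smul_mem_mul_card]

theorem existsUnique_mul_smul_mem {G α S : Type*} [Semigroup G] [SemigroupAction G α]
    [SetLike S G] [MulMemClass S G] {H : S} {T : Set α} {c : T → G} (hcH : ∀ k, c k ∈ H)
    (hcT : ∀ k i : T, c k • (i : α) ∈ T ↔ i = k) {a : α} {g : G} (hgH : g ∈ H)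
    (hgT : g • a ∈ T) :
    ∃! h, (h ∈ H ∧ h • a ∈ T) ∧ ∃ x ∈ Set.range c, h = x * g := by
  have smul_mem_iff (k : T) : (c k * g) • a ∈ T ↔ ⟨g • a, hgT⟩ = k := by
    rw [mul_smul]
    exact hcT k ⟨g • a, hgT⟩
  refine ⟨c ⟨g • a, hgT⟩ * g,
    ⟨⟨mul_mem (hcH _) hgH, (smul_mem_iff _).2 rfl⟩, _, Set.mem_range_self _, rfl⟩, ?_⟩
  rintro _ ⟨⟨-, hT⟩, _, ⟨k, rfl⟩, rfl⟩
  rw [(smul_mem_iff k).1 hT]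

end GroupAction

section Perm

open Equiv.Perm

variable {α : Type*} [Fintype α] [DecidableEq α]

theorem sign_eq_neg_one_pow_of_existsUnique_fixed {σ : Equiv.Perm α} (hσ : σ * σ = 1)
    (hfix : ∃! i, σ i = i) : sign σ = (-1) ^ ((Fintype.card α - 1) / 2) := by
  have card_fixed : Fintype.card (Function.fixedPoints σ) = 1 :=
    Fintype.card_eq_one_iff_nonempty_unique.2 ((unique_subtype_iff_existsUnique _).2 hfix)
  rw [sign_of_pow_two_eq_one (by rw [sq, hσ]), card_fixed]

theorem mem_ite_odd_top_alternatingGroup {σ : Equiv.Perm α} {m : ℕ} (hσ : sign σ = (-1) ^ m) :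
    σ ∈ if Odd m then ⊤ else alternatingGroup α := by
  split_ifs with hm
  · exact Subgroup.mem_top σ
  · rw [mem_alternatingGroup, hσ, (Nat.not_odd_iff_even.1 hm).neg_one_pow]

theorem isPretransitive_of_alternatingGroup_le {Γ : Subgroup (Equiv.Perm α)}
    (hΓ : alternatingGroup α ≤ Γ) (hα : 3 ≤ Nat.card α) : MulAction.IsPretransitive Γ α := by
  have := alternatingGroup.isPretransitive_of_three_le_card α hα
  refine ⟨fun i j ↦ ?_⟩
  obtain ⟨g, hg⟩ := MulAction.exists_smul_eq (alternatingGroup α) i j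
  exact ⟨⟨g, hΓ g.2⟩, hg⟩

end Perm

section CkFun

variable {m k i : ℕ}

theorem ckFun_mem_Icc (hk : k ∈ Set.Icc (m + 1) (2 * m + 1)) (hi : i ∈ Set.Icc 1 (2 * m + 1)) :
    ckFun m k i ∈ Set.Icc 1 (2 * m + 1) := by
  grind [ckFun]

theorem ckFun_ckFun (hk : k ∈ Set.Icc (m + 1) (2 * m + 1)) (hi : i ∈ Set.Icc 1 (2 * m + 1)) :
    ckFun m k (ckFun m k i) = i := by
  grind [ckFun]

theorem ckFun_eq_self_iff (hm : 1 ≤ m) (hk : m + 1 ≤ k) : ckFun m k i = i ↔ i = k := by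
  grind [ckFun]

theorem add_one_le_ckFun_iff (hk : k ≤ 2 * m + 1) (hi : i ∈ Set.Icc (m + 1) (2 * m + 1)) :
    m + 1 ≤ ckFun m k i ↔ i = k := by
  grind [ckFun]

end CkFun

/-- The points `m+1, …, 2m+1` of `{1, …, 2m+1}`, shifted to `m, …, 2m` in `Fin (2 * m + 1)`.
They are both the indices `k` of the permutations `c_k` and the values of `π(1)` allowed in `M`. -/
def upperPoints (m : ℕ) : Set (Fin (2 * m + 1)) := {i | m ≤ i}

section UpperPoints

variable {m : ℕ}

theorem upperPoints_add_one_mem_Icc (k : upperPoints m) :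
    (k : ℕ) + 1 ∈ Set.Icc (m + 1) (2 * m + 1) :=
  ⟨Nat.succ_le_succ k.2, k.1.2⟩

theorem exists_upperPoints_add_one_eq {k : ℕ} (hk : k ∈ Set.Icc (m + 1) (2 * m + 1)) :
    ∃ j : upperPoints m, (j : ℕ) + 1 = k := by
  obtain ⟨hmk, hkN⟩ := hk
  exact ⟨⟨⟨k - 1, by omega⟩, Nat.le_sub_of_add_le hmk⟩, Nat.sub_add_cancel (by omega)⟩

theorem ncard_upperPoints (m : ℕ) : (upperPoints m).ncard = m + 1 := by
  have eq_Ici : upperPoints m = Finset.Ici (⟨m, by omega⟩ : Fin (2 * m + 1)) := by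
    ext i
    simp [upperPoints, Fin.le_def]
  rw [eq_Ici, Set.ncard_coe_finset, Fin.card_Ici, Fin.val_mk]
  omega

end UpperPoints

/-- The permutation `c_k` of the paper, on the 0-based points `Fin (2 * m + 1)` and with the
0-based index `k`, so that the index is the fixed point. -/
def ckPerm {m : ℕ} (k : upperPoints m) : Equiv.Perm (Fin (2 * m + 1)) :=
  Function.Involutive.toPerm
    (fun i ↦ ⟨ckFun m (k + 1) (i + 1) - 1, by
      have := ckFun_mem_Icc (upperPoints_add_one_mem_Icc k) (i := i + 1) (by grind)
      grind⟩)
    (fun i ↦ by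
      have hi : (i : ℕ) + 1 ∈ Set.Icc 1 (2 * m + 1) := by grind
      have hk := upperPoints_add_one_mem_Icc k
      ext
      simp only [Nat.sub_add_cancel (ckFun_mem_Icc hk hi).1, ckFun_ckFun hk hi,
        Nat.add_sub_cancel])

section CkPerm

variable {m : ℕ} (k : upperPoints m)

theorem ckPerm_apply_add_one (i : Fin (2 * m + 1)) :
    (ckPerm k i : ℕ) + 1 = ckFun m (k + 1) (i + 1) :=
  Nat.sub_add_cancel (ckFun_mem_Icc (upperPoints_add_one_mem_Icc k) (by grind)).1

theorem forall_eq_ckFun_iff_eq_ckPerm {σ : Equiv.Perm (Fin (2 * m + 1))} :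
    (∀ i, (σ i : ℕ) + 1 = ckFun m (k + 1) (i + 1)) ↔ σ = ckPerm k := by
  simp only [← ckPerm_apply_add_one, Nat.add_right_cancel_iff, Fin.val_inj, Equiv.ext_iff]

theorem setOf_exists_eq_ckFun_eq_range_ckPerm (m : ℕ) :
    {σ : Equiv.Perm (Fin (2 * m + 1)) | ∃ k, m + 1 ≤ k ∧ k ≤ 2 * m + 1 ∧
      ∀ i, (σ i : ℕ) + 1 = ckFun m k (i + 1)} = Set.range ckPerm := by
  ext σ
  constructor
  · rintro ⟨k, hmk, hkN, hσ⟩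
    obtain ⟨j, rfl⟩ := exists_upperPoints_add_one_eq ⟨hmk, hkN⟩
    exact ⟨j, ((forall_eq_ckFun_iff_eq_ckPerm j).1 hσ).symm⟩
  · rintro ⟨k, rfl⟩
    have hk := upperPoints_add_one_mem_Icc k
    exact ⟨k + 1, hk.1, hk.2, ckPerm_apply_add_one k⟩

theorem ckPerm_mul_self : ckPerm k * ckPerm k = 1 :=
  Equiv.ext (Function.Involutive.toPerm_involutive _)

theorem ckPerm_apply_eq_self_iff (hm : 1 ≤ m) {i : Fin (2 * m + 1)} :
    ckPerm k i = i ↔ i = k := by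
  have h := ckFun_eq_self_iff (i := i + 1) hm (upperPoints_add_one_mem_Icc k).1
  rwa [← ckPerm_apply_add_one, Nat.add_right_cancel_iff, Nat.add_right_cancel_iff, Fin.val_inj,
    Fin.val_inj] at h

theorem ckPerm_ne_one (hm : 1 ≤ m) : ckPerm k ≠ 1 := by
  intro h
  have eq_k (i : Fin (2 * m + 1)) : i = k :=
    (ckPerm_apply_eq_self_iff k hm).1 (by rw [h, Equiv.Perm.one_apply])
  have zero_eq_last : (0 : Fin (2 * m + 1)) = Fin.last (2 * m) := (eq_k _).trans (eq_k _).symm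
  grind

theorem sign_ckPerm (hm : 1 ≤ m) : Equiv.Perm.sign (ckPerm k) = (-1) ^ m := by
  have hfix : ∃! i, ckPerm k i = i := by simp [ckPerm_apply_eq_self_iff k hm]
  rw [sign_eq_neg_one_pow_of_existsUnique_fixed (ckPerm_mul_self k) hfix]
  simp

theorem ckPerm_apply_mem_upperPoints_iff (i : upperPoints m) :
    ckPerm k i ∈ upperPoints m ↔ i = k := by
  have h := add_one_le_ckFun_iff (upperPoints_add_one_mem_Icc k).2
    (upperPoints_add_one_mem_Icc i)
  rwa [← ckPerm_apply_add_one, Nat.add_le_add_iff_right, Nat.add_right_cancel_iff, Fin.val_inj,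
    Subtype.val_inj] at h

end CkPerm

/-- For `N = 2m+1` and `Γ = S_N` (`m` odd) resp. `Γ = A_N` (`m` even):
each `c_k` (for `m+1 ≤ k ≤ N`) is an order-2 permutation belonging to `Γ`; the set
`M = {π ∈ Γ | π(1) ≥ m+1}` has exactly `(m+1)·|Γ|/(2m+1)` elements; and in the Cayley
graph `Cay(Γ, {c_k})` (with the paper's convention `π·σ = σ ∘ π`, i.e. `σ * π` in
Mathlib) every element of `M` has exactly one neighbor in `M`.
Here `{1,…,N}` is modelled by `Fin N`, via the 1-based value `(i : ℕ) + 1`. -/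
theorem stmt6 (m : ℕ) (hm : 1 ≤ m) (N : ℕ) (hN : N = 2 * m + 1)
    (Γ : Subgroup (Equiv.Perm (Fin N)))
    (hΓ : Γ = if Odd m then (⊤ : Subgroup (Equiv.Perm (Fin N)))
              else alternatingGroup (Fin N))
    (M : Set (Equiv.Perm (Fin N)))
    (hM : M = {π | π ∈ Γ ∧ m + 1 ≤ ((π ⟨0, by omega⟩ : Fin N) : ℕ) + 1})
    (C : Set (Equiv.Perm (Fin N)))
    (hC : C = {σ | ∃ k, m + 1 ≤ k ∧ k ≤ N ∧
      ∀ i : Fin N, ((σ i : ℕ) + 1) = ckFun m k ((i : ℕ) + 1)}) :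
    (∀ k, m + 1 ≤ k → k ≤ N →
      ∃ σ : Equiv.Perm (Fin N),
        (∀ i : Fin N, ((σ i : ℕ) + 1) = ckFun m k ((i : ℕ) + 1)) ∧
        σ * σ = 1 ∧ σ ≠ 1 ∧ σ ∈ Γ) ∧
    M.ncard * (2 * m + 1) = (m + 1) * Nat.card Γ ∧
    (∀ π ∈ M, ∃! τ, τ ∈ M ∧ ∃ σ ∈ C, τ = σ * π) := by
  subst hN
  have M_eq : M = {π | π ∈ Γ ∧ π • (0 : Fin (2 * m + 1)) ∈ upperPoints m} := by
    simp only [hM, Nat.add_le_add_iff_right]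
    rfl
  rw [setOf_exists_eq_ckFun_eq_range_ckPerm] at hC
  have ckPerm_mem (k : upperPoints m) : ckPerm k ∈ Γ :=
    hΓ ▸ mem_ite_odd_top_alternatingGroup (sign_ckPerm k hm)
  have alternating_le : alternatingGroup (Fin (2 * m + 1)) ≤ Γ := by
    rw [hΓ]
    split_ifs
    exacts [le_top, le_rfl]
  have := isPretransitive_of_alternatingGroup_le alternating_le (by rw [Nat.card_fin]; omega)
  refine ⟨fun k hmk hkN ↦ ?_, ?_, fun π hπ ↦ ?_⟩
  · obtain ⟨j, rfl⟩ := exists_upperPoints_add_one_eq ⟨hmk, hkN⟩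
    exact ⟨ckPerm j, ckPerm_apply_add_one j, ckPerm_mul_self j, ckPerm_ne_one j hm, ckPerm_mem j⟩
  · have card_M := ncard_setOf_mem_and_smul_mem_mul_card Γ 0 (upperPoints m)
    rwa [← M_eq, Nat.card_fin, ncard_upperPoints] at card_M
  · rw [M_eq] at hπ
    rw [M_eq, hC]
    exact existsUnique_mul_smul_mem ckPerm_mem ckPerm_apply_mem_upperPoints_iff hπ.1 hπ.2
end

section
/- Let G and H be finite simple graphs and k, ℓ nonnegative integers. Suppose V(G) = A ⊔ B is a partition with Δ(G[A]) ≤ k and Δ(G[B]) ≤ k, and V(H) = A' ⊔ B' is a partition with Δ(H[A']) ≤ ℓ and Δ(H[B']) ≤ ℓ. Let A'' = (A×A') ∪ (B×B') and B'' = (A×B') ∪ (B×A'). Then A'' ⊔ B'' is a partition of V(G □ H), the subgraphs of G □ H induced by A'' and by B'' each have maximum degree at most k+ℓ, and |A''| − |B''| = (|A|−|B|)·(|A'|−|B'|). Consequently ι_k(G)·ι_ℓ(H) ≤ ι_{k+ℓ}(G □ H). -/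
/-- The `k`-imbalance `ι_k(G)`: the largest `d` such that the vertex set of `G` can be
partitioned into sets `A ⊔ B`, each inducing maximum degree at most `k`,
with `|A| − |B| = d`. -/
noncomputable def iotaImb {V : Type*} (G : SimpleGraph V) (k : ℕ) : ℕ :=
  sSup {d : ℕ | ∃ A B : Set V, A ∪ B = Set.univ ∧ Disjoint A B ∧
    (∀ v ∈ A, (A ∩ G.neighborSet v).ncard ≤ k) ∧
    (∀ v ∈ B, (B ∩ G.neighborSet v).ncard ≤ k) ∧
    A.ncard = B.ncard + d}

/-!
Give each vertex of `G` the sign `+` on `A` and `-` on `B`, and likewise for `H`; the partition of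
`V(G □ H)` is by the product of the signs. Moving along an edge of `G □ H` changes one coordinate
only, so the two ends lie in the same part iff that coordinate keeps its sign. Hence the degree of
`(x, y)` inside its part is the sum of the degrees of `x` and `y` inside theirs. The difference
`|A| - |B|` is the sum of the signs, which is multiplicative.
-/

open SimpleGraph

section SetProduct

variable {α β : Type*} {A B : Set α} {A' B' : Set β}

theorem isCompl_prod_union_prod (h : IsCompl A B) (h' : IsCompl A' B') :
    IsCompl (A ×ˢ A' ∪ B ×ˢ B') (A ×ˢ B' ∪ B ×ˢ A') := by
  obtain rfl := h.compl_eq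
  obtain rfl := h'.compl_eq
  have compl_eq : (A ×ˢ A' ∪ Aᶜ ×ˢ A'ᶜ)ᶜ = A ×ˢ A'ᶜ ∪ Aᶜ ×ˢ A' := by
    ext ⟨x, y⟩
    simp only [Set.mem_compl_iff, Set.mem_union, Set.mem_prod]
    tauto
  exact compl_eq ▸ isCompl_compl

theorem ncard_prod_union_prod (hAB : Disjoint A B)
    (hA : A.Finite := by toFinite_tac) (hB : B.Finite := by toFinite_tac)
    (hA' : A'.Finite := by toFinite_tac) (hB' : B'.Finite := by toFinite_tac) :
    (A ×ˢ A' ∪ B ×ˢ B').ncard = A.ncard * A'.ncard + B.ncard * B'.ncard := by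
  rw [Set.ncard_union_eq (Set.disjoint_prod.mpr (.inl hAB)) (hA.prod hA') (hB.prod hB'),
    Set.ncard_prod, Set.ncard_prod]

theorem ncard_prod_union_prod_sub (hAB : Disjoint A B)
    (hA : A.Finite := by toFinite_tac) (hB : B.Finite := by toFinite_tac)
    (hA' : A'.Finite := by toFinite_tac) (hB' : B'.Finite := by toFinite_tac) :
    ((A ×ˢ A' ∪ B ×ˢ B').ncard : ℤ) - (A ×ˢ B' ∪ B ×ˢ A').ncard =
      ((A.ncard : ℤ) - B.ncard) * ((A'.ncard : ℤ) - B'.ncard) := by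
  rw [ncard_prod_union_prod hAB hA hB hA' hB', ncard_prod_union_prod hAB hA hB hB' hA']
  push_cast
  ring

end SetProduct

/-- The condition `Δ(G[S]) ≤ k`. Degrees are measured by `Set.ncard`, as in `iotaImb`, so a vertex
with infinitely many neighbors in `S` counts as having none. -/
def InducedDegreeLE {V : Type*} (G : SimpleGraph V) (k : ℕ) (S : Set V) : Prop :=
  ∀ v ∈ S, (S ∩ G.neighborSet v).ncard ≤ k

/-- The vertex partitions `V(G) = A ⊔ B` with `Δ(G[A]) ≤ k` and `Δ(G[B]) ≤ k`, over which the
`k`-imbalance `iotaImb G k` is maximized. Either part may be empty. -/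
structure IsDefectivePartition {V : Type*} (G : SimpleGraph V) (k : ℕ) (A B : Set V) : Prop where
  isCompl : IsCompl A B
  left : InducedDegreeLE G k A
  right : InducedDegreeLE G k B

section BoxProd

variable {V V' : Type*} {G : SimpleGraph V} {H : SimpleGraph V'} {k l : ℕ}
  {A B : Set V} {A' B' : Set V'}

theorem prod_union_prod_inter_neighborSet_boxProd {x : V} {y : V'}
    (hxA : x ∈ A) (hxB : x ∉ B) (hyA' : y ∈ A') (hyB' : y ∉ B') :
    (A ×ˢ A' ∪ B ×ˢ B') ∩ (G □ H).neighborSet (x, y) =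
      (A ∩ G.neighborSet x) ×ˢ {y} ∪ {x} ×ˢ (A' ∩ H.neighborSet y) := by
  rw [neighborSet_boxProd]
  ext ⟨a, b⟩
  simp only [Set.mem_inter_iff, Set.mem_union, Set.mem_prod, Set.mem_singleton_iff]
  grind

theorem ncard_prod_union_prod_inter_neighborSet_boxProd_le {x : V} {y : V'}
    (hxA : x ∈ A) (hxB : x ∉ B) (hyA' : y ∈ A') (hyB' : y ∉ B') :
    ((A ×ˢ A' ∪ B ×ˢ B') ∩ (G □ H).neighborSet (x, y)).ncard ≤
      (A ∩ G.neighborSet x).ncard + (A' ∩ H.neighborSet y).ncard := by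
  rw [prod_union_prod_inter_neighborSet_boxProd hxA hxB hyA' hyB']
  refine (Set.ncard_union_le _ _).trans_eq ?_
  rw [Set.ncard_prod, Set.ncard_prod, Set.ncard_singleton, Set.ncard_singleton, mul_one, one_mul]

theorem InducedDegreeLE.prod_union_prod (hAB : Disjoint A B) (hAB' : Disjoint A' B')
    (hA : InducedDegreeLE G k A) (hB : InducedDegreeLE G k B)
    (hA' : InducedDegreeLE H l A') (hB' : InducedDegreeLE H l B') :
    InducedDegreeLE (G □ H) (k + l) (A ×ˢ A' ∪ B ×ˢ B') := by
  rintro ⟨x, y⟩ (⟨hx, hy⟩ | ⟨hx, hy⟩)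
  · exact (ncard_prod_union_prod_inter_neighborSet_boxProd_le hx (hAB.notMem_of_mem_left hx)
      hy (hAB'.notMem_of_mem_left hy)).trans (add_le_add (hA x hx) (hA' y hy))
  · rw [Set.union_comm]
    exact (ncard_prod_union_prod_inter_neighborSet_boxProd_le hx (hAB.notMem_of_mem_right hx)
      hy (hAB'.notMem_of_mem_right hy)).trans (add_le_add (hB x hx) (hB' y hy))

theorem IsDefectivePartition.boxProd (h : IsDefectivePartition G k A B)
    (h' : IsDefectivePartition H l A' B') :
    IsDefectivePartition (G □ H) (k + l) (A ×ˢ A' ∪ B ×ˢ B') (A ×ˢ B' ∪ B ×ˢ A') where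
  isCompl := isCompl_prod_union_prod h.isCompl h'.isCompl
  left := .prod_union_prod h.isCompl.disjoint h'.isCompl.disjoint h.left h.right h'.left h'.right
  right := .prod_union_prod h.isCompl.disjoint h'.isCompl.disjoint.symm
    h.left h.right h'.right h'.left

end BoxProd

section Imbalance

variable {V V' : Type*} {G : SimpleGraph V} {k : ℕ} {A B : Set V}

theorem isDefectivePartition_iff :
    IsDefectivePartition G k A B ↔ A ∪ B = Set.univ ∧ Disjoint A B ∧
      (∀ v ∈ A, (A ∩ G.neighborSet v).ncard ≤ k) ∧
      (∀ v ∈ B, (B ∩ G.neighborSet v).ncard ≤ k) :=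
  ⟨fun h ↦ ⟨h.isCompl.sup_eq_top, h.isCompl.disjoint, h.left, h.right⟩,
    fun ⟨hunion, hdisj, hA, hB⟩ ↦ ⟨⟨hdisj, codisjoint_iff.mpr hunion⟩, hA, hB⟩⟩

theorem iotaImb_eq_sSup (G : SimpleGraph V) (k : ℕ) :
    iotaImb G k =
      sSup {d : ℕ | ∃ A B, IsDefectivePartition G k A B ∧ A.ncard = B.ncard + d} := by
  simp only [iotaImb, isDefectivePartition_iff, and_assoc]

theorem IsDefectivePartition.ncard_sub_ncard_le_iotaImb [Finite V]
    (h : IsDefectivePartition G k A B) : (A.ncard : ℤ) - B.ncard ≤ iotaImb G k := by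
  have bddAbove :
      BddAbove {d : ℕ | ∃ A B, IsDefectivePartition G k A B ∧ A.ncard = B.ncard + d} := by
    refine ⟨Nat.card V, ?_⟩
    rintro d ⟨A, B, -, hd⟩
    exact (Nat.le_add_left d B.ncard).trans (hd ▸ Set.ncard_le_card A)
  rcases le_total A.ncard B.ncard with hle | hle
  · lia
  · have hsub : A.ncard - B.ncard ≤ iotaImb G k := by
      rw [iotaImb_eq_sSup]
      exact le_csSup bddAbove ⟨A, B, h, (Nat.add_sub_of_le hle).symm⟩
    lia

-- `iotaImb G k` is `0`, as `sSup ∅`, when there is no partition at all.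
theorem exists_isDefectivePartition_of_iotaImb_ne_zero (h : iotaImb G k ≠ 0) :
    ∃ A B, IsDefectivePartition G k A B ∧ (A.ncard : ℤ) - B.ncard = iotaImb G k := by
  rw [iotaImb_eq_sSup] at h ⊢
  obtain ⟨A, B, hAB, hcard⟩ := Nat.sSup_mem
    (Set.nonempty_iff_ne_empty.mpr fun hempty ↦ h (by rw [hempty, csSup_empty, Nat.bot_eq_zero]))
    (h.imp_symm Nat.sSup_of_not_bddAbove)
  exact ⟨A, B, hAB, by lia⟩

theorem iotaImb_mul_iotaImb_le_iotaImb_boxProd [Finite V] [Finite V']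
    (G : SimpleGraph V) (H : SimpleGraph V') (k l : ℕ) :
    iotaImb G k * iotaImb H l ≤ iotaImb (G □ H) (k + l) := by
  rcases eq_or_ne (iotaImb G k) 0 with hG | hG
  · simp [hG]
  rcases eq_or_ne (iotaImb H l) 0 with hH | hH
  · simp [hH]
  obtain ⟨A, B, hAB, hι⟩ := exists_isDefectivePartition_of_iotaImb_ne_zero hG
  obtain ⟨A', B', hAB', hι'⟩ := exists_isDefectivePartition_of_iotaImb_ne_zero hH
  zify
  calc (iotaImb G k : ℤ) * iotaImb H l
      = ((A.ncard : ℤ) - B.ncard) * ((A'.ncard : ℤ) - B'.ncard) := by rw [hι, hι']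
    _ = ((A ×ˢ A' ∪ B ×ˢ B').ncard : ℤ) - (A ×ˢ B' ∪ B ×ˢ A').ncard :=
        (ncard_prod_union_prod_sub hAB.isCompl.disjoint).symm
    _ ≤ iotaImb (G □ H) (k + l) := (hAB.boxProd hAB').ncard_sub_ncard_le_iotaImb

end Imbalance

/-- Combining a partition `A ⊔ B` of `V(G)` witnessing degree bound `k` and a partition
`A' ⊔ B'` of `V(H)` witnessing degree bound `ℓ`, the sets `A'' = A×A' ∪ B×B'` and
`B'' = A×B' ∪ B×A'` partition `V(G □ H)`, each induces maximum degree at most `k+ℓ`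
in the box product, and `|A''| − |B''| = (|A|−|B|)·(|A'|−|B'|)`.
Consequently `ι_k(G)·ι_ℓ(H) ≤ ι_{k+ℓ}(G □ H)`. -/
theorem stmt9 {V V' : Type*} [Fintype V] [Fintype V']
    (G : SimpleGraph V) (H : SimpleGraph V') (k l : ℕ)
    (A B : Set V) (hAB : A ∪ B = Set.univ) (hdisj : Disjoint A B)
    (hA : ∀ v ∈ A, (A ∩ G.neighborSet v).ncard ≤ k)
    (hB : ∀ v ∈ B, (B ∩ G.neighborSet v).ncard ≤ k)
    (A' B' : Set V') (hAB' : A' ∪ B' = Set.univ) (hdisj' : Disjoint A' B')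
    (hA' : ∀ v ∈ A', (A' ∩ H.neighborSet v).ncard ≤ l)
    (hB' : ∀ v ∈ B', (B' ∩ H.neighborSet v).ncard ≤ l)
    (A'' B'' : Set (V × V'))
    (hA'' : A'' = A ×ˢ A' ∪ B ×ˢ B') (hB'' : B'' = A ×ˢ B' ∪ B ×ˢ A') :
    A'' ∪ B'' = Set.univ ∧ Disjoint A'' B'' ∧
    (∀ v ∈ A'', (A'' ∩ (G.boxProd H).neighborSet v).ncard ≤ k + l) ∧
    (∀ v ∈ B'', (B'' ∩ (G.boxProd H).neighborSet v).ncard ≤ k + l) ∧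
    (A''.ncard : ℤ) - (B''.ncard : ℤ)
      = ((A.ncard : ℤ) - (B.ncard : ℤ)) * ((A'.ncard : ℤ) - (B'.ncard : ℤ)) ∧
    iotaImb G k * iotaImb H l ≤ iotaImb (G.boxProd H) (k + l) := by
  subst hA'' hB''
  have h : IsDefectivePartition G k A B := isDefectivePartition_iff.mpr ⟨hAB, hdisj, hA, hB⟩
  have h' : IsDefectivePartition H l A' B' :=
    isDefectivePartition_iff.mpr ⟨hAB', hdisj', hA', hB'⟩
  obtain ⟨hunion, hdisj'', hdeg, hdeg'⟩ := isDefectivePartition_iff.mp (h.boxProd h')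
  exact ⟨hunion, hdisj'', hdeg, hdeg', ncard_prod_union_prod_sub hdisj,
    iotaImb_mul_iotaImb_le_iotaImb_boxProd G H k l⟩
end

section
/- For every integer d ≥ 1, the vertex set {0,1}^d of the d-dimensional hypercube Q_d admits a partition into sets A and B such that the subgraph of Q_d induced by A and the subgraph induced by B each have maximum degree at most ⌈√d⌉, and |A| − |B| ≥ 2. In particular, Q_d has an induced subgraph on 2^{d−1} + 1 vertices with maximum degree at most ⌈√d⌉. -/
/-- The `d`-dimensional hypercube graph on `{0,1}^d`: two vertices are adjacent iff
they differ in exactly one coordinate. -/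
def cubeGraph (d : ℕ) : SimpleGraph (Fin d → Bool) :=
  SimpleGraph.fromRel (fun x y => hammingDist x y = 1)

/-!
Multiply the parity of a vertex by the sign of a Boolean function `P`. Since every edge of the
cube reverses the parity, two adjacent vertices get the same sign exactly when `P` distinguishes
them, so each sign class induces a subgraph whose degrees are sensitivities of `P`. Without `P` the
signs sum to `0`, so the sum of the twisted signs is twice the sum of the parities over the
complement of `P`.

Following Chung, Füredi, Graham and Seymour, split the `d` coordinates into `k = ⌈√d⌉` nonempty
blocks of size at most `k`, and let `P` say that some block is constantly `true`. If `P v` holds,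
every sensitive coordinate lies in one fixed full block; if it fails, each block contains at most
one sensitive coordinate. In both cases there are at most `k` of them. The sum of the parities over
the complement of `P` factors over the blocks, each factor being `±1`, so the two sign classes
differ in size by exactly `2`.
-/

section Flip

variable {ι : Type*} [DecidableEq ι]

/-- The neighbour of the cube vertex `v` in direction `i`. -/
def flipAt (v : ι → Bool) (i : ι) : ι → Bool :=
  Function.update v i (!v i)

@[simp]
theorem flipAt_self (v : ι → Bool) (i : ι) : flipAt v i i = !v i :=
  Function.update_self ..

theorem flipAt_of_ne {i j : ι} (h : j ≠ i) (v : ι → Bool) : flipAt v i j = v j :=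
  Function.update_of_ne h ..

theorem hammingDist_eq_one_iff_mem_range_flipAt [Fintype ι] {v w : ι → Bool} :
    hammingDist v w = 1 ↔ w ∈ Set.range (flipAt v) := by
  simp only [hammingDist, Finset.card_eq_one, Finset.ext_iff, Finset.mem_filter_univ,
    Finset.mem_singleton, Set.mem_range, funext_iff]
  refine exists_congr fun i => forall_congr' fun j => ?_
  obtain rfl | hji := eq_or_ne j i
  · simp [Bool.eq_not]
  · simp [flipAt_of_ne hji, hji]

theorem neighborSet_cubeGraph {d : ℕ} (v : Fin d → Bool) :
    (cubeGraph d).neighborSet v = Set.range (flipAt v) := by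
  ext w
  rw [SimpleGraph.mem_neighborSet, cubeGraph, SimpleGraph.fromRel_adj, hammingDist_comm w v,
    or_self, ← hammingDist_eq_one_iff_mem_range_flipAt, and_iff_right_iff_imp]
  rintro h rfl
  simp at h

/-- The coordinates at which the Boolean function `P` is sensitive at `v`, i.e. whose flip changes
the value of `P`. -/
def sensitiveCoords (P : (ι → Bool) → Prop) (v : ι → Bool) : Set ι :=
  {i | ¬(P (flipAt v i) ↔ P v)}

end Flip

section Parity

variable {ι : Type*} [Fintype ι]

/-- The parity of the number of `true` coordinates of `v`, as a sign. -/
def paritySign (v : ι → Bool) : ℤˣ :=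
  ∏ i, if v i then -1 else 1

theorem paritySign_flipAt [DecidableEq ι] (v : ι → Bool) (i : ι) :
    paritySign (flipAt v i) = -paritySign v := by
  have other_signs : ∏ j ∈ {i}ᶜ, (if flipAt v i j then (-1 : ℤˣ) else 1) =
      ∏ j ∈ {i}ᶜ, if v j then -1 else 1 :=
    Finset.prod_congr rfl fun j hj => by rw [flipAt_of_ne (by simpa using hj)]
  rw [paritySign, paritySign, Fintype.prod_eq_mul_prod_compl i, other_signs,
    Fintype.prod_eq_mul_prod_compl i fun j => if v j then (-1 : ℤˣ) else 1, flipAt_self]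
  cases v i <;> simp

theorem paritySign_const_true : paritySign (fun _ : ι => true) = (-1) ^ Fintype.card ι := by
  simp [paritySign]

theorem sum_paritySign [DecidableEq ι] [Nonempty ι] :
    ∑ v : ι → Bool, (paritySign v : ℤ) = 0 := by
  calc ∑ v : ι → Bool, (paritySign v : ℤ)
      = ∏ _i : ι, ∑ b : Bool, ((if b then -1 else 1 : ℤˣ) : ℤ) := by
        simp only [paritySign, Units.coe_prod, Fintype.prod_sum]
    _ = 0 := by simp

theorem sum_paritySign_of_ne_const_true [DecidableEq ι] [Nonempty ι] :
    ∑ v : ι → Bool, (if v = fun _ => true then 0 else (paritySign v : ℤ)) =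
      -(-1) ^ Fintype.card ι := by
  have split_const (v : ι → Bool) : (if v = fun _ => true then 0 else (paritySign v : ℤ)) =
      paritySign v - if v = fun _ => true then (-1) ^ Fintype.card ι else 0 := by
    split_ifs with h
    · simp [h, paritySign_const_true]
    · simp
  simp [split_const, sum_paritySign]

variable (P : (ι → Bool) → Prop) [DecidablePred P]

/-- The parity colouring of the cube, with the two colours exchanged where `P` holds. -/
def twistedParity (v : ι → Bool) : ℤˣ :=
  paritySign v * if P v then -1 else 1

theorem twistedParity_flipAt_eq_iff [DecidableEq ι] {v : ι → Bool} {i : ι} :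
    twistedParity P (flipAt v i) = twistedParity P v ↔ i ∈ sensitiveCoords P v := by
  rw [sensitiveCoords, Set.mem_ofPred_eq, twistedParity, twistedParity, paritySign_flipAt,
    neg_mul, ← mul_neg, mul_right_inj]
  by_cases h : P v <;> by_cases h' : P (flipAt v i) <;> simp [h, h']

theorem sum_twistedParity [DecidableEq ι] [Nonempty ι] :
    ∑ v, (twistedParity P v : ℤ) = 2 * ∑ v, if P v then 0 else (paritySign v : ℤ) := by
  have twist (v : ι → Bool) :
      (twistedParity P v : ℤ) = 2 * (if P v then 0 else (paritySign v : ℤ)) - paritySign v := by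
    rw [twistedParity]
    split_ifs
    · simp
    · push_cast; ring
  simp_rw [twist, Finset.sum_sub_distrib, sum_paritySign, sub_zero, Finset.mul_sum]

end Parity

theorem ncard_twistedParity_inter_neighborSet_le {d : ℕ} (P : (Fin d → Bool) → Prop)
    [DecidablePred P] {ε : ℤˣ} {v : Fin d → Bool} (hv : twistedParity P v = ε) :
    ({w | twistedParity P w = ε} ∩ (cubeGraph d).neighborSet v).ncard ≤
      (sensitiveCoords P v).ncard := by
  have image_eq : {w | twistedParity P w = ε} ∩ (cubeGraph d).neighborSet v =
      flipAt v '' sensitiveCoords P v := by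
    rw [neighborSet_cubeGraph, ← Set.image_preimage_eq_inter_range]
    congr 1
    ext i
    rw [← twistedParity_flipAt_eq_iff, hv, Set.mem_preimage, Set.mem_ofPred_eq]
  rw [image_eq]
  exact Set.ncard_image_le

section Blocks

variable {ι κ : Type*} (g : ι → κ)

/-- `v` is constantly `true` on the block of coordinates in the fibre of `g` over `j`. -/
def IsFullBlock (v : ι → Bool) (j : κ) : Prop :=
  ∀ i, g i = j → v i = true

/-- The Boolean function "OR of ANDs" attached to the partition of the coordinates into the fibres
of `g`: some block is constantly `true`. -/
def HasFullBlock (v : ι → Bool) : Prop :=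
  ∃ j, IsFullBlock g v j

section Sensitivity

variable {g} [DecidableEq ι]

theorem isFullBlock_flipAt_of_ne {i : ι} {j : κ} (hij : g i ≠ j) (v : ι → Bool) :
    IsFullBlock g (flipAt v i) j ↔ IsFullBlock g v j :=
  forall₂_congr fun x hx => by rw [flipAt_of_ne (by rintro rfl; exact hij hx)]

theorem sensitiveCoords_subset_of_isFullBlock {v : ι → Bool} {j : κ} (hj : IsFullBlock g v j) :
    sensitiveCoords (HasFullBlock g) v ⊆ g ⁻¹' {j} := by
  intro i hi
  by_contra hij
  exact hi (iff_of_true ⟨j, (isFullBlock_flipAt_of_ne hij v).mpr hj⟩ ⟨j, hj⟩)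

theorem isFullBlock_flipAt_of_mem_sensitiveCoords {v : ι → Bool} (hv : ¬HasFullBlock g v) {i : ι}
    (hi : i ∈ sensitiveCoords (HasFullBlock g) v) : IsFullBlock g (flipAt v i) (g i) := by
  obtain ⟨j, hj⟩ : HasFullBlock g (flipAt v i) := by
    by_contra h
    exact hi (iff_of_false h hv)
  obtain rfl : g i = j := by
    by_contra hij
    exact hv ⟨j, (isFullBlock_flipAt_of_ne hij v).mp hj⟩
  exact hj

theorem injOn_sensitiveCoords_of_not_hasFullBlock {v : ι → Bool} (hv : ¬HasFullBlock g v) :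
    Set.InjOn g (sensitiveCoords (HasFullBlock g) v) := by
  intro a ha b hb hab
  by_contra hne
  have hva : v a = false := by
    simpa using isFullBlock_flipAt_of_mem_sensitiveCoords hv ha a rfl
  have hva' : v a = true := by
    simpa [flipAt_of_ne hne] using isFullBlock_flipAt_of_mem_sensitiveCoords hv hb a hab
  simp [hva] at hva'

theorem ncard_sensitiveCoords_hasFullBlock_le [Finite ι] [Finite κ] {k : ℕ} (hκ : Nat.card κ ≤ k)
    (hg : ∀ j, (g ⁻¹' {j}).ncard ≤ k) (v : ι → Bool) :
    (sensitiveCoords (HasFullBlock g) v).ncard ≤ k := by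
  by_cases hv : HasFullBlock g v
  · obtain ⟨j, hj⟩ := hv
    exact (Set.ncard_le_ncard (sensitiveCoords_subset_of_isFullBlock hj)).trans (hg j)
  · rw [← (injOn_sensitiveCoords_of_not_hasFullBlock hv).ncard_image]
    exact (Set.ncard_le_card _).trans hκ

end Sensitivity

section Sum

variable {g} [Fintype ι] [Fintype κ] [DecidablePred (HasFullBlock g)]

theorem ite_hasFullBlock_eq_prod [DecidableEq κ] (v : ι → Bool) :
    (if HasFullBlock g v then 0 else (paritySign v : ℤ)) =
      ∏ j, if (fun i : {i // g i = j} => v i) = fun _ => true then 0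
        else (paritySign fun i : {i // g i = j} => v i : ℤ) := by
  have hasFullBlock_iff :
      HasFullBlock g v ↔ ∃ j, (fun i : {i // g i = j} => v i) = fun _ => true := by
    simp only [HasFullBlock, IsFullBlock, funext_iff, Subtype.forall]
  split_ifs with hv
  · obtain ⟨j, hj⟩ := hasFullBlock_iff.mp hv
    exact (Finset.prod_eq_zero (Finset.mem_univ j) (by rw [if_pos hj])).symm
  · rw [paritySign, ← Fintype.prod_fiberwise g, Units.coe_prod]
    exact Finset.prod_congr rfl fun j _ =>
      (if_neg fun hj => hv (hasFullBlock_iff.mpr ⟨j, hj⟩)).symm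

theorem sum_paritySign_of_not_hasFullBlock [DecidableEq ι] (hg : Function.Surjective g) :
    ∑ v, (if HasFullBlock g v then 0 else (paritySign v : ℤ)) =
      (-1) ^ (Fintype.card κ + Fintype.card ι) := by
  classical
  let F (j : κ) (u : {i // g i = j} → Bool) : ℤ :=
    if u = fun _ => true then 0 else paritySign u
  have nonempty_fiber (j : κ) : Nonempty {i // g i = j} := nonempty_subtype.mpr (hg j)
  calc ∑ v, (if HasFullBlock g v then 0 else (paritySign v : ℤ))
      = ∑ v : ι → Bool, ∏ j, F j fun i => v i := by simp_rw [ite_hasFullBlock_eq_prod, F]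
    _ = ∑ u : ∀ j, {i // g i = j} → Bool, ∏ j, F j (u j) :=
        Fintype.sum_equiv (Equiv.piCongrFiberwise fun _ => Equiv.refl _) _ _ fun _ => rfl
    _ = ∏ j, ∑ u, F j u := (Fintype.prod_sum F).symm
    _ = ∏ j, -(-1) ^ Fintype.card {i // g i = j} :=
        Finset.prod_congr rfl fun _ _ => sum_paritySign_of_ne_const_true
    _ = (-1) ^ (Fintype.card κ + Fintype.card ι) := by
        rw [Finset.prod_neg, Finset.prod_pow_eq_pow_sum, ← Fintype.card_sigma,
          Fintype.card_congr (Equiv.sigmaFiberEquiv g), pow_add, Finset.card_univ]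

theorem sum_twistedParity_hasFullBlock [DecidableEq ι] [Nonempty ι] (hg : Function.Surjective g) :
    ∑ v, (twistedParity (HasFullBlock g) v : ℤ) =
      2 * (-1) ^ (Fintype.card κ + Fintype.card ι) := by
  rw [sum_twistedParity, sum_paritySign_of_not_hasFullBlock hg]

end Sum

end Blocks

theorem exists_surjective_fin_ncard_preimage_le {d k m : ℕ} (hkd : k ≤ d) (hdm : d ≤ m * k) :
    ∃ g : Fin d → Fin k, Function.Surjective g ∧ ∀ j, (g ⁻¹' {j}).ncard ≤ m := by
  let e (i : Fin d) : Fin m × Fin k := finProdFinEquiv.symm (i.castLE hdm)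
  have he : Function.Injective e :=
    finProdFinEquiv.symm.injective.comp (Fin.castLE_injective hdm)
  refine ⟨fun i => (e i).2, fun j => ⟨j.castLE hkd, ?_⟩, fun j => ?_⟩
  · ext
    simp [e, Nat.mod_eq_of_lt j.isLt]
  · have injOn_fst : Set.InjOn (fun i => (e i).1) ((fun i => (e i).2) ⁻¹' {j}) :=
      fun a ha b hb hab => he (Prod.ext hab (Eq.trans ha (Eq.symm hb)))
    rw [← injOn_fst.ncard_image]
    simpa using Set.ncard_le_card ((fun i => (e i).1) '' _)

theorem ceil_sqrt_le_self (n : ℕ) : ⌈Real.sqrt n⌉₊ ≤ n := by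
  rw [Nat.ceil_le, Real.sqrt_le_self_iff]
  exact_mod_cast Nat.eq_zero_or_pos n

theorem le_ceil_sqrt_mul_self (n : ℕ) : n ≤ ⌈Real.sqrt n⌉₊ * ⌈Real.sqrt n⌉₊ := by
  have h := (Real.sqrt_le_left (Nat.cast_nonneg _)).mp (Nat.le_ceil (Real.sqrt n))
  rw [← sq]
  exact_mod_cast h

section SignClasses

variable {α : Type*} (f : α → ℤˣ) (ε : ℤˣ)

theorem compl_setOf_eq_unit : {a | f a = ε}ᶜ = {a | f a = -ε} := by
  ext a
  exact Int.units_ne_iff_eq_neg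

theorem ncard_setOf_eq_unit_sub_ncard_compl [Fintype α] :
    ({a | f a = ε}.ncard : ℤ) - {a | f a = ε}ᶜ.ncard = ε * ∑ a, (f a : ℤ) := by
  have indicator (a : α) :
      (ε * f a : ℤ) = (if f a = ε then 1 else 0) - if f a = -ε then 1 else 0 := by
    rcases Int.units_eq_one_or (f a) with h | h <;>
      rcases Int.units_eq_one_or ε with rfl | rfl <;> simp [h]
  simp [compl_setOf_eq_unit, Finset.mul_sum, indicator, Set.ncard_eq_toFinset_card']

end SignClasses

/-- For `d ≥ 1`, `{0,1}^d` can be partitioned into `A ⊔ B` such that both parts induce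
subgraphs of `Q_d` of maximum degree at most `⌈√d⌉` and `|A| − |B| ≥ 2`.  In particular
`Q_d` has an induced subgraph on `2^{d−1} + 1` vertices of maximum degree at most
`⌈√d⌉`. -/
theorem stmt10 (d : ℕ) (hd : 1 ≤ d) :
    (∃ A B : Set (Fin d → Bool),
      A ∪ B = Set.univ ∧ Disjoint A B ∧
      (∀ v ∈ A, (A ∩ (cubeGraph d).neighborSet v).ncard ≤ ⌈Real.sqrt d⌉₊) ∧
      (∀ v ∈ B, (B ∩ (cubeGraph d).neighborSet v).ncard ≤ ⌈Real.sqrt d⌉₊) ∧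
      B.ncard + 2 ≤ A.ncard) ∧
    ∃ K : Set (Fin d → Bool),
      K.ncard = 2 ^ (d - 1) + 1 ∧
      ∀ v ∈ K, (K ∩ (cubeGraph d).neighborSet v).ncard ≤ ⌈Real.sqrt d⌉₊ := by
  classical
  have : Nonempty (Fin d) := ⟨⟨0, hd⟩⟩
  obtain ⟨g, hg, hblock⟩ := exists_surjective_fin_ncard_preimage_le
    (ceil_sqrt_le_self d) (le_ceil_sqrt_mul_self d)
  let color := twistedParity (HasFullBlock g)
  have degree_le (ε : ℤˣ) (v) (hv : color v = ε) :
      ({w | color w = ε} ∩ (cubeGraph d).neighborSet v).ncard ≤ ⌈Real.sqrt d⌉₊ :=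
    (ncard_twistedParity_inter_neighborSet_le _ hv).trans
      (ncard_sensitiveCoords_hasFullBlock_le (Nat.card_fin _).le hblock v)
  obtain ⟨ε, hε⟩ : ∃ ε : ℤˣ, ∑ v, (color v : ℤ) = 2 * ε :=
    ⟨(-1) ^ (_ + _), by simpa using sum_twistedParity_hasFullBlock hg⟩
  let A := {v | color v = ε}
  have ncard_sub : (A.ncard : ℤ) - Aᶜ.ncard = 2 := by
    rw [ncard_setOf_eq_unit_sub_ncard_compl, hε, mul_left_comm, Int.units_coe_mul_self, mul_one]
  have ncard_add : A.ncard + Aᶜ.ncard = 2 ^ (d - 1) * 2 := by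
    rw [Set.ncard_add_ncard_compl, ← pow_succ, Nat.sub_add_cancel hd]
    simp
  refine ⟨⟨A, Aᶜ, Set.union_compl_self A, disjoint_compl_right, degree_le ε, ?_, by omega⟩,
    A, by omega, degree_le ε⟩
  rw [compl_setOf_eq_unit]
  exact degree_le (-ε)
end

section
/- Let Γ be a finite group and G = Cay(Γ, C) a Cayley graph that is bipartite (i.e., 2-colorable). Suppose G contains the d-dimensional hypercube Q_d as a subgraph, i.e., there is an injective map f: {0,1}^d → Γ such that whenever u, v ∈ {0,1}^d differ in exactly one coordinate, f(u) and f(v) are adjacent in G. Then for every K ⊆ Γ with 2·|K| > |Γ|, the subgraph of G induced by K has maximum degree at least √d. -/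
/-!
Huang's theorem comes from the signed flips `γ i` of the cube: multiplying the `i`-th coordinate
flip by the parity of the coordinates below `i` makes these operators anticommute, so
`T = ∑ i, γ i` squares to `d`. Multiplication by the total parity anticommutes with `T`, hence the
eigenspace of `T` for `√d` has dimension at least `2 ^ d / 2` and meets the space of functions
supported on a set `K` of more than `2 ^ d / 2` vertices. At a point where such an eigenfunction is
largest in absolute value, the eigenvalue is at most the degree within `K`.

In a vertex-transitive graph `G` containing the cube, averaging over the automorphisms moves the
cube so that `K` is at least as dense in it as in `G`.
-/

open Module

lemma sum_mul_sum_self_of_anticommute {R ι : Type*} [Ring R] {γ : ι → R} {s : Finset ι}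
    (hsq : ∀ i ∈ s, γ i * γ i = 1)
    (hanti : (s : Set ι).Pairwise fun i j ↦ γ i * γ j = -(γ j * γ i)) :
    (∑ i ∈ s, γ i) * ∑ i ∈ s, γ i = s.card := by
  classical
  induction s using Finset.induction_on with
  | empty => simp
  | insert a s ha ih =>
    have hsq_s := ih (fun i hi ↦ hsq i (Finset.mem_insert_of_mem hi))
      (hanti.mono (Finset.coe_subset.2 (Finset.subset_insert a s)))
    have hcross : γ a * ∑ i ∈ s, γ i = -((∑ i ∈ s, γ i) * γ a) := by
      rw [Finset.mul_sum, Finset.sum_mul, ← Finset.sum_neg_distrib]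
      exact Finset.sum_congr rfl fun i hi ↦ hanti (Finset.mem_insert_self a s)
        (Finset.mem_insert_of_mem hi) (ne_of_mem_of_not_mem hi ha).symm
    rw [Finset.sum_insert ha, Finset.card_insert_of_notMem ha, add_mul, mul_add, mul_add, hsq_s,
      hcross, hsq a (Finset.mem_insert_self a s)]
    push_cast
    abel

lemma finrank_le_two_mul_finrank_eigenspace {𝕜 E : Type*} [Field 𝕜] [AddCommGroup E] [Module 𝕜 E]
    [FiniteDimensional 𝕜 E] {T D : End 𝕜 E} {c : 𝕜} (hT : T * T = algebraMap 𝕜 (End 𝕜 E) (c * c))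
    (hD : Function.Injective D) (hTD : T * D = -(D * T)) :
    finrank 𝕜 E ≤ 2 * finrank 𝕜 (T.eigenspace c) := by
  have hrange : LinearMap.range (T + algebraMap 𝕜 (End 𝕜 E) c) ≤ T.eigenspace c := by
    rintro _ ⟨x, rfl⟩
    have hTTx : T (T x) = (c * c) • x := LinearMap.congr_fun hT x
    simp only [End.mem_eigenspace_iff, LinearMap.add_apply, Module.algebraMap_end_apply, map_add,
      map_smul, hTTx, smul_add, smul_smul]
    abel
  have hker : (LinearMap.ker (T + algebraMap 𝕜 (End 𝕜 E) c)).map D ≤ T.eigenspace c := by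
    rintro _ ⟨x, hx, rfl⟩
    have hTx : T x = -(c • x) := eq_neg_of_add_eq_zero_left hx
    have hTDx : T (D x) = -D (T x) := LinearMap.congr_fun hTD x
    rw [End.mem_eigenspace_iff, hTDx, hTx, map_neg, map_smul, neg_neg]
  have hrank := LinearMap.finrank_range_add_finrank_ker (T + algebraMap 𝕜 (End 𝕜 E) c)
  have hrange_le := Submodule.finrank_mono hrange
  have hker_le := Submodule.finrank_mono hker
  rw [← ((LinearMap.ker _).equivMapOfInjective D hD).finrank_eq] at hker_le
  omega

lemma exists_mem_ne_zero_of_card_lt_finrank_add_ncard {𝕜 ι : Type*} [Field 𝕜] [Fintype ι]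
    {W : Submodule 𝕜 (ι → 𝕜)} {K : Set ι} (hK : Fintype.card ι < finrank 𝕜 W + K.ncard) :
    ∃ φ ∈ W, φ ≠ 0 ∧ ∀ i ∉ K, φ i = 0 := by
  by_contra! h
  have hdisj : Disjoint W (Pi.spanSubset 𝕜 K) := by
    refine Submodule.disjoint_def.2 fun φ hφW hφK ↦ by_contra fun hφ ↦ ?_
    obtain ⟨i, hi, hφi⟩ := h φ hφW hφ
    exact hφi (Pi.mem_spanSubset_iff.1 hφK i hi)
  have hle := Submodule.finrank_add_finrank_le_of_disjoint hdisj
  rw [Pi.dim_spanSubset, finrank_fintype_fun_eq_card] at hle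
  omega

lemma exists_le_ncard_inter_neighborSet {V : Type*} [Fintype V] (G : SimpleGraph V)
    [G.LocallyFinite] {T : End ℝ (V → ℝ)}
    (hT : ∀ φ u, |T φ u| ≤ ∑ v ∈ G.neighborFinset u, |φ v|) {c : ℝ} {K : Set V}
    (hK : Fintype.card V < finrank ℝ (T.eigenspace c) + K.ncard) :
    ∃ u ∈ K, c ≤ ((K ∩ G.neighborSet u).ncard : ℝ) := by
  classical
  obtain ⟨φ, hφT, hφ, hφK⟩ := exists_mem_ne_zero_of_card_lt_finrank_add_ncard hK
  rw [End.mem_eigenspace_iff] at hφT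
  obtain ⟨w, hw⟩ := Function.ne_iff.1 hφ
  obtain ⟨u, -, hu⟩ := Finset.exists_max_image Finset.univ (|φ ·|) ⟨w, Finset.mem_univ w⟩
  have hpos : 0 < |φ u| := (abs_pos.2 hw).trans_le (hu w (Finset.mem_univ w))
  refine ⟨u, by_contra fun h ↦ hpos.ne' (by rw [hφK u h, abs_zero]),
    le_of_mul_le_mul_right ?_ hpos⟩
  calc c * |φ u| ≤ |c * φ u| := by
        rw [abs_mul]; exact mul_le_mul_of_nonneg_right (le_abs_self c) (abs_nonneg _)
    _ = |T φ u| := by rw [hφT, Pi.smul_apply, smul_eq_mul]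
    _ ≤ ∑ v ∈ G.neighborFinset u, |φ v| := hT φ u
    _ = ∑ v ∈ G.neighborFinset u with v ∈ K, |φ v| :=
        (Finset.sum_filter_of_ne fun v _ hv ↦ by_contra fun h ↦ hv (by rw [hφK v h, abs_zero])).symm
    _ ≤ (G.neighborFinset u |>.filter (· ∈ K)).card • |φ u| :=
        Finset.sum_le_card_nsmul _ _ _ fun v _ ↦ hu v (Finset.mem_univ v)
    _ = (K ∩ G.neighborSet u).ncard * |φ u| := by
        have hset : K ∩ G.neighborSet u = (G.neighborFinset u |>.filter (· ∈ K) : Finset V) := by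
          ext v
          simp [and_comm]
        rw [nsmul_eq_mul, hset, Set.ncard_coe_finset]

/-- The hypercube graph with coordinates indexed by `ι`; the `d`-cube `Q_d` is
`hypercube (Fin d)`. -/
def hypercube (ι : Type*) [Fintype ι] : SimpleGraph (ι → Bool) where
  Adj u v := hammingDist u v = 1
  symm := ⟨fun u v h ↦ by rwa [hammingDist_comm]⟩
  loopless := ⟨fun u h ↦ by simp at h⟩

namespace hypercube

section Flip

variable {ι : Type*} [DecidableEq ι]

/-- The vertex of the cube obtained from `u` by switching the `i`-th coordinate, that is, the
neighbor of `u` in direction `i`. -/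
def flip (i : ι) (u : ι → Bool) : ι → Bool :=
  Function.update u i (!u i)

lemma flip_apply (i j : ι) (u : ι → Bool) : flip i u j = if j = i then !u i else u j :=
  Function.update_apply u i (!u i) j

lemma flip_flip (i : ι) (u : ι → Bool) : flip i (flip i u) = u := by
  simp [flip]

lemma flip_comm (i j : ι) (u : ι → Bool) : flip i (flip j u) = flip j (flip i u) := by
  ext k
  simp only [flip_apply]
  grind

lemma flip_left_injective (u : ι → Bool) : Function.Injective (flip · u) := by
  intro i j hij
  by_contra hne
  simpa [flip_apply, hne] using congrFun hij i

lemma adj_flip [Fintype ι] (i : ι) (u : ι → Bool) : (hypercube ι).Adj u (flip i u) :=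
  Finset.card_eq_one.2 ⟨i, by ext j; by_cases h : j = i <;> simp [flip_apply, h]⟩

end Flip

section Walsh

variable {ι : Type*}

/-- The Walsh function of a set `S` of coordinates, which is the character `u ↦ (-1) ^ ∑ j ∈ S, u j`
of the cube. It provides the signs that make flips anticommute. -/
noncomputable def walsh (S : Finset ι) (u : ι → Bool) : ℝ :=
  ∏ j ∈ S, if u j then -1 else 1

lemma walsh_mul_self (S : Finset ι) (u : ι → Bool) : walsh S u * walsh S u = 1 := by
  rw [walsh, ← Finset.prod_mul_distrib]
  exact Finset.prod_eq_one fun j _ ↦ by split_ifs <;> norm_num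

lemma abs_walsh (S : Finset ι) (u : ι → Bool) : |walsh S u| = 1 :=
  (abs_eq zero_le_one).2 (mul_self_eq_one_iff.1 (walsh_mul_self S u))

lemma walsh_flip_of_notMem [DecidableEq ι] {S : Finset ι} {i : ι} (hi : i ∉ S) (u : ι → Bool) :
    walsh S (flip i u) = walsh S u :=
  Finset.prod_congr rfl fun j hj ↦ by rw [flip_apply, if_neg (ne_of_mem_of_not_mem hj hi)]

lemma walsh_flip_of_mem [DecidableEq ι] {S : Finset ι} {i : ι} (hi : i ∈ S) (u : ι → Bool) :
    walsh S (flip i u) = -walsh S u := by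
  have herase (v : ι → Bool) : walsh S v = (if v i then -1 else 1) * walsh (S.erase i) v :=
    (Finset.mul_prod_erase S _ hi).symm
  rw [herase, herase u, walsh_flip_of_notMem (Finset.notMem_erase i S), flip_apply, if_pos rfl]
  cases u i <;> simp

/-- Multiplication of functions on the cube by the Walsh function of `S`. For `S = univ` it
exchanges the eigenspaces of the signed adjacency operator. -/
noncomputable def walshMul (S : Finset ι) : End ℝ ((ι → Bool) → ℝ) :=
  LinearMap.mulLeft ℝ (walsh S)

lemma walshMul_apply (S : Finset ι) (φ : (ι → Bool) → ℝ) (u : ι → Bool) :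
    walshMul S φ u = walsh S u * φ u := rfl

lemma walshMul_injective (S : Finset ι) : Function.Injective (walshMul S) :=
  Function.LeftInverse.injective (g := walshMul S) fun φ ↦ by
    ext u
    rw [walshMul_apply, walshMul_apply, ← mul_assoc, walsh_mul_self, one_mul]

end Walsh

section SignedAdjacency

variable {ι : Type*} [Fintype ι] [LinearOrder ι]

/-- The operator flipping the `i`-th coordinate, with the sign `(-1) ^ ∑ j < i, u j` at `u`. These
operators generate a Clifford algebra. -/
noncomputable def signedFlip (i : ι) : End ℝ ((ι → Bool) → ℝ) :=
  walshMul {j | j < i} * LinearMap.funLeft ℝ ℝ (flip i)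

lemma signedFlip_apply (i : ι) (φ : (ι → Bool) → ℝ) (u : ι → Bool) :
    signedFlip i φ u = walsh {j | j < i} u * φ (flip i u) := rfl

lemma signedFlip_mul_self (i : ι) : signedFlip i * signedFlip i = 1 := by
  refine LinearMap.ext fun φ ↦ funext fun u ↦ ?_
  rw [End.mul_apply, signedFlip_apply, signedFlip_apply, walsh_flip_of_notMem (by simp), flip_flip,
    ← mul_assoc, walsh_mul_self, one_mul, End.one_apply]

lemma signedFlip_anticommute {i j : ι} (hij : i ≠ j) :
    signedFlip i * signedFlip j = -(signedFlip j * signedFlip i) := by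
  wlog hlt : i < j generalizing i j
  · rw [this hij.symm (hij.lt_or_gt.resolve_left hlt), neg_neg]
  refine LinearMap.ext fun φ ↦ funext fun u ↦ ?_
  simp only [End.mul_apply, LinearMap.neg_apply, Pi.neg_apply, signedFlip_apply]
  rw [walsh_flip_of_mem (by simpa using hlt), walsh_flip_of_notMem (by simpa using hlt.le),
    flip_comm]
  ring

lemma signedFlip_mul_walshMul_univ (i : ι) :
    signedFlip i * walshMul Finset.univ = -(walshMul Finset.univ * signedFlip i) := by
  refine LinearMap.ext fun φ ↦ funext fun u ↦ ?_
  simp only [End.mul_apply, LinearMap.neg_apply, Pi.neg_apply, signedFlip_apply, walshMul_apply,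
    walsh_flip_of_mem (Finset.mem_univ i)]
  ring

variable (ι) in
/-- Huang's signed adjacency operator of the cube, whose square is the dimension. -/
noncomputable def signedAdj : End ℝ ((ι → Bool) → ℝ) :=
  ∑ i, signedFlip i

lemma signedAdj_mul_self : signedAdj ι * signedAdj ι = Fintype.card ι :=
  sum_mul_sum_self_of_anticommute (fun i _ ↦ signedFlip_mul_self i)
    fun _ _ _ _ hij ↦ signedFlip_anticommute hij

lemma signedAdj_mul_walshMul_univ :
    signedAdj ι * walshMul Finset.univ = -(walshMul Finset.univ * signedAdj ι) := by
  simp only [signedAdj, Finset.sum_mul, Finset.mul_sum, signedFlip_mul_walshMul_univ,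
    Finset.sum_neg_distrib]

lemma two_pow_card_le_two_mul_finrank_eigenspace_signedAdj :
    2 ^ Fintype.card ι ≤ 2 * finrank ℝ ((signedAdj ι).eigenspace √(Fintype.card ι)) := by
  have hsq : signedAdj ι * signedAdj ι =
      algebraMap ℝ _ (√(Fintype.card ι) * √(Fintype.card ι)) := by
    rw [signedAdj_mul_self, Real.mul_self_sqrt (Nat.cast_nonneg _), map_natCast]
  simpa using finrank_le_two_mul_finrank_eigenspace hsq (walshMul_injective Finset.univ)
    signedAdj_mul_walshMul_univ

lemma abs_signedAdj_apply_le [(hypercube ι).LocallyFinite] (φ : (ι → Bool) → ℝ) (u : ι → Bool) :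
    |signedAdj ι φ u| ≤ ∑ v ∈ (hypercube ι).neighborFinset u, |φ v| := by
  calc |signedAdj ι φ u| = |∑ i, signedFlip i φ u| := by
        rw [signedAdj, LinearMap.sum_apply, Finset.sum_apply]
    _ ≤ ∑ i, |signedFlip i φ u| := Finset.abs_sum_le_sum_abs _ _
    _ = ∑ i, |φ (flip i u)| :=
        Finset.sum_congr rfl fun i _ ↦ by rw [signedFlip_apply, abs_mul, abs_walsh, one_mul]
    _ = ∑ v ∈ Finset.univ.image (flip · u), |φ v| :=
        (Finset.sum_image (f := (|φ ·|)) (flip_left_injective u).injOn).symm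
    _ ≤ ∑ v ∈ (hypercube ι).neighborFinset u, |φ v| := by
        refine Finset.sum_le_sum_of_subset_of_nonneg ?_ fun v _ _ ↦ abs_nonneg _
        simpa [Finset.image_subset_iff] using fun i ↦ adj_flip i u

end SignedAdjacency

theorem exists_sqrt_card_le_ncard_inter_neighborSet {ι : Type*} [Fintype ι] {K : Set (ι → Bool)}
    (hK : 2 ^ Fintype.card ι < 2 * K.ncard) :
    ∃ u ∈ K, √(Fintype.card ι) ≤ ((K ∩ (hypercube ι).neighborSet u).ncard : ℝ) := by
  classical
  let : LinearOrder ι := linearOrderOfSTO WellOrderingRel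
  refine exists_le_ncard_inter_neighborSet (hypercube ι) abs_signedAdj_apply_le ?_
  have hfinrank := two_pow_card_le_two_mul_finrank_eigenspace_signedAdj (ι := ι)
  rw [Fintype.card_fun, Fintype.card_bool]
  omega

end hypercube

section Averaging

lemma sum_ncard_setOf_comm {α β : Type*} [Fintype α] [Fintype β] (r : α → β → Prop) :
    ∑ a, {b | r a b}.ncard = ∑ b, {a | r a b}.ncard := by
  classical
  simpa [Set.ncard_eq_toFinset_card', Finset.bipartiteAbove, Finset.bipartiteBelow] using
    Finset.sum_card_bipartiteAbove_eq_sum_card_bipartiteBelow (s := Finset.univ)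
      (t := Finset.univ) r

variable {A V : Type*} [Group A] [Finite A] [Finite V] [MulAction A V]
  [MulAction.IsPretransitive A V]

lemma card_mul_ncard_setOf_smul_mem (v : V) (K : Set V) :
    Nat.card V * {a : A | a • v ∈ K}.ncard = Nat.card A * K.ncard := by
  have := Fintype.ofFinite A
  have := Fintype.ofFinite V
  have hvertex (w : V) : {a : A | a • w ∈ K}.ncard = {a : A | a • v ∈ K}.ncard := by
    obtain ⟨b, rfl⟩ := MulAction.exists_smul_eq A v w
    simp only [smul_smul]
    exact Set.ncard_preimage_of_injective_subset_range (s := {a : A | a • v ∈ K})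
      (mul_left_injective b) (by simp [(Group.mulRight_bijective b).surjective.range_eq])
  have helem (a : A) : {w : V | a • w ∈ K}.ncard = K.ncard :=
    Set.ncard_preimage_of_injective_subset_range (MulAction.injective a)
      (by simp [(MulAction.surjective a).range_eq])
  simpa [hvertex, helem] using sum_ncard_setOf_comm fun (w : V) (a : A) ↦ a • w ∈ K

variable (A) in
lemma exists_card_mul_ncard_le {α : Type*} [Finite α] (f : α → V) (K : Set V) :
    ∃ a : A, Nat.card α * K.ncard ≤ Nat.card V * {x | a • f x ∈ K}.ncard := by
  have := Fintype.ofFinite A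
  have := Fintype.ofFinite α
  have htotal : ∑ _a : A, Nat.card α * K.ncard = ∑ a : A, Nat.card V * {x | a • f x ∈ K}.ncard := by
    rw [← Finset.mul_sum (f := fun a : A ↦ {x | a • f x ∈ K}.ncard), sum_ncard_setOf_comm,
      Finset.mul_sum]
    simp only [card_mul_ncard_setOf_smul_mem, Finset.sum_const, Finset.card_univ,
      Nat.card_eq_fintype_card, smul_eq_mul]
    ring
  obtain ⟨a, -, ha⟩ := Finset.exists_le_of_sum_le Finset.univ_nonempty htotal.le
  exact ⟨a, ha⟩

variable (A) in
lemma exists_card_lt_two_mul_ncard {α : Type*} [Finite α] [Nonempty α] (f : α → V) {K : Set V}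
    (hK : Nat.card V < 2 * K.ncard) :
    ∃ a : A, Nat.card α < 2 * {x | a • f x ∈ K}.ncard := by
  obtain ⟨a, ha⟩ := exists_card_mul_ncard_le A f K
  refine ⟨a, lt_of_mul_lt_mul_left (a := Nat.card V) ?_ (Nat.zero_le _)⟩
  calc Nat.card V * Nat.card α < 2 * K.ncard * Nat.card α :=
        Nat.mul_lt_mul_of_pos_right hK Nat.card_pos
    _ = 2 * (Nat.card α * K.ncard) := by ring
    _ ≤ 2 * (Nat.card V * {x | a • f x ∈ K}.ncard) := Nat.mul_le_mul_left 2 ha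
    _ = Nat.card V * (2 * {x | a • f x ∈ K}.ncard) := by ring

end Averaging

lemma ncard_preimage_inter_neighborSet_le {V W : Type*} [Finite W] {H : SimpleGraph V}
    {G : SimpleGraph W} (f : H →g G) {u : V} (hf : Set.InjOn f (H.neighborSet u)) (K : Set W) :
    (f ⁻¹' K ∩ H.neighborSet u).ncard ≤ (K ∩ G.neighborSet (f u)).ncard :=
  Set.ncard_le_ncard_of_injOn f (fun _ hv ↦ ⟨hv.1, f.map_adj hv.2⟩)
    (hf.mono Set.inter_subset_right)

lemma fromRel_inv_mul_mem {Γ : Type*} [Group Γ] (C : Set Γ) :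
    SimpleGraph.fromRel (fun x y ↦ x⁻¹ * y ∈ C) = SimpleGraph.mulCayley C := by
  simp [SimpleGraph.mulCayley, ← eq_inv_mul_iff_mul_eq]

instance isPretransitive_mulCayley_aut {Γ : Type*} [Group Γ] (C : Set Γ) :
    MulAction.IsPretransitive (SimpleGraph.mulCayley C ≃g SimpleGraph.mulCayley C) Γ where
  exists_smul_eq x y :=
    ⟨⟨Equiv.mulLeft (y * x⁻¹), SimpleGraph.mulCayley_adj_mul_iff_right⟩, inv_mul_cancel_right y x⟩

theorem stmt12_general {V : Type*} [Finite V] (G : SimpleGraph V)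
    [MulAction.IsPretransitive (G ≃g G) V] {ι : Type*} [Fintype ι] (f : hypercube ι →g G)
    (hf : ∀ u, Set.InjOn f ((hypercube ι).neighborSet u)) {K : Set V}
    (hK : Nat.card V < 2 * K.ncard) :
    ∃ x ∈ K, √(Fintype.card ι) ≤ ((K ∩ G.neighborSet x).ncard : ℝ) := by
  have : Finite (G ≃g G) := DFunLike.finite _
  obtain ⟨σ, hσ⟩ := exists_card_lt_two_mul_ncard (G ≃g G) f hK
  let g : hypercube ι →g G := σ.toHom.comp f
  have hg (u : ι → Bool) : Set.InjOn g ((hypercube ι).neighborSet u) :=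
    σ.injective.comp_injOn (hf u)
  have hmaj : 2 ^ Fintype.card ι < 2 * (g ⁻¹' K).ncard := by
    rwa [Nat.card_fun, Nat.card_eq_fintype_card, Nat.card_eq_fintype_card, Fintype.card_bool] at hσ
  obtain ⟨u, hu, hdeg⟩ := hypercube.exists_sqrt_card_le_ncard_inter_neighborSet hmaj
  exact ⟨g u, hu, hdeg.trans (mod_cast ncard_preimage_inter_neighborSet_le g (hg u) K)⟩

/-- Huang's lower bound for bipartite Cayley graphs containing a `d`-cube: if the
bipartite Cayley graph `G = Cay(Γ, C)` contains the hypercube `Q_d` as a subgraph,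
then every vertex set `K` with `2|K| > |Γ|` induces a subgraph with maximum degree
at least `√d`. -/
theorem stmt12 {Γ : Type*} [Group Γ] [Fintype Γ] (C : Set Γ)
    (hsym : ∀ c ∈ C, c⁻¹ ∈ C) (h1 : (1 : Γ) ∉ C)
    (G : SimpleGraph Γ) (hG : G = SimpleGraph.fromRel (fun x y => x⁻¹ * y ∈ C))
    (hbip : G.Colorable 2) (d : ℕ)
    (f : (Fin d → Bool) → Γ) (hinj : Function.Injective f)
    (hcube : ∀ u v : Fin d → Bool, hammingDist u v = 1 → G.Adj (f u) (f v)) :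
    ∀ K : Set Γ, 2 * K.ncard > Fintype.card Γ →
      ∃ x ∈ K, Real.sqrt d ≤ ((K ∩ G.neighborSet x).ncard : ℝ) := by
  intro K hK
  obtain rfl : G = SimpleGraph.mulCayley C := hG.trans (fromRel_inv_mul_mem C)
  simpa using stmt12_general _ (ι := Fin d) ⟨f, hcube _ _⟩ (fun _ ↦ hinj.injOn) (by simpa using hK)
end

section
/- Let i and j be even integers with i ≥ 4 and j ≥ 4. Then the Cartesian product C_i □ C_j of the cycles on i and on j vertices has a set S of vertices with 2·|S| > i·j such that the subgraph induced by S has maximum degree at most 2. -/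
/-!
Take a proper `±1`-colouring of `C_i □ C_j` and switch the two colours on a cross, the union of one
row and one column; let `S` be the colour class of `1` after the switch. An edge inside `S` has ends
of different original colours, so exactly one of its ends was switched: it leaves the cross. A
vertex off the cross sees only its two projections in it, and a vertex of the cross leaves it only
along the line perpendicular to its own, so degrees in `S` are at most `2`. All rows and columns of
an even torus have colour sum zero, so the colour sum over the cross is minus the colour of its
centre, where the row and the column overlap. Switching thus changes the colour sum of the torus
from `0` to twice the colour of the centre; when the centre has colour `1`, `2 |S| = i j + 2`.
-/

open Finset SimpleGraph

section Switching

variable {V : Type*}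

/-- The set of vertices coloured `1` after the signs of the `±1`-colouring `c` have been switched on
the vertex set `F`. -/
def switchedClass (c : V → ℤˣ) (F : Finset V) : Set V :=
  {v | c v = -1 ↔ v ∈ F}

theorem mem_switchedClass {c : V → ℤˣ} {F : Finset V} {v : V} :
    v ∈ switchedClass c F ↔ (c v = -1 ↔ v ∈ F) :=
  Iff.rfl

theorem two_mul_ncard_switchedClass [Fintype V] (c : V → ℤˣ) (F : Finset V) :
    (2 * (switchedClass c F).ncard : ℤ) =
      Fintype.card V + ∑ v, (c v : ℤ) - 2 * ∑ v ∈ F, (c v : ℤ) := by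
  classical
  have two_mul_indicator (v : V) : (2 * if c v = -1 ↔ v ∈ F then 1 else 0 : ℤ) =
      1 + c v - 2 * if v ∈ F then (c v : ℤ) else 0 := by
    rcases Int.units_eq_one_or (c v) with h | h <;> by_cases hv : v ∈ F <;> simp [h, hv]
  calc (2 * (switchedClass c F).ncard : ℤ)
      = ∑ v, (2 * if c v = -1 ↔ v ∈ F then 1 else 0 : ℤ) := by
        rw [switchedClass, Set.ncard_eq_toFinset_card', Set.toFinset_ofPred, ← mul_sum, sum_boole]
    _ = Fintype.card V + ∑ v, (c v : ℤ) - 2 * ∑ v ∈ F, (c v : ℤ) := by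
        simp [two_mul_indicator, sum_sub_distrib, sum_add_distrib, ← mul_sum]

theorem mem_iff_notMem_of_adj_of_mem_switchedClass {G : SimpleGraph V} (c : G.Coloring ℤˣ)
    {F : Finset V} {u v : V} (hu : u ∈ switchedClass c F) (hv : v ∈ switchedClass c F)
    (huv : G.Adj u v) : u ∈ F ↔ v ∉ F := by
  have hne : c u = -c v := Int.units_ne_iff_eq_neg.mp (c.valid huv)
  rw [mem_switchedClass] at hu hv
  rw [← hu, ← hv, hne, neg_inj, ← ne_eq, Int.units_ne_iff_eq_neg, neg_neg]

end Switching

section Cross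

variable {V W : Type*} {G : SimpleGraph V} {H : SimpleGraph W}

/-- The proper colouring of a box product by products of signs, normalised so that the vertex
`(a, b)` has colour `1`. -/
def boxProdColoring (c : G.Coloring ℤˣ) (d : H.Coloring ℤˣ) (a : V) (b : W) :
    (G □ H).Coloring ℤˣ :=
  Coloring.mk (fun p => c a * c p.1 * (d b * d p.2)) <| by
    rintro ⟨x, y⟩ ⟨x', y'⟩ (⟨hx, rfl : y = y'⟩ | ⟨hy, rfl : x = x'⟩)
    · simpa using c.valid hx
    · simpa using d.valid hy

theorem boxProdColoring_apply (c : G.Coloring ℤˣ) (d : H.Coloring ℤˣ) (a : V) (b : W)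
    (p : V × W) : boxProdColoring c d a b p = c a * c p.1 * (d b * d p.2) :=
  rfl

variable [Fintype V] [Fintype W] [DecidableEq V] [DecidableEq W]

/-- The union of the two lines `{a} × W` and `V × {b}` of a product, on which the colours of a box
product get switched. -/
def cross (a : V) (b : W) : Finset (V × W) :=
  {a} ×ˢ univ ∪ univ ×ˢ {b}

theorem mem_cross {a : V} {b : W} {p : V × W} : p ∈ cross a b ↔ p.1 = a ∨ p.2 = b := by
  simp only [cross, mem_union, mem_product, mem_singleton, mem_univ, and_true, true_and]

theorem sum_cross {M : Type*} [AddCommGroup M] (f : V × W → M) (a : V) (b : W) :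
    ∑ p ∈ cross a b, f p = ∑ y, f (a, y) + ∑ x, f (x, b) - f (a, b) := by
  have inter_lines : ({a} ×ˢ univ ∩ univ ×ˢ {b} : Finset (V × W)) = {(a, b)} := by
    rw [product_inter_product, inter_univ, univ_inter, singleton_product_singleton]
  have h := sum_union_inter (s₁ := {a} ×ˢ univ) (s₂ := univ ×ˢ {b}) (f := f)
  rw [inter_lines, sum_singleton, sum_product, sum_product_right, sum_singleton, sum_singleton] at h
  exact eq_sub_of_add_eq h

theorem neighborSet_boxProd_inter_cross_subset {a : V} {b : W} {p : V × W} (hp : p ∉ cross a b) :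
    (G □ H).neighborSet p ∩ cross a b ⊆ {(a, p.2), (p.1, b)} := by
  rintro q ⟨hadj, hq⟩
  rw [mem_coe, mem_cross] at hq
  rw [mem_cross, not_or] at hp
  obtain ⟨-, hsnd⟩ | ⟨-, hfst⟩ := hadj
  · exact .inl <| Prod.ext (hq.resolve_right (hsnd ▸ hp.2)) hsnd.symm
  · exact .inr <| Prod.ext hfst.symm (hq.resolve_left (hfst ▸ hp.1))

theorem neighborSet_boxProd_diff_cross_subset_left (a : V) (b y : W) :
    (G □ H).neighborSet (a, y) \ cross a b ⊆ (·, y) '' G.neighborSet a := by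
  rintro q ⟨hadj, hq⟩
  rw [mem_coe, mem_cross, not_or] at hq
  obtain ⟨hadj, hsnd⟩ | ⟨-, hfst⟩ := hadj
  · exact ⟨q.1, hadj, Prod.ext rfl hsnd⟩
  · exact absurd hfst.symm hq.1

theorem neighborSet_boxProd_diff_cross_subset_right (a x : V) (b : W) :
    (G □ H).neighborSet (x, b) \ cross a b ⊆ (x, ·) '' H.neighborSet b := by
  rintro q ⟨hadj, hq⟩
  rw [mem_coe, mem_cross, not_or] at hq
  obtain ⟨-, hsnd⟩ | ⟨hadj, hfst⟩ := hadj
  · exact absurd hsnd.symm hq.2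
  · exact ⟨q.2, hadj, Prod.ext hfst rfl⟩

theorem ncard_neighborSet_boxProd_inter_cross_le {a : V} {b : W} {p : V × W} (hp : p ∉ cross a b) :
    ((G □ H).neighborSet p ∩ cross a b).ncard ≤ 2 :=
  (Set.ncard_le_ncard (neighborSet_boxProd_inter_cross_subset hp)).trans <|
    (Set.ncard_insert_le _ _).trans_eq <| by rw [Set.ncard_singleton]

theorem ncard_neighborSet_boxProd_diff_cross_le {a : V} {b : W} {p : V × W} (hp : p ∈ cross a b) :
    ((G □ H).neighborSet p \ cross a b).ncard ≤
      max (G.neighborSet a).ncard (H.neighborSet b).ncard := by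
  obtain ⟨x, y⟩ := p
  obtain rfl | rfl : x = a ∨ y = b := mem_cross.mp hp
  · exact le_max_of_le_left <|
      (Set.ncard_le_ncard (neighborSet_boxProd_diff_cross_subset_left x b y)).trans
        Set.ncard_image_le
  · exact le_max_of_le_right <|
      (Set.ncard_le_ncard (neighborSet_boxProd_diff_cross_subset_right a x y)).trans
        Set.ncard_image_le

theorem ncard_switchedClass_cross_inter_neighborSet_le (c : (G □ H).Coloring ℤˣ) {a : V} {b : W}
    {p : V × W} (hp : p ∈ switchedClass c (cross a b)) :
    (switchedClass c (cross a b) ∩ (G □ H).neighborSet p).ncard ≤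
      max 2 (max (G.neighborSet a).ncard (H.neighborSet b).ncard) := by
  have switched_iff {q : V × W} (hq : q ∈ switchedClass c (cross a b))
      (hpq : (G □ H).Adj p q) : p ∈ cross a b ↔ q ∉ cross a b :=
    mem_iff_notMem_of_adj_of_mem_switchedClass c hp hq hpq
  by_cases hpF : p ∈ cross a b
  · have subset : switchedClass c (cross a b) ∩ (G □ H).neighborSet p ⊆
        (G □ H).neighborSet p \ cross a b :=
      fun q ⟨hq, hpq⟩ => ⟨hpq, (switched_iff hq hpq).mp hpF⟩
    exact le_max_of_le_right <|
      (Set.ncard_le_ncard subset).trans (ncard_neighborSet_boxProd_diff_cross_le hpF)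
  · have subset : switchedClass c (cross a b) ∩ (G □ H).neighborSet p ⊆
        (G □ H).neighborSet p ∩ cross a b :=
      fun q ⟨hq, hpq⟩ => ⟨hpq, not_not.mp fun hqF => hpF ((switched_iff hq hpq).mpr hqF)⟩
    exact le_max_of_le_left <|
      (Set.ncard_le_ncard subset).trans (ncard_neighborSet_boxProd_inter_cross_le hpF)

end Cross

section Cycle

/-- The proper colouring of an even cycle by alternating signs; it makes the colour sum of the cycle
vanish. -/
def alternatingColoring {n : ℕ} (hn : Even n) : (cycleGraph n).Coloring ℤˣ :=
  Coloring.mk (fun x => (-1) ^ x.val) fun {x y} hxy => by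
    have parity_ne : decide (x.val % 2 = 0) ≠ decide (y.val % 2 = 0) :=
      (cycleGraph.bicoloring_of_even n hn).valid hxy
    rw [ne_eq, decide_eq_decide, ← Nat.even_iff, ← Nat.even_iff] at parity_ne
    have neg_one_ne_one : (-1 : ℤˣ) ≠ 1 := by decide
    refine fun sign_eq => parity_ne ?_
    rw [← neg_one_pow_eq_one_iff_even neg_one_ne_one, sign_eq,
      neg_one_pow_eq_one_iff_even neg_one_ne_one]

theorem alternatingColoring_apply {n : ℕ} (hn : Even n) (x : Fin n) :
    alternatingColoring hn x = (-1) ^ x.val :=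
  rfl

theorem sum_alternatingColoring {n : ℕ} (hn : Even n) :
    ∑ x, (alternatingColoring hn x : ℤ) = 0 := by
  simpa [alternatingColoring_apply, hn] using Fin.sum_neg_one_pow ℤ n

theorem ncard_neighborSet_cycleGraph_le {n : ℕ} (x : Fin n) :
    ((cycleGraph n).neighborSet x).ncard ≤ 2 := by
  match n with
  | 0 => exact x.elim0
  | 1 => simp [cycleGraph_one_eq_bot]
  | n + 2 =>
    rw [cycleGraph_neighborSet]
    exact (Set.ncard_insert_le _ _).trans_eq <| by rw [Set.ncard_singleton]

end Cycle

theorem stmt13_general {V W : Type*} [Fintype V] [Fintype W] {G : SimpleGraph V}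
    {H : SimpleGraph W} (c : G.Coloring ℤˣ) (d : H.Coloring ℤˣ) (hc : ∑ x, (c x : ℤ) = 0)
    (hd : ∑ y, (d y : ℤ) = 0) (a : V) (b : W) :
    ∃ S : Set (V × W),
      2 * S.ncard = Fintype.card V * Fintype.card W + 2 ∧
      ∀ v ∈ S, (S ∩ (G □ H).neighborSet v).ncard ≤
        max 2 (max (G.neighborSet a).ncard (H.neighborSet b).ncard) := by
  classical
  let e := boxProdColoring c d a b
  have sum_eq_zero : ∑ p, (e p : ℤ) = 0 := by
    simp [e, boxProdColoring_apply, Fintype.sum_prod_type, ← mul_sum, hd]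
  have sum_cross_eq : ∑ p ∈ cross a b, (e p : ℤ) = -1 := by
    simp [sum_cross, e, boxProdColoring_apply, ← mul_sum, hc, hd]
  have two_mul_ncard := two_mul_ncard_switchedClass e (cross a b)
  rw [sum_eq_zero, sum_cross_eq, Fintype.card_prod] at two_mul_ncard
  exact ⟨switchedClass e (cross a b), by lia, fun v hv =>
    ncard_switchedClass_cross_inter_neighborSet_le e hv⟩

/-- For even `i, j ≥ 4`, the Cartesian product `C_i □ C_j` of cycles has a set of more
than half the vertices inducing a subgraph of maximum degree at most `2`. -/
theorem stmt13 (i j : ℕ) (hi : 4 ≤ i) (hj : 4 ≤ j) (hie : Even i) (hje : Even j) :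
    ∃ S : Set (Fin i × Fin j),
      2 * S.ncard > i * j ∧
      ∀ v ∈ S,
        (S ∩ ((SimpleGraph.cycleGraph i).boxProd (SimpleGraph.cycleGraph j)).neighborSet v).ncard
          ≤ 2 := by
  obtain ⟨S, hcard, hdeg⟩ := stmt13_general (alternatingColoring hie) (alternatingColoring hje)
    (sum_alternatingColoring hie) (sum_alternatingColoring hje) ⟨0, by lia⟩ ⟨0, by lia⟩
  simp only [Fintype.card_fin, ncard_neighborSet_cycleGraph_le, max_le, max_eq_left] at hcard hdeg
  exact ⟨S, by lia, hdeg⟩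
end

section
/- Let n ≥ 1 and let G = Cay(S_{n+1}, {(1 2), (2 3), …, (n n+1)}) be the Cayley graph of the symmetric group S_{n+1} with respect to the adjacent transpositions (the Cayley graph of the Coxeter group A_n). Then there exists a set K of permutations of {1,…,n+1} with |K| ≥ (n+1)!/2 + ⌈n/2⌉! such that the subgraph of G induced by K has maximum degree at most ⌈√⌈n/2⌉⌉. -/
/-!
Pair up the positions `0, 1`, then `2, 3`, and so on, and record for each permutation `π` the set
`ascents π` of pairs on which it is increasing: this maps `S_{n+1}` to the `⌈n/2⌉`-dimensional cube.
Exchanging two consecutive values changes this set only if they occupy one of the pairs, in which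
case a single coordinate flips. As in the Chung–Füredi–Graham–Seymour construction, place the
coordinates in a grid with at most `k = ⌈√⌈n/2⌉⌉` rows and columns and let `F` hold when some row
is full; at most `k` coordinates of any point are sensitive for `F`. The set `K` consists of the
permutations for which `sign π = ε` is equivalent to `F (ascents π)`. Edges reverse the sign, so
the neighbors of `π` inside `K` come from sensitive coordinates. For the size of `K`,
inclusion–exclusion over the full rows reduces the signed count of `{π | ¬ F (ascents π)}`, up to
sign, to that of `{π | ascents π = univ}`, and a sign-reversing involution leaves only the `⌈n/2⌉!`
even permutations that permute the pairs.
-/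

namespace PairedPerm

open Equiv Equiv.Perm Finset

section Sensitivity

variable {ι κ μ : Type*}

/-- The coordinates at which the Boolean function `F` is sensitive at `A`, a point of the cube
`{0, 1}^ι` being encoded as the set of its coordinates equal to `1`. -/
def sensitiveCoords [DecidableEq ι] (F : Finset ι → Prop) (A : Finset ι) : Set ι :=
  {i | ¬(F (symmDiff A {i}) ↔ F A)}

/-- The Boolean function "some row is full" on the cube `{0, 1}^ι`, where `r i` is the row of the
coordinate `i`. Only rows that contain a coordinate count. -/
def ContainsFiber (r : ι → κ) (A : Finset ι) : Prop :=
  ∃ i₀, ∀ i, r i = r i₀ → i ∈ A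

instance [Fintype ι] [DecidableEq ι] [DecidableEq κ] (r : ι → κ) :
    DecidablePred (ContainsFiber r) :=
  fun A => inferInstanceAs (Decidable (∃ i₀, ∀ i, r i = r i₀ → i ∈ A))

variable [DecidableEq ι] {r : ι → κ} {s : ι → μ} {A : Finset ι}

lemma mem_symmDiff_singleton_of_ne {i j : ι} (h : j ≠ i) : j ∈ symmDiff A {i} ↔ j ∈ A := by
  simp [mem_symmDiff, h]

lemma ncard_sensitiveCoords_le_of_containsFiber [Finite μ]
    (hrs : Function.Injective fun i => (r i, s i)) (hA : ContainsFiber r A) :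
    (sensitiveCoords (ContainsFiber r) A).ncard ≤ Nat.card μ := by
  obtain ⟨i₀, hfull⟩ := hA
  have mem_row : ∀ i ∈ sensitiveCoords (ContainsFiber r) A, r i = r i₀ := by
    intro i hi
    by_contra hne
    have hflip : ContainsFiber r (symmDiff A {i}) := by
      refine ⟨i₀, fun j hj => (mem_symmDiff_singleton_of_ne ?_).2 (hfull j hj)⟩
      rintro rfl
      exact hne hj
    exact hi (iff_of_true hflip ⟨i₀, hfull⟩)
  rw [← Set.ncard_univ]
  refine Set.ncard_le_ncard_of_injOn s (fun _ _ => Set.mem_univ _) fun i hi j hj hij => ?_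
  exact hrs (Prod.ext ((mem_row i hi).trans (mem_row j hj).symm) hij)

lemma ncard_sensitiveCoords_le_of_not_containsFiber [Finite κ] (hA : ¬ContainsFiber r A) :
    (sensitiveCoords (ContainsFiber r) A).ncard ≤ Nat.card κ := by
  have row_full_except :
      ∀ i ∈ sensitiveCoords (ContainsFiber r) A, ∀ j, r j = r i → j ≠ i → j ∈ A := by
    intro i hi
    obtain ⟨i₀, hfull⟩ : ContainsFiber r (symmDiff A {i}) := by
      simpa [sensitiveCoords, hA] using hi
    have hrow : r i = r i₀ := by
      by_contra hne
      refine hA ⟨i₀, fun j hj => (mem_symmDiff_singleton_of_ne ?_).1 (hfull j hj)⟩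
      rintro rfl
      exact hne hj
    exact fun j hj hji => (mem_symmDiff_singleton_of_ne hji).1 (hfull j (hj.trans hrow))
  rw [← Set.ncard_univ]
  refine Set.ncard_le_ncard_of_injOn r (fun _ _ => Set.mem_univ _) fun i hi j hj hij => ?_
  by_contra hne
  refine hA ⟨i, fun l hl => ?_⟩
  by_cases hli : l = i
  · exact row_full_except j hj l (hl.trans hij) (hli ▸ hne)
  · exact row_full_except i hi l hl hli

lemma ncard_sensitiveCoords_containsFiber_le [Finite κ] [Finite μ]
    (hrs : Function.Injective fun i => (r i, s i)) (A : Finset ι) :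
    (sensitiveCoords (ContainsFiber r) A).ncard ≤ max (Nat.card κ) (Nat.card μ) := by
  by_cases hA : ContainsFiber r A
  · exact (ncard_sensitiveCoords_le_of_containsFiber hrs hA).trans (le_max_right _ _)
  · exact (ncard_sensitiveCoords_le_of_not_containsFiber hA).trans (le_max_left _ _)

lemma sum_not_containsFiber {β R : Type*} [Fintype ι] [Fintype β] [DecidableEq κ] [Ring R]
    (r : ι → κ) (A : β → Finset ι) (w : β → R)
    (hw : ∀ S : Finset ι, S ≠ univ → ∑ x with S ⊆ A x, w x = 0) :
    ∑ x with ¬ContainsFiber r (A x), w x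
      = (-1) ^ #(univ.image r) * ∑ x with A x = univ, w x := by
  classical
  let fullOn (j : κ) : Finset β := {x | ∀ i, r i = j → i ∈ A x}
  have inf_fullOn (J : Finset κ) :
      J.inf fullOn = ({x | ({i | r i ∈ J} : Finset ι) ⊆ A x} : Finset β) := by
    ext x
    simp only [fullOn, mem_inf, mem_filter_univ, subset_iff]
    grind
  have inf_compl : ({x | ¬ContainsFiber r (A x)} : Finset β)
      = (univ.image r).inf fun j => (fullOn j)ᶜ := by
    ext x
    simp [fullOn, mem_inf, ContainsFiber]
  rw [inf_compl, inclusion_exclusion_sum_inf_compl, sum_eq_single (univ.image r)]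
  · simp [inf_fullOn, zsmul_eq_mul, univ_subset_iff]
  · intro J hJ hne
    rw [inf_fullOn, hw, smul_zero]
    intro hcover
    refine hne ((mem_powerset.1 hJ).antisymm (image_subset_iff.2 fun i _ => ?_))
    simpa using hcover.ge (mem_univ i)
  · exact fun h => absurd (mem_powerset_self _) h

end Sensitivity

section SignedCount

variable {α : Type*} [Fintype α] [DecidableEq α]

lemma sign_swap_mul_eq_iff {a b : α} (hab : a ≠ b) {π : Perm α} {ε : ℤˣ} :
    sign (swap a b * π) = ε ↔ sign π ≠ ε := by
  rw [Perm.sign_mul, sign_swap hab, neg_one_mul, neg_eq_iff_eq_neg, Int.units_ne_iff_eq_neg]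

lemma sum_sign_eq_zero_of_involutive {s : Finset (Perm α)} {f : Perm α → Perm α}
    (hf : Function.Involutive f) (hs : ∀ π ∈ s, f π ∈ s) (hsign : ∀ π, sign (f π) = -sign π) :
    ∑ π ∈ s, (sign π : ℤ) = 0 := by
  refine sum_involution (fun π _ => f π) (fun π _ => by simp [hsign]) (fun π _ _ hfix => ?_) hs
    fun π _ => hf π
  have := hsign π
  rw [hfix, ← Int.units_ne_iff_eq_neg] at this
  exact this rfl

lemma sum_sign_eq_zero [Nontrivial α] : ∑ π : Perm α, (sign π : ℤ) = 0 := by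
  obtain ⟨a, b, hab⟩ := exists_pair_ne α
  exact sum_sign_eq_zero_of_involutive (f := (swap a b * ·)) (fun π => by simp)
    (fun _ _ => mem_univ _) fun π => by simp [sign_swap hab]

lemma two_mul_card_sign_eq_iff [Nontrivial α] (P : Perm α → Prop) [DecidablePred P] (ε : ℤˣ) :
    2 * (#{π : Perm α | sign π = ε ↔ P π} : ℤ)
      = (Fintype.card α).factorial - 2 * ε * ∑ π with ¬P π, (sign π : ℤ) := by
  have pointwise (π : Perm α) : 2 * (if sign π = ε ↔ P π then 1 else 0 : ℤ)
      = 1 + ε * sign π - 2 * ε * if ¬P π then (sign π : ℤ) else 0 := by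
    rcases Int.units_eq_one_or (sign π) with hπ | hπ <;>
      rcases Int.units_eq_one_or ε with rfl | rfl <;> by_cases hP : P π <;> simp [hπ, hP]
  calc 2 * (#{π : Perm α | sign π = ε ↔ P π} : ℤ)
      = ∑ π : Perm α, (1 + ε * sign π - 2 * ε * if ¬P π then (sign π : ℤ) else 0) := by
        simp only [← pointwise, ← mul_sum, sum_boole]
    _ = (Fintype.card α).factorial - 2 * ε * ∑ π with ¬P π, (sign π : ℤ) := by
        rw [sum_sub_distrib, sum_add_distrib, ← mul_sum, ← mul_sum, sum_sign_eq_zero, sum_filter]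
        simp [Fintype.card_perm]

end SignedCount

section Pairs

variable {α ι : Type*} (e : ι × Bool ↪ α)

/-- The `i`-th of the disjoint pairs of points of `α` listed by `e`. -/
def pair (i : ι) : Sym2 α := s(e (i, false), e (i, true))

/-- The transposition of the two points of the `i`-th pair. -/
def pairSwap [DecidableEq α] (i : ι) : Perm α := swap (e (i, false)) (e (i, true))

/-- The permutation of `α` that moves the pairs as `ρ` moves their indices, keeping the order within
each pair and fixing the points outside the pairs. -/
noncomputable def pairPerm (ρ : Perm ι) : Perm α :=
  viaEmbedding (prodCongrLeft fun _ : Bool => ρ) e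

/-- The pairs that are the image under `π` of some pair. -/
def preservedPairs [Fintype ι] [DecidableEq α] (π : Perm α) : Finset ι :=
  {j | ∃ i, (pair e i).map π = pair e j}

/-- The pairs on which `π` is increasing, viewed as a point of the cube `{0, 1}^ι`. -/
def ascents [Fintype ι] [LinearOrder α] (π : Perm α) : Finset ι :=
  {i | π (e (i, false)) < π (e (i, true))}

lemma mem_preservedPairs [Fintype ι] [DecidableEq α] {π : Perm α} {j : ι} :
    j ∈ preservedPairs e π ↔ ∃ i, (pair e i).map π = pair e j := by
  simp [preservedPairs]

lemma pair_injective : Function.Injective (pair e) := by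
  intro i j hij
  have : e (i, false) ∈ pair e j := hij ▸ Sym2.mem_mk_left _ _
  simpa [pair] using this

lemma pairPerm_apply (ρ : Perm ι) (i : ι) (b : Bool) : pairPerm e ρ (e (i, b)) = e (ρ i, b) :=
  viaEmbedding_apply _ e (i, b)

lemma pairPerm_injective : Function.Injective (pairPerm e) := by
  intro ρ ρ' h
  ext i
  simpa [pairPerm_apply] using DFunLike.congr_fun h (e (i, false))

lemma sign_pairPerm [Finite ι] [Fintype α] [DecidableEq α] (ρ : Perm ι) :
    sign (pairPerm e ρ) = 1 := by
  classical
  cases nonempty_fintype ι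
  simp [pairPerm, viaEmbedding, sign_extendDomain, sign_prodCongrLeft]

lemma preservedPairs_pairPerm [Fintype ι] [DecidableEq α] (ρ : Perm ι) :
    preservedPairs e (pairPerm e ρ) = univ :=
  eq_univ_of_forall fun j =>
    (mem_preservedPairs e).2 ⟨ρ.symm j, by simp [pair, pairPerm_apply]⟩

section Swap

variable [DecidableEq α]

lemma sign_pairSwap [Fintype α] (i : ι) : sign (pairSwap e i) = -1 :=
  sign_swap (by simp)

lemma pairSwap_apply_of_ne {i j : ι} (hij : i ≠ j) (b : Bool) :
    pairSwap e j (e (i, b)) = e (i, b) :=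
  swap_apply_of_ne_of_ne (by simp [hij]) (by simp [hij])

lemma pair_map_pairSwap (i j : ι) : (pair e i).map (pairSwap e j) = pair e i := by
  by_cases hij : i = j
  · simp [hij, pair, pairSwap, Sym2.eq_swap]
  · simp [pair, pairSwap_apply_of_ne e hij]

lemma swap_mul_eq_mul_pairSwap {π : Perm α} {a b : α} {i : ι} (h : (pair e i).map π = s(a, b)) :
    swap a b * π = π * pairSwap e i := by
  rw [pairSwap, mul_swap_eq_swap_mul]
  rcases Sym2.eq_iff.1 h with ⟨rfl, rfl⟩ | ⟨rfl, rfl⟩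
  · rfl
  · rw [swap_comm]

lemma preservedPairs_pairSwap_mul [Fintype ι] (π : Perm α) (j : ι) :
    preservedPairs e (pairSwap e j * π) = preservedPairs e π := by
  have map_eq_iff (i i' : ι) :
      (pair e i).map (pairSwap e j * π) = pair e i' ↔ (pair e i).map π = pair e i' := by
    rw [coe_mul, ← Sym2.map_map]
    nth_rw 1 [← pair_map_pairSwap e i' j]
    exact (Sym2.map.injective (pairSwap e j).injective).eq_iff
  simp only [preservedPairs, map_eq_iff]

end Swap

lemma eq_viaEmbedding_of_apply_eq {γ : Type*} {f : γ ↪ α} (hf : (Set.range f)ᶜ.Subsingleton)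
    {σ : Perm α} {τ : Perm γ} (h : ∀ x, σ (f x) = f (τ x)) : σ = τ.viaEmbedding f := by
  ext y
  by_cases hy : y ∈ Set.range f
  · obtain ⟨x, rfl⟩ := hy
    rw [h, viaEmbedding_apply]
  · have hσy : σ y ∉ Set.range f := by
      rintro ⟨x, hx⟩
      refine hy ⟨τ.symm x, σ.injective ?_⟩
      rw [h, apply_symm_apply, hx]
    rw [viaEmbedding_apply_of_notMem _ _ _ hy]
    exact hf hσy hy

section Ascents

variable [LinearOrder α]

lemma swap_lt_swap_iff_of_covBy {a b x y : α} (hab : a ⋖ b) (hxy : s(x, y) ≠ s(a, b)) :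
    swap a b x < swap a b y ↔ x < y := by
  have := hab.lt
  have : ∀ z, a < z → b ≤ z := fun z => hab.ge_of_gt
  have : ∀ z, z < b → z ≤ a := fun z => hab.le_of_lt
  simp only [ne_eq, Sym2.eq_iff, swap_apply_def] at *
  grind

variable [Fintype ι]

lemma mem_ascents {π : Perm α} {i : ι} :
    i ∈ ascents e π ↔ π (e (i, false)) < π (e (i, true)) := by
  simp [ascents]

lemma ascents_swap_mul_of_forall_ne {π : Perm α} {a b : α} (hab : a ⋖ b)
    (hne : ∀ i, (pair e i).map π ≠ s(a, b)) : ascents e (swap a b * π) = ascents e π := by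
  ext i
  simpa [mem_ascents] using swap_lt_swap_iff_of_covBy hab (hne i)

lemma ascents_mul_pairSwap [DecidableEq ι] (π : Perm α) (i : ι) :
    ascents e (π * pairSwap e i) = symmDiff (ascents e π) {i} := by
  ext j
  by_cases hji : j = i
  · subst hji
    have : π (e (j, false)) ≠ π (e (j, true)) := by simp
    simpa [mem_ascents, pairSwap, mem_symmDiff] using this.symm.le_iff_lt.symm
  · rw [mem_symmDiff_singleton_of_ne hji]
    simp [mem_ascents, pairSwap_apply_of_ne e hji]

lemma ncard_swap_mul_le_ncard_sensitiveCoords [DecidableEq ι] (F : Finset ι → Prop) (π : Perm α) :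
    {τ | (∃ a b, a ⋖ b ∧ τ = swap a b * π) ∧ ¬(F (ascents e τ) ↔ F (ascents e π))}.ncard
      ≤ (sensitiveCoords F (ascents e π)).ncard := by
  refine (Set.ncard_le_ncard ?_ (Set.toFinite _)).trans
    (Set.ncard_image_le (f := fun i => π * pairSwap e i) (Set.toFinite _))
  rintro _ ⟨⟨a, b, hab, rfl⟩, hF⟩
  obtain ⟨i, hi⟩ : ∃ i, (pair e i).map π = s(a, b) := by
    by_contra! hne
    exact hF (by rw [ascents_swap_mul_of_forall_ne e hab hne])
  rw [swap_mul_eq_mul_pairSwap e hi, ascents_mul_pairSwap] at hF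
  exact ⟨i, hF, (swap_mul_eq_mul_pairSwap e hi).symm⟩

variable {e}

lemma ascents_pairSwap_mul {π : Perm α} {j : ι} (he : ∀ i, e (i, false) ⋖ e (i, true))
    (hj : j ∉ preservedPairs e π) : ascents e (pairSwap e j * π) = ascents e π :=
  ascents_swap_mul_of_forall_ne e (he j) fun i hi =>
    hj ((mem_preservedPairs e).2 ⟨i, hi⟩)

lemma ascents_pairPerm (he : ∀ i, e (i, false) < e (i, true)) (ρ : Perm ι) :
    ascents e (pairPerm e ρ) = univ :=
  eq_univ_of_forall fun i => by simp [mem_ascents, pairPerm_apply, he]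

lemma apply_eq_of_mem_ascents {π : Perm α} {i j : ι} (he : e (j, false) < e (j, true))
    (hi : i ∈ ascents e π) (hij : (pair e i).map π = pair e j) (b : Bool) :
    π (e (i, b)) = e (j, b) := by
  have hlt : π (e (i, false)) < π (e (i, true)) := (mem_ascents e).1 hi
  rcases Sym2.eq_iff.1 hij with ⟨h₀, h₁⟩ | ⟨h₀, h₁⟩
  · cases b <;> assumption
  · exact absurd (h₀ ▸ h₁ ▸ hlt) he.not_gt

lemma exists_pairPerm_eq {π : Perm α} (he : ∀ i, e (i, false) < e (i, true))
    (hrange : (Set.range e)ᶜ.Subsingleton) (hasc : ascents e π = univ)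
    (hpres : preservedPairs e π = univ) : ∃ ρ, pairPerm e ρ = π := by
  have hpre (j : ι) : ∃ i, (pair e i).map π = pair e j :=
    (mem_preservedPairs e).1 (hpres ▸ mem_univ j)
  choose p hp using hpre
  have hpinj : Function.Injective p := fun i j hij =>
    pair_injective e ((hp i).symm.trans (hij ▸ hp j))
  let q : Perm ι := .ofBijective p (Finite.injective_iff_bijective.1 hpinj)
  refine ⟨q.symm, (eq_viaEmbedding_of_apply_eq hrange ?_).symm⟩
  rintro ⟨i, b⟩
  obtain ⟨j, rfl⟩ := q.surjective i
  rw [prodCongrLeft_apply, symm_apply_apply]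
  exact apply_eq_of_mem_ascents (he j) (hasc ▸ mem_univ (p j)) (hp j) b

variable [Fintype α] [DecidableEq ι]

lemma sum_sign_subset_ascents_eq_zero {S : Finset ι} (hS : S ≠ univ) :
    ∑ π with S ⊆ ascents e π, (sign π : ℤ) = 0 := by
  obtain ⟨i, hi⟩ : ∃ i, i ∉ S := by simpa [eq_univ_iff_forall] using hS
  refine sum_sign_eq_zero_of_involutive (f := (· * pairSwap e i))
    (fun π => by simp [pairSwap, mul_assoc]) (fun π hπ => ?_) fun π => by simp [sign_pairSwap]
  rw [mem_filter_univ] at hπ ⊢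
  intro j hj
  rw [ascents_mul_pairSwap, mem_symmDiff_singleton_of_ne (ne_of_mem_of_not_mem hj hi)]
  exact hπ hj

lemma sum_sign_preservedPairs_eq_zero {B : Finset ι} (he : ∀ i, e (i, false) ⋖ e (i, true))
    (hB : B ≠ univ) :
    ∑ π with ascents e π = univ ∧ preservedPairs e π = B, (sign π : ℤ) = 0 := by
  obtain ⟨j, hj⟩ : ∃ j, j ∉ B := by simpa [eq_univ_iff_forall] using hB
  refine sum_sign_eq_zero_of_involutive (f := (pairSwap e j * ·))
    (fun π => by simp [pairSwap]) (fun π hπ => ?_) fun π => by simp [sign_pairSwap]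
  rw [mem_filter_univ] at hπ ⊢
  obtain ⟨hasc, rfl⟩ := hπ
  exact ⟨(ascents_pairSwap_mul he hj).trans hasc, preservedPairs_pairSwap_mul e π j⟩

lemma sum_sign_ascents_eq_univ (he : ∀ i, e (i, false) ⋖ e (i, true))
    (hrange : (Set.range e)ᶜ.Subsingleton) :
    ∑ π with ascents e π = univ, (sign π : ℤ) = (Fintype.card ι).factorial := by
  have eq_image : ({π | ascents e π = univ ∧ preservedPairs e π = univ} : Finset (Perm α))
      = univ.image (pairPerm e) := by
    ext π
    simp only [mem_filter_univ, mem_image, mem_univ, true_and]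
    refine ⟨fun h => exists_pairPerm_eq (fun i => (he i).lt) hrange h.1 h.2, ?_⟩
    rintro ⟨ρ, rfl⟩
    exact ⟨ascents_pairPerm (fun i => (he i).lt) ρ, preservedPairs_pairPerm e ρ⟩
  calc ∑ π with ascents e π = univ, (sign π : ℤ)
      = ∑ B, ∑ π with ascents e π = univ ∧ preservedPairs e π = B, (sign π : ℤ) := by
        simp only [← filter_filter, sum_fiberwise]
    _ = ∑ π with ascents e π = univ ∧ preservedPairs e π = univ, (sign π : ℤ) :=
        Fintype.sum_eq_single _ fun B hB => sum_sign_preservedPairs_eq_zero he hB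
    _ = (Fintype.card ι).factorial := by
        rw [eq_image, sum_image (pairPerm_injective e).injOn]
        simp [sign_pairPerm, Fintype.card_perm]

end Ascents

theorem exists_le_ncard_and_ncard_swap_mul_le [LinearOrder α] [Fintype α] [Nontrivial α] [Fintype ι]
    {κ μ : Type*} [Finite κ] [Finite μ] {e : ι × Bool ↪ α}
    (he : ∀ i, e (i, false) ⋖ e (i, true)) (hrange : (Set.range e)ᶜ.Subsingleton)
    {r : ι → κ} {s : ι → μ} (hrs : Function.Injective fun i => (r i, s i)) :
    ∃ K : Set (Perm α),
      (Fintype.card α).factorial / 2 + (Fintype.card ι).factorial ≤ K.ncard ∧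
      ∀ π ∈ K, {τ ∈ K | ∃ a b, a ⋖ b ∧ τ = swap a b * π}.ncard
        ≤ max (Nat.card κ) (Nat.card μ) := by
  classical
  let F : Finset ι → Prop := ContainsFiber r
  -- The signed count below is `(-1) ^ #(univ.image r) * (card ι)!`, and `ε` has the opposite sign.
  let ε : ℤˣ := -(-1) ^ #(univ.image r)
  refine ⟨{π | sign π = ε ↔ F (ascents e π)}, ?_, fun π hπ => ?_⟩
  · have hcard := two_mul_card_sign_eq_iff (fun π => F (ascents e π)) ε
    rw [sum_not_containsFiber r _ _ fun S => sum_sign_subset_ascents_eq_zero,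
      sum_sign_ascents_eq_univ he hrange] at hcard
    have hε : (ε : ℤ) * (-1) ^ #(univ.image r) = -1 := by simp [ε, ← mul_pow]
    rw [mul_assoc, ← mul_assoc (ε : ℤ), hε] at hcard
    rw [← coe_filter_univ, Set.ncard_coe_finset]
    omega
  · refine (Set.ncard_le_ncard ?_ (Set.toFinite _)).trans
      ((ncard_swap_mul_le_ncard_sensitiveCoords e F π).trans
        (ncard_sensitiveCoords_containsFiber_le hrs _))
    rintro τ ⟨hτ, a, b, hab, rfl⟩
    refine ⟨⟨a, b, hab, rfl⟩, fun hF => ?_⟩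
    have hsign : sign (swap a b * π) = ε ↔ sign π = ε := hτ.trans (hF.trans hπ.symm)
    exact not_iff_self ((sign_swap_mul_eq_iff hab.ne).symm.trans hsign)

end Pairs

section Fin

/-- The pairs `{0, 1}, {2, 3}, …` of consecutive elements of `Fin N`. -/
def consecutivePairs (N : ℕ) : Fin (N / 2) × Bool ↪ Fin N where
  toFun p := ⟨2 * p.1 + p.2.toNat, by have := p.2.toNat_le; omega⟩
  inj' := by
    rintro ⟨i, b⟩ ⟨j, c⟩ h
    cases b <;> cases c <;> grind

lemma val_consecutivePairs (N : ℕ) (p : Fin (N / 2) × Bool) :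
    (consecutivePairs N p : ℕ) = 2 * p.1 + p.2.toNat :=
  rfl

lemma consecutivePairs_covBy (N : ℕ) (i : Fin (N / 2)) :
    consecutivePairs N (i, false) ⋖ consecutivePairs N (i, true) := by
  simp [val_consecutivePairs]

lemma subsingleton_compl_range_consecutivePairs (N : ℕ) :
    (Set.range (consecutivePairs N))ᶜ.Subsingleton := by
  have eq_last : ∀ x ∉ Set.range (consecutivePairs N), x.val = 2 * (N / 2) := by
    intro x hx
    by_contra hne
    refine hx ⟨(⟨x / 2, by omega⟩, decide (x.val % 2 = 1)), Fin.ext ?_⟩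
    rcases Nat.mod_two_eq_zero_or_one x with h | h <;> simp [val_consecutivePairs, h] <;> omega
  exact fun x hx y hy => Fin.ext ((eq_last x hx).trans (eq_last y hy).symm)

lemma exists_grid_coordinates {m k : ℕ} (hmk : m ≤ k * k) :
    ∃ r s : Fin m → Fin k, Function.Injective fun i => (r i, s i) :=
  let g := (Fin.castLEEmb hmk).trans finProdFinEquiv.symm.toEmbedding
  ⟨fun i => (g i).1, fun i => (g i).2, g.injective⟩

lemma le_ceil_sqrt_mul_self (m : ℕ) : m ≤ ⌈√(m : ℝ)⌉₊ * ⌈√(m : ℝ)⌉₊ := by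
  have h : (m : ℝ) ≤ (⌈√(m : ℝ)⌉₊ : ℝ) ^ 2 := Real.sqrt_le_left (by positivity) |>.1 (Nat.le_ceil _)
  rw [← sq]
  exact_mod_cast h

lemma exists_covBy_of_adj {n : ℕ} {π τ : Perm (Fin (n + 1))}
    (h : (SimpleGraph.fromRel
      fun π τ : Perm (Fin (n + 1)) => ∃ k : Fin n, τ = swap k.castSucc k.succ * π).Adj π τ) :
    ∃ a b, a ⋖ b ∧ τ = swap a b * π := by
  obtain ⟨-, ⟨k, hk⟩ | ⟨k, hk⟩⟩ := h <;> refine ⟨k.castSucc, k.succ, by simp, ?_⟩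
  · exact hk
  · rw [hk, swap_mul_self_mul]

end Fin

end PairedPerm

/-- The Cayley graph of `S_{n+1}` with respect to the adjacent transpositions (the
Coxeter group of type `A_n`) has an induced subgraph on at least
`(n+1)!/2 + ⌈n/2⌉!` vertices of maximum degree at most `⌈√⌈n/2⌉⌉`.
Here `⌈n/2⌉ = (n+1)/2` in natural-number arithmetic, and the neighbors of `π` are the
products `(k k+1) * π` (the paper's `π·(k k+1)`). -/
theorem stmt14 (n : ℕ) (hn : 1 ≤ n)
    (G : SimpleGraph (Equiv.Perm (Fin (n + 1))))
    (hG : G = SimpleGraph.fromRel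
      (fun π τ => ∃ k : Fin n, τ = Equiv.swap k.castSucc k.succ * π)) :
    ∃ K : Set (Equiv.Perm (Fin (n + 1))),
      Nat.factorial (n + 1) / 2 + Nat.factorial ((n + 1) / 2) ≤ K.ncard ∧
      ∀ π ∈ K, (K ∩ G.neighborSet π).ncard ≤ ⌈Real.sqrt (((n + 1) / 2 : ℕ) : ℝ)⌉₊ := by
  subst hG
  have : Nontrivial (Fin (n + 1)) := Fin.nontrivial_iff_two_le.2 (by omega)
  obtain ⟨r, s, hrs⟩ := PairedPerm.exists_grid_coordinates
    (PairedPerm.le_ceil_sqrt_mul_self ((n + 1) / 2))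
  obtain ⟨K, hcard, hdeg⟩ := PairedPerm.exists_le_ncard_and_ncard_swap_mul_le
    (PairedPerm.consecutivePairs_covBy (n + 1))
    (PairedPerm.subsingleton_compl_range_consecutivePairs (n + 1)) hrs
  refine ⟨K, by simpa using hcard, fun π hπ => ?_⟩
  calc _ ≤ {τ ∈ K | ∃ a b, a ⋖ b ∧ τ = Equiv.swap a b * π}.ncard :=
        Set.ncard_le_ncard (fun τ hτ => ⟨hτ.1, PairedPerm.exists_covBy_of_adj hτ.2⟩)
          (Set.toFinite _)
    _ ≤ _ := by simpa using hdeg π hπ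
end

section
/- Let V be a finite set with |V| = n, and let A be a symmetric real matrix indexed by V with all entries in {0,1} (diagonal entries, i.e., loops, allowed) such that every row of A sums to d. Let λ ≥ 0 and suppose that for every vector v ∈ ℝ^V orthogonal to the all-ones vector, ‖A v‖ ≤ λ·‖v‖. Then for every partition of V into disjoint nonempty sets S and T with S ∪ T = V, the number of ordered edges between S and T satisfies e(S,T) = Σ_{s ∈ S, t ∈ T} A_{s,t} ≥ (d − λ)·|S|·|T|/n. -/
/-!
Write the indicator of `S` as `f = c + (|S| / n) • 1` with `c` orthogonal to the all-ones vector.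
As `A` acts on the all-ones vector from either side as the scalar `d`, the cross terms of the
quadratic form disappear and `fᵀ A f = cᵀ A c + d |S|² / n`; the same identity for the identity
matrix gives `‖c‖² = |S| - |S|² / n`. The spectral bound `cᵀ A c ≤ λ ‖c‖²` is thus an upper bound
on `e(S, S) = fᵀ A f`, hence a lower bound on `e(S, T) = d |S| - e(S, S)`.
-/

open Finset Matrix

lemma sum_indicator_one {n R : Type*} [Fintype n] [AddCommMonoidWithOne R] (S : Finset n) :
    ∑ x, (S : Set n).indicator (1 : n → R) x = #S := by
  rw [sum_indicator_subset 1 S.subset_univ]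
  simp only [Pi.one_apply, sum_const, nsmul_one]

section Indicator

variable {m n R : Type*} [Fintype m] [Fintype n] [NonAssocSemiring R]

lemma indicator_one_dotProduct (S : Finset n) (f : n → R) :
    (S : Set n).indicator 1 ⬝ᵥ f = ∑ x ∈ S, f x := by
  rw [← sum_indicator_subset f S.subset_univ]
  simp only [dotProduct, ← Set.indicator_mul_left, Pi.one_apply, one_mul]

lemma indicator_one_dotProduct_self (S : Finset n) :
    (S : Set n).indicator (1 : n → R) ⬝ᵥ (S : Set n).indicator 1 = #S := by
  rw [indicator_one_dotProduct, sum_indicator_subset 1 Subset.rfl]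
  simp only [Pi.one_apply, sum_const, nsmul_one]

lemma dotProduct_indicator_one (f : n → R) (S : Finset n) :
    f ⬝ᵥ (S : Set n).indicator 1 = ∑ x ∈ S, f x := by
  rw [← sum_indicator_subset f S.subset_univ]
  simp only [dotProduct, ← Set.indicator_mul_right, Pi.one_apply, mul_one]

lemma indicator_one_dotProduct_mulVec_indicator_one (A : Matrix m n R) (S : Finset m)
    (T : Finset n) :
    (S : Set m).indicator 1 ⬝ᵥ A *ᵥ (T : Set n).indicator 1 = ∑ s ∈ S, ∑ t ∈ T, A s t := by
  rw [indicator_one_dotProduct]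
  exact sum_congr rfl fun s _ ↦ dotProduct_indicator_one (A s) T

end Indicator

lemma sum_sum_compl_eq_sub {V R : Type*} [Fintype V] [DecidableEq V] [NonAssocRing R]
    {A : Matrix V V R} {d : R} (hrow : ∀ u, ∑ v, A u v = d) (S : Finset V) :
    ∑ s ∈ S, ∑ t ∈ Sᶜ, A s t = #S * d - ∑ s ∈ S, ∑ t ∈ S, A s t := by
  rw [eq_sub_iff_add_eq, ← sum_add_distrib]
  simp only [sum_compl_add_sum, hrow, sum_const, nsmul_eq_mul]

lemma dotProduct_mulVec_sub_smul_one {V R : Type*} [Fintype V] [CommRing R]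
    {A : Matrix V V R} {d : R} (hrow : ∀ u, ∑ v, A u v = d) (hcol : ∀ v, ∑ u, A u v = d)
    (f : V → R) (c : R) :
    (f - c • 1) ⬝ᵥ A *ᵥ (f - c • 1) =
      f ⬝ᵥ A *ᵥ f - 2 * c * d * ∑ x, f x + c ^ 2 * d * Fintype.card V := by
  have mulVec_one_eq : A *ᵥ 1 = d • 1 := by
    ext u
    simp [mulVec, dotProduct_one, hrow]
  have one_vecMul_eq : 1 ᵥ* A = d • 1 := by
    ext v
    simp [vecMul, one_dotProduct, hcol]
  have one_dotProduct_mulVec : 1 ⬝ᵥ A *ᵥ f = d * ∑ x, f x := by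
    rw [dotProduct_mulVec, one_vecMul_eq, smul_dotProduct, one_dotProduct, smul_eq_mul]
  simp only [mulVec_sub, mulVec_smul, mulVec_one_eq, sub_dotProduct, dotProduct_sub,
    smul_dotProduct, dotProduct_smul, one_dotProduct_mulVec, smul_eq_mul]
  rw [dotProduct_one, one_dotProduct_one]
  ring

section Centered

variable {V K : Type*} [Fintype V] [Field K]

/-- The component of `f` orthogonal to the all-ones vector, obtained by subtracting the mean of `f`.
The mean, a quotient by `|V|` in `K`, is meaningful only if `|V| ≠ 0` in `K`. -/
def centered (f : V → K) : V → K :=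
  f - ((∑ x, f x) / Fintype.card V) • 1

lemma sum_centered (hV : (Fintype.card V : K) ≠ 0) (f : V → K) : ∑ x, centered f x = 0 := by
  simp [centered, mul_div_cancel₀ _ hV]

lemma centered_dotProduct_mulVec_centered (hV : (Fintype.card V : K) ≠ 0)
    {A : Matrix V V K} {d : K} (hrow : ∀ u, ∑ v, A u v = d) (hcol : ∀ v, ∑ u, A u v = d)
    (f : V → K) :
    centered f ⬝ᵥ A *ᵥ centered f = f ⬝ᵥ A *ᵥ f - d * (∑ x, f x) ^ 2 / Fintype.card V := by
  rw [centered, dotProduct_mulVec_sub_smul_one hrow hcol]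
  field_simp
  ring

lemma centered_dotProduct_centered (hV : (Fintype.card V : K) ≠ 0) (f : V → K) :
    centered f ⬝ᵥ centered f = f ⬝ᵥ f - (∑ x, f x) ^ 2 / Fintype.card V := by
  classical
  simpa using centered_dotProduct_mulVec_centered hV (A := 1) (d := 1)
    (by simp [one_apply]) (by simp [one_apply]) f

end Centered

lemma dotProduct_le_mul_dotProduct_self_of_sqrt_le {ι : Type*} [Fintype ι] {v w : ι → ℝ} {c : ℝ}
    (h : √(∑ x, w x ^ 2) ≤ c * √(∑ x, v x ^ 2)) : v ⬝ᵥ w ≤ c * (v ⬝ᵥ v) :=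
  calc v ⬝ᵥ w
      ≤ √(∑ x, v x ^ 2) * √(∑ x, w x ^ 2) := Real.sum_mul_le_sqrt_mul_sqrt univ v w
    _ ≤ √(∑ x, v x ^ 2) * (c * √(∑ x, v x ^ 2)) := by gcongr
    _ = c * √(∑ x, v x ^ 2) ^ 2 := by ring
    _ = c * (v ⬝ᵥ v) := by
        rw [Real.sq_sqrt (sum_nonneg fun x _ ↦ sq_nonneg (v x))]
        simp only [dotProduct, sq]

section SpectralGap

variable {V K : Type*} [Fintype V] [Nonempty V] [Field K] [LinearOrder K] [IsStrictOrderedRing K]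
  {A : Matrix V V K} {d lam : K}

lemma dotProduct_mulVec_le_of_forall_sum_eq_zero
    (hrow : ∀ u, ∑ v, A u v = d) (hcol : ∀ v, ∑ u, A u v = d)
    (hlam : ∀ v : V → K, ∑ x, v x = 0 → v ⬝ᵥ A *ᵥ v ≤ lam * (v ⬝ᵥ v)) (f : V → K) :
    f ⬝ᵥ A *ᵥ f ≤ lam * (f ⬝ᵥ f) + (d - lam) * (∑ x, f x) ^ 2 / Fintype.card V := by
  have hV : (Fintype.card V : K) ≠ 0 := Nat.cast_ne_zero.2 Fintype.card_ne_zero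
  have hf := hlam (centered f) (sum_centered hV f)
  rw [centered_dotProduct_mulVec_centered hV hrow hcol, centered_dotProduct_centered hV] at hf
  linear_combination hf

lemma sum_sum_le_of_forall_sum_eq_zero
    (hrow : ∀ u, ∑ v, A u v = d) (hcol : ∀ v, ∑ u, A u v = d)
    (hlam : ∀ v : V → K, ∑ x, v x = 0 → v ⬝ᵥ A *ᵥ v ≤ lam * (v ⬝ᵥ v)) (S : Finset V) :
    ∑ s ∈ S, ∑ t ∈ S, A s t ≤ lam * #S + (d - lam) * #S ^ 2 / Fintype.card V := by
  have hS := dotProduct_mulVec_le_of_forall_sum_eq_zero hrow hcol hlam ((S : Set V).indicator 1)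
  rwa [indicator_one_dotProduct_mulVec_indicator_one, indicator_one_dotProduct_self,
    sum_indicator_one] at hS

theorem stmt15_general
    (hrow : ∀ u, ∑ v, A u v = d) (hcol : ∀ v, ∑ u, A u v = d)
    (hlam : ∀ v : V → K, ∑ x, v x = 0 → v ⬝ᵥ A *ᵥ v ≤ lam * (v ⬝ᵥ v))
    {S T : Finset V} (hST : IsCompl S T) :
    (d - lam) * #S * #T / Fintype.card V ≤ ∑ s ∈ S, ∑ t ∈ T, A s t := by
  classical
  obtain rfl := hST.compl_eq
  have hV : (Fintype.card V : K) ≠ 0 := Nat.cast_ne_zero.2 Fintype.card_ne_zero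
  have card_compl : (#Sᶜ : K) = Fintype.card V - #S := by
    rw [card_compl, Nat.cast_sub S.card_le_univ]
  calc (d - lam) * #S * #Sᶜ / Fintype.card V
      = #S * d - (lam * #S + (d - lam) * #S ^ 2 / Fintype.card V) := by
        rw [card_compl]
        field_simp
        ring
    _ ≤ #S * d - ∑ s ∈ S, ∑ t ∈ S, A s t :=
        sub_le_sub_left (sum_sum_le_of_forall_sum_eq_zero hrow hcol hlam S) _
    _ = ∑ s ∈ S, ∑ t ∈ Sᶜ, A s t := (sum_sum_compl_eq_sub hrow S).symm

end SpectralGap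

/-- Expander mixing bound for partitions: if `A` is the (symmetric, 0/1, possibly with
loops) adjacency matrix of a `d`-regular graph on `n` vertices, all of whose
eigenvalues on the orthogonal complement of the all-ones vector are at most `λ` in
absolute value, then for every partition `V = S ⊔ T` into nonempty parts the number of
ordered edges between `S` and `T` is at least `(d − λ)·|S|·|T|/n`. -/
theorem stmt15 {V : Type*} [Fintype V] [DecidableEq V] (A : Matrix V V ℝ)
    (hsymm : A.IsSymm) (h01 : ∀ u v : V, A u v = 0 ∨ A u v = 1)
    (d : ℝ) (hreg : ∀ u : V, ∑ v : V, A u v = d)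
    (lam : ℝ) (hlam0 : 0 ≤ lam)
    (hlam : ∀ v : V → ℝ, (∑ x : V, v x) = 0 →
      Real.sqrt (∑ x : V, (A.mulVec v x) ^ 2) ≤ lam * Real.sqrt (∑ x : V, (v x) ^ 2))
    (S T : Finset V) (hS : S.Nonempty) (hT : T.Nonempty)
    (hunion : S ∪ T = Finset.univ) (hdisj : Disjoint S T) :
    (d - lam) * S.card * T.card / (Fintype.card V : ℝ) ≤ ∑ s ∈ S, ∑ t ∈ T, A s t := by
  have : Nonempty V := ⟨hS.choose⟩
  exact stmt15_general hreg (fun v ↦ by simpa only [hsymm.apply] using hreg v)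
    (fun v hv ↦ dotProduct_le_mul_dotProduct_self_of_sqrt_le (hlam v hv))
    ⟨hdisj, codisjoint_iff.2 hunion⟩
end

section
/- Let q ≥ 2 and let (P, L) be a finite projective plane of order q (so |P| = |L| = q² + q + 1, every line contains q+1 points and every point lies on q+1 lines). Let L_q be its Levi graph: the bipartite simple graph on vertex set P ⊔ L in which a point p and a line ℓ are adjacent iff p lies on ℓ (and no two points and no two lines are adjacent). Then for every set U of vertices of L_q with |U| > q² + q + 1, some vertex of U has more than (q + 1 − √q)/2 neighbors in U. -/
/-!
Haemers' form of the expander mixing lemma. Let `A` be a set of points, `B` a set of lines,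
`n = q² + q + 1`, and let `e` be the number of incidences between `A` and `B`. Any two points lie
on exactly one common line, so the first two moments of `l ↦ |A ∩ l|` over all lines are known
exactly, and Cauchy–Schwarz on `B` and on its complement gives
`(n e - (q + 1) |A| |B|)² ≤ q |A| (n - |A|) |B| (n - |B|)`.

If `|A| + |B| > n`, then `(n - |A|) (n - |B|) ≤ |A| |B|`, hence `n e ≥ (q + 1 - √q) |A| |B|`.
By duality we may assume `|B| ≤ |A|`, so `|A| > n / 2`, and the average over `B` of `|A ∩ l|`
exceeds `(q + 1 - √q) / 2`.
-/

open Finset Configuration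

section SecondMoment

variable {α β R : Type*} [CommRing R] [LinearOrder R] [IsStrictOrderedRing R]

theorem sq_card_mul_sum_sub_card_mul_sum_le [Fintype β] [DecidableEq β] (t : Finset β)
    (f : β → R) :
    (Fintype.card β * ∑ b ∈ t, f b - #t * ∑ b, f b) ^ 2 ≤
      #t * #tᶜ * (Fintype.card β * ∑ b, f b ^ 2 - (∑ b, f b) ^ 2) := by
  have hcard : (Fintype.card β : R) = #t + #tᶜ := mod_cast (card_add_card_compl t).symm
  rw [hcard, ← sum_add_sum_compl t f, ← sum_add_sum_compl t (f · ^ 2)]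
  have ht := mul_le_mul_of_nonneg_left (sq_sum_le_card_mul_sum_sq (s := t) (f := f))
    (by positivity : (0 : R) ≤ #tᶜ * (#t + #tᶜ))
  have htc := mul_le_mul_of_nonneg_left (sq_sum_le_card_mul_sum_sq (s := tᶜ) (f := f))
    (by positivity : (0 : R) ≤ #t * (#t + #tᶜ))
  -- With `S` and `S'` the sums over `t` and its complement, of sizes `m` and `m'`:
  -- `(m' S - m S')² + m m' (S + S')² = (m + m') (m' S² + m S'²)`.
  linear_combination ht + htc

variable (r : α → β → Prop) [∀ a b, Decidable (r a b)]

theorem sum_sq_card_bipartiteBelow (s : Finset α) (t : Finset β) :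
    ∑ b ∈ t, #(s.bipartiteBelow r b) ^ 2 = ∑ p ∈ s ×ˢ s, #{b ∈ t | r p.1 b ∧ r p.2 b} := by
  let r₂ : α × α → β → Prop := fun p b => r p.1 b ∧ r p.2 b
  have card_below (b : β) : #(s.bipartiteBelow r b) ^ 2 = #((s ×ˢ s).bipartiteBelow r₂ b) := by
    rw [sq, ← card_product, bipartiteBelow, ← filter_product, bipartiteBelow]
  simp_rw [card_below]
  exact (sum_card_bipartiteAbove_eq_sum_card_bipartiteBelow r₂).symm

variable {r} {k μ : ℕ} {s : Finset α}

theorem sum_card_bipartiteBelow_of_card_bipartiteAbove {t : Finset β}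
    (hk : ∀ a ∈ s, #(t.bipartiteAbove r a) = k) :
    ∑ b ∈ t, #(s.bipartiteBelow r b) = #s * k := by
  rw [← sum_card_bipartiteAbove_eq_sum_card_bipartiteBelow]
  exact sum_const_nat hk

theorem sum_sq_card_bipartiteBelow_of_pairwise {t : Finset β}
    (hk : ∀ a ∈ s, #(t.bipartiteAbove r a) = k)
    (hμ : (s : Set α).Pairwise fun a a' => #{b ∈ t | r a b ∧ r a' b} = μ) :
    ∑ b ∈ t, #(s.bipartiteBelow r b) ^ 2 = #s * k + #s.offDiag * μ := by
  classical
  rw [sum_sq_card_bipartiteBelow, ← diag_union_offDiag, sum_union (disjoint_diag_offDiag s),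
    sum_diag]
  congr 1
  · exact sum_const_nat fun a ha => by simpa only [and_self, bipartiteAbove] using hk a ha
  · refine sum_const_nat fun p hp => ?_
    obtain ⟨h₁, h₂, hne⟩ := mem_offDiag.1 hp
    exact hμ h₁ h₂ hne

theorem sq_card_mul_sum_card_bipartiteBelow_sub_le [Fintype β] [DecidableEq β]
    (hk : ∀ a ∈ s, #(univ.bipartiteAbove r a) = k)
    (hμ : (s : Set α).Pairwise fun a a' => #{b | r a b ∧ r a' b} = μ) (t : Finset β) :
    ((Fintype.card β : R) * ∑ b ∈ t, (#(s.bipartiteBelow r b) : R) - k * #s * #t) ^ 2 ≤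
      #t * #tᶜ * (Fintype.card β * (#s * k + (#s ^ 2 - #s) * μ) - (k * #s) ^ 2) := by
  have first_moment : ∑ b, (#(s.bipartiteBelow r b) : R) = #s * k :=
    mod_cast sum_card_bipartiteBelow_of_card_bipartiteAbove hk
  have second_moment : ∑ b, (#(s.bipartiteBelow r b) : R) ^ 2 = #s * k + #s.offDiag * μ :=
    mod_cast sum_sq_card_bipartiteBelow_of_pairwise hk hμ
  have cast_card_offDiag : (#s.offDiag : R) = #s ^ 2 - #s := by
    rw [offDiag_card, Nat.cast_sub (Nat.le_mul_self _), Nat.cast_mul, sq]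
  have := sq_card_mul_sum_sub_card_mul_sum_le t fun b => (#(s.bipartiteBelow r b) : R)
  rw [first_moment, second_moment, cast_card_offDiag] at this
  linear_combination this

end SecondMoment

section ProjectivePlane

open ProjectivePlane (order)

variable {P L : Type*} [Membership P L] [∀ (p : P) (l : L), Decidable (p ∈ l)]

theorem card_lines_through_two_points [HasLines P L] [Fintype L] {p p' : P} (h : p ≠ p') :
    #{l : L | p ∈ l ∧ p' ∈ l} = 1 :=
  (Fintype.existsUnique_iff_card_one _).1 (HasLines.existsUnique_line P L p p' h)

variable [ProjectivePlane P L]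

theorem card_lines_through_point [Finite P] [Fintype L] (p : P) :
    #{l : L | p ∈ l} = order P L + 1 := by
  rw [← ProjectivePlane.lineCount_eq L p, lineCount, Nat.card_eq_fintype_card,
    Fintype.card_subtype]

theorem sq_card_lines_mul_sum_card_filter_mem_sub_le [Fintype P] [Fintype L] [DecidableEq P]
    [DecidableEq L] (A : Finset P) (B : Finset L) :
    ((Fintype.card L : ℝ) * ∑ l ∈ B, (#{p ∈ A | p ∈ l} : ℝ) - (order P L + 1) * #A * #B) ^ 2 ≤
      order P L * (#A * #Aᶜ) * (#B * #Bᶜ) := by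
  have hn : (Fintype.card L : ℝ) = order P L ^ 2 + order P L + 1 :=
    mod_cast ProjectivePlane.card_lines P L
  have hA : (#Aᶜ : ℝ) = order P L ^ 2 + order P L + 1 - #A := by
    rw [eq_sub_iff_add_eq']
    exact mod_cast (card_add_card_compl A).trans (ProjectivePlane.card_points P L)
  have := sq_card_mul_sum_card_bipartiteBelow_sub_le (R := ℝ) (s := A)
    (fun p _ => card_lines_through_point p) (fun p _ p' _ => card_lines_through_two_points) B
  simp only [bipartiteBelow, Nat.cast_add, Nat.cast_one, hn] at this
  -- With `a = |A|`, `(q + 1)² = n + q` turns `n a (q + a) - ((q + 1) a)²` into `q a (n - a)`.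
  rw [hn, hA]
  linear_combination this

theorem le_card_lines_mul_sum_card_filter_mem [Finite P] [Fintype L] (A : Finset P)
    (B : Finset L) (h : Fintype.card L ≤ #A + #B) :
    (order P L + 1 - √(order P L)) * (#A * #B) ≤
      (Fintype.card L : ℝ) * ∑ l ∈ B, (#{p ∈ A | p ∈ l} : ℝ) := by
  classical
  have := Fintype.ofFinite P
  have hPL := ProjectivePlane.card_points_eq_card_lines P L
  have hA : #Aᶜ ≤ #B := by have := card_add_card_compl A; lia
  have hB : #Bᶜ ≤ #A := by have := card_add_card_compl B; lia
  have deviation_sq_le : ((Fintype.card L : ℝ) * ∑ l ∈ B, (#{p ∈ A | p ∈ l} : ℝ) -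
      (order P L + 1) * #A * #B) ^ 2 ≤ (√(order P L) * (#A * #B)) ^ 2 :=
    calc
      _ ≤ (order P L * (#A * #Aᶜ) * (#B * #Bᶜ) : ℝ) :=
        sq_card_lines_mul_sum_card_filter_mem_sub_le A B
      _ ≤ order P L * (#A * #B) * (#B * #A) := by gcongr
      _ = (√(order P L) * (#A * #B)) ^ 2 := by
        rw [mul_pow, Real.sq_sqrt (Nat.cast_nonneg _)]
        ring
  linear_combination (abs_le_of_sq_le_sq' deviation_sq_le (by positivity)).1

theorem exists_line_lt_card_filter_mem [Finite P] [Finite L] {A : Finset P} {B : Finset L}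
    (hBA : #B ≤ #A) (h : order P L ^ 2 + order P L + 1 < #A + #B) :
    ∃ l ∈ B, (order P L + 1 - √(order P L)) / 2 < (#{p ∈ A | p ∈ l} : ℝ) := by
  have := Fintype.ofFinite P
  have := Fintype.ofFinite L
  rw [← ProjectivePlane.card_lines P L] at h
  by_contra! hle
  set d : ℝ := order P L + 1 - √(order P L)
  have hd : 0 < d := by
    have : √(order P L) < order P L :=
      Real.sqrt_lt_self_iff.2 (mod_cast ProjectivePlane.one_lt_order P L)
    linarith
  have hB : 0 < #B := by
    have := ProjectivePlane.card_points_eq_card_lines P L ▸ card_le_univ A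
    lia
  have hA : (Fintype.card L : ℝ) < 2 * #A := by
    exact_mod_cast (by lia : Fintype.card L < 2 * #A)
  refine lt_irrefl (d * (#A * #B)) ?_
  calc
    d * (#A * #B) ≤ (Fintype.card L : ℝ) * ∑ l ∈ B, (#{p ∈ A | p ∈ l} : ℝ) :=
      le_card_lines_mul_sum_card_filter_mem A B h.le
    _ ≤ Fintype.card L * (#B * (d / 2)) := by
      gcongr
      simpa only [nsmul_eq_mul] using sum_le_card_nsmul B _ _ hle
    _ < 2 * #A * (#B * (d / 2)) := by gcongr
    _ = d * (#A * #B) := by ring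

theorem exists_point_lt_card_filter_mem [Finite P] [Finite L] {A : Finset P} {B : Finset L}
    (hAB : #A ≤ #B) (h : order P L ^ 2 + order P L + 1 < #A + #B) :
    ∃ p ∈ A, (order P L + 1 - √(order P L)) / 2 < (#{l ∈ B | p ∈ l} : ℝ) := by
  let _ : ∀ (l : Dual L) (p : Dual P), Decidable (l ∈ p) :=
    fun l p => ‹∀ (p : P) (l : L), Decidable (p ∈ l)› p l
  rw [add_comm #A, ← ProjectivePlane.Dual.order P L] at h
  rw [← ProjectivePlane.Dual.order P L]
  exact exists_line_lt_card_filter_mem (P := Dual L) (L := Dual P) hAB h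

end ProjectivePlane

section LeviGraph

variable (P L : Type*) [Membership P L]

/-- The Levi graph of an incidence structure: the bipartite graph on points and lines whose edges
are the incident pairs. `SimpleGraph.fromRel` symmetrizes the relation, which is given only from
points to lines. -/
def leviGraph : SimpleGraph (P ⊕ L) :=
  SimpleGraph.fromRel fun x y => ∃ (p : P) (l : L), x = Sum.inl p ∧ y = Sum.inr l ∧ p ∈ l

variable {P L} [∀ (p : P) (l : L), Decidable (p ∈ l)] (U : Finset (P ⊕ L))

theorem ncard_inter_neighborSet_leviGraph_inl (p : P) :
    (↑U ∩ (leviGraph P L).neighborSet (Sum.inl p)).ncard = #{l ∈ U.toRight | p ∈ l} := by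
  have : ↑U ∩ (leviGraph P L).neighborSet (Sum.inl p) =
      Sum.inr '' (({l ∈ U.toRight | p ∈ l} : Finset L) : Set L) := by
    ext (x | x) <;> simp [leviGraph]
  rw [this, Set.ncard_image_of_injective _ Sum.inr_injective, Set.ncard_coe_finset]

theorem ncard_inter_neighborSet_leviGraph_inr (l : L) :
    (↑U ∩ (leviGraph P L).neighborSet (Sum.inr l)).ncard = #{p ∈ U.toLeft | p ∈ l} := by
  have : ↑U ∩ (leviGraph P L).neighborSet (Sum.inr l) =
      Sum.inl '' (({p ∈ U.toLeft | p ∈ l} : Finset P) : Set P) := by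
    ext (x | x) <;> simp [leviGraph]
  rw [this, Set.ncard_image_of_injective _ Sum.inl_injective, Set.ncard_coe_finset]

end LeviGraph

/-- In the Levi (point–line incidence) graph of a finite projective plane of order
`q ≥ 2`, every vertex set `U` with `|U| > q² + q + 1` contains a vertex with more than
`(q + 1 − √q)/2` neighbors in `U`. -/
theorem stmt17 {P L : Type*} [Fintype P] [Fintype L] [Membership P L]
    [Configuration.ProjectivePlane P L]
    (q : ℕ) (hq : 2 ≤ q) (hq' : q = Configuration.ProjectivePlane.order P L)
    (G : SimpleGraph (P ⊕ L))
    (hG : G = SimpleGraph.fromRel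
      (fun x y => ∃ (p : P) (l : L), x = Sum.inl p ∧ y = Sum.inr l ∧ p ∈ l)) :
    ∀ U : Set (P ⊕ L), q ^ 2 + q + 1 < U.ncard →
      ∃ x ∈ U, ((q : ℝ) + 1 - Real.sqrt q) / 2 < ((U ∩ G.neighborSet x).ncard : ℝ) := by
  classical
  intro U hU
  obtain rfl : G = leviGraph P L := hG
  subst hq'
  lift U to Finset (P ⊕ L) using U.toFinite
  rw [Set.ncard_coe_finset, ← U.card_toLeft_add_card_toRight] at hU
  rcases le_total #U.toRight #U.toLeft with h | h
  · obtain ⟨l, hl, hlt⟩ := exists_line_lt_card_filter_mem h hU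
    exact ⟨Sum.inr l, mem_toRight.1 hl, by rwa [ncard_inter_neighborSet_leviGraph_inr]⟩
  · obtain ⟨p, hp, hlt⟩ := exists_point_lt_card_filter_mem h hU
    exact ⟨Sum.inl p, mem_toLeft.1 hp, by rwa [ncard_inter_neighborSet_leviGraph_inl]⟩
end

section
/- Let Γ be a finite group of order n and C ⊆ Γ a generating set with C = C⁻¹ and 1 ∉ C, and suppose C is a minimal Cayley generating set in the sense that for every c ∈ C, the set C \ {c, c⁻¹} does not generate Γ. Let d = |C|, let A be the adjacency matrix of Cay(Γ, C) (so A_{x,y} = 1 iff x⁻¹y ∈ C), and let λ ≥ 0 be such that for every vector v ∈ ℝ^Γ orthogonal to the all-ones vector, ‖A v‖ ≤ λ·‖v‖. Then λ ≥ d − 4. -/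
/-!
Let `H` be a proper subgroup containing all generators outside a set `T`, and let `v` be the
difference of the indicator functions of two left cosets of `H`. The adjacency matrix is the sum of
the right translations by the generators, each an isometry. Those by generators outside `T` fix `v`,
while each of the others moves `v` by at most `2‖v‖`, so `‖A v‖ ≥ (d - 2|T|)‖v‖`. As the entries
of `v` sum to zero, `‖A v‖ ≤ λ‖v‖`. For a minimal generating set take `T = {c, c⁻¹}`.
-/

theorem card_sub_two_mul_card_mul_norm_le_norm_sum {ι E : Type*} [DecidableEq ι]
    [SeminormedAddCommGroup E] [NormedSpace ℝ E] {s t : Finset ι} {w : ι → E} {v : E}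
    (hfix : ∀ i ∈ s \ t, w i = v) (hnorm : ∀ i ∈ s, ‖w i‖ ≤ ‖v‖) :
    ((s.card : ℝ) - 2 * t.card) * ‖v‖ ≤ ‖∑ i ∈ s, w i‖ := by
  have hmoved : ‖∑ i ∈ s, (v - w i)‖ ≤ 2 * t.card * ‖v‖ := calc
    ‖∑ i ∈ s, (v - w i)‖ = ‖∑ i ∈ s ∩ t, (v - w i)‖ := by
      rw [← Finset.sum_inter_add_sum_sdiff s t,
        Finset.sum_eq_zero fun i hi => sub_eq_zero.2 (hfix i hi).symm, add_zero]
    _ ≤ ∑ i ∈ s ∩ t, 2 * ‖v‖ := norm_sum_le_of_le _ fun i hi => by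
      linarith [norm_sub_le v (w i), hnorm i (Finset.mem_of_mem_inter_left hi)]
    _ = (s ∩ t).card * (2 * ‖v‖) := by rw [Finset.sum_const, nsmul_eq_mul]
    _ ≤ t.card * (2 * ‖v‖) := by gcongr; exact Finset.inter_subset_right
    _ = 2 * t.card * ‖v‖ := by ring
  have hconst : ∑ i ∈ s, w i + ∑ i ∈ s, (v - w i) = (s.card : ℝ) • v := by
    simp only [← Finset.sum_add_distrib, add_sub_cancel, Finset.sum_const,
      Nat.cast_smul_eq_nsmul]
  have htriangle : s.card * ‖v‖ ≤ ‖∑ i ∈ s, w i‖ + ‖∑ i ∈ s, (v - w i)‖ := by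
    simpa only [hconst, norm_smul, Real.norm_natCast] using
      norm_add_le (∑ i ∈ s, w i) (∑ i ∈ s, (v - w i))
  linarith

theorem norm_toLp_comp_equiv {ι κ E : Type*} [Fintype ι] [Fintype κ] [SeminormedAddCommGroup E]
    (p : ENNReal) [Fact (1 ≤ p)] (e : ι ≃ κ) (f : κ → E) :
    ‖WithLp.toLp p (f ∘ e)‖ = ‖WithLp.toLp p f‖ :=
  (LinearIsometryEquiv.piLpCongrLeft p ℤ E e.symm).norm_map (WithLp.toLp p f)

/-- The adjacency matrix of the Cayley graph of `Γ` with respect to `C`. It is directed when `C` is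
not closed under inversion and has loops when `1 ∈ C`. -/
def cayleyMatrix {Γ : Type*} [Group Γ] [DecidableEq Γ] (R : Type*) [Zero R] [One R]
    (C : Finset Γ) : Matrix Γ Γ R :=
  Matrix.of fun x y => if x⁻¹ * y ∈ C then 1 else 0

section Group

variable {Γ : Type*} [Group Γ] [Fintype Γ]

theorem exists_ne_zero_sum_eq_zero_mul_right_invariant (R : Type*) [Ring R] [Nontrivial R]
    {H : Subgroup Γ} (hH : H ≠ ⊤) :
    ∃ v : Γ → R, v ≠ 0 ∧ ∑ x, v x = 0 ∧ ∀ s ∈ H, ∀ x, v (x * s) = v x := by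
  classical
  obtain ⟨g, hg⟩ : ∃ g, g ∉ H := by simpa only [ne_eq, H.eq_top_iff', not_forall] using hH
  let u : Γ → R := fun x => if x ∈ H then 1 else 0
  refine ⟨fun x => u x - u (g⁻¹ * x), fun h => ?_, ?_, fun s hs x => ?_⟩
  · simpa [u, hg, H.one_mem] using congrFun h 1
  · rw [Finset.sum_sub_distrib, sub_eq_zero]
    exact (Equiv.sum_comp (Equiv.mulLeft g⁻¹) u).symm
  · simp only [u, ← mul_assoc, H.mul_mem_cancel_right hs]

variable [DecidableEq Γ]

theorem cayleyMatrix_mulVec {R : Type*} [NonAssocSemiring R] (C : Finset Γ) (v : Γ → R) :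
    (cayleyMatrix R C).mulVec v = ∑ s ∈ C, fun x => v (x * s) := by
  ext x
  simp only [cayleyMatrix, Matrix.mulVec, dotProduct, Matrix.of_apply, Finset.sum_apply]
  rw [← Equiv.sum_comp (Equiv.mulLeft x)]
  simp

theorem card_sub_two_mul_card_mul_norm_le_norm_cayleyMatrix_mulVec (p : ENNReal) [Fact (1 ≤ p)]
    {C T : Finset Γ} {v : Γ → ℝ} (hv : ∀ s ∈ C \ T, ∀ x, v (x * s) = v x) :
    ((C.card : ℝ) - 2 * T.card) * ‖WithLp.toLp p v‖ ≤
      ‖WithLp.toLp p ((cayleyMatrix ℝ C).mulVec v)‖ := by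
  rw [cayleyMatrix_mulVec, WithLp.toLp_sum]
  exact card_sub_two_mul_card_mul_norm_le_norm_sum
    (fun s hs => congrArg (WithLp.toLp p) (funext (hv s hs)))
    fun s _ => (norm_toLp_comp_equiv p (Equiv.mulRight s) v).le

theorem stmt18_general (C T : Finset Γ) (hT : Subgroup.closure ((C : Set Γ) \ T) ≠ ⊤)
    (A : Matrix Γ Γ ℝ)
    (hA : A = Matrix.of fun x y => if x⁻¹ * y ∈ C then (1 : ℝ) else 0)
    (lam : ℝ)
    (hlam : ∀ v : Γ → ℝ, (∑ x : Γ, v x) = 0 →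
      Real.sqrt (∑ x : Γ, (A.mulVec v x) ^ 2) ≤ lam * Real.sqrt (∑ x : Γ, (v x) ^ 2)) :
    (C.card : ℝ) - 2 * T.card ≤ lam := by
  obtain ⟨v, hv, hsum, hinv⟩ := exists_ne_zero_sum_eq_zero_mul_right_invariant ℝ hT
  have hpos : 0 < ‖WithLp.toLp 2 v‖ := norm_pos_iff.2 ((WithLp.toLp_eq_zero 2).not.2 hv)
  have hlower : (C.card - 2 * T.card) * ‖WithLp.toLp 2 v‖ ≤ ‖WithLp.toLp 2 (A.mulVec v)‖ := by
    rw [show A = cayleyMatrix ℝ C from hA]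
    refine card_sub_two_mul_card_mul_norm_le_norm_cayleyMatrix_mulVec 2 fun s hs =>
      hinv s (Subgroup.subset_closure ?_)
    exact_mod_cast hs
  have hupper : ‖WithLp.toLp 2 (A.mulVec v)‖ ≤ lam * ‖WithLp.toLp 2 v‖ := by
    simpa only [EuclideanSpace.norm_eq, Real.norm_eq_abs, sq_abs] using hlam v hsum
  exact le_of_mul_le_mul_right (hlower.trans hupper) hpos

end Group

/-- If `Cay(Γ, C)` is a minimal Cayley graph (no generator together with its inverse
can be dropped) of a finite group of order `n`, and it is an `(n,d,λ)`-graph (all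
nontrivial eigenvalues of its adjacency matrix of absolute value at most `λ`), then
`λ ≥ d − 4` where `d = |C|`. -/
theorem stmt18 {Γ : Type*} [Group Γ] [Fintype Γ] [DecidableEq Γ] (C : Finset Γ)
    (hsym : ∀ c ∈ C, c⁻¹ ∈ C) (h1 : (1 : Γ) ∉ C)
    (hgen : Subgroup.closure (C : Set Γ) = ⊤)
    (hmin : ∀ c ∈ C, Subgroup.closure ((C : Set Γ) \ {c, c⁻¹}) ≠ ⊤)
    (A : Matrix Γ Γ ℝ)
    (hA : A = Matrix.of fun x y => if x⁻¹ * y ∈ C then (1 : ℝ) else 0)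
    (lam : ℝ) (hlam0 : 0 ≤ lam)
    (hlam : ∀ v : Γ → ℝ, (∑ x : Γ, v x) = 0 →
      Real.sqrt (∑ x : Γ, (A.mulVec v x) ^ 2) ≤ lam * Real.sqrt (∑ x : Γ, (v x) ^ 2)) :
    (C.card : ℝ) - 4 ≤ lam := by
  obtain rfl | ⟨c, hc⟩ := C.eq_empty_or_nonempty
  · rw [Finset.card_empty, Nat.cast_zero]
    linarith
  · have hpair : (({c, c⁻¹} : Finset Γ).card : ℝ) ≤ 2 := mod_cast Finset.card_le_two
    have hproper := hmin c hc
    rw [← Finset.coe_pair] at hproper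
    linarith [stmt18_general C {c, c⁻¹} hproper A hA lam hlam]
end

section
/- Let r ≥ 1 and let G be the graph on vertex set (ℤ/3ℤ)^r in which x and y are adjacent iff x − y = ±e_i for some standard basis vector e_i, equivalently iff x and y differ in exactly one coordinate (this is the Cayley graph of ℤ_3^r with respect to the standard generators and their inverses). Then: (i) every independent set of G has at most 3^{r−1} elements; and (ii) there exist disjoint sets A, B ⊆ (ℤ/3ℤ)^r with |A| = 3^{r−1} + 1 and |B| = 3^{r−1} such that the subgraph of G induced by A has maximum degree at most 1 and B is an independent set. In particular, G has a set of more than α(G) vertices inducing a subgraph of maximum degree 1. -/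
/-!
Put an abelian group structure on the alphabet, of size `q`. Two words differing in exactly one
coordinate have different coordinate sums, so the words of sum `0` form an independent set `B`;
deleting one coordinate is injective on an independent set, which bounds its size by `q ^ (r - 1)`
and is a bijection from `B`. Let `A` consist of the nonzero words whose coordinate sum equals their
leading (first nonzero) coordinate. It misses `B`, and changing one coordinate of a word of `A`
keeps it in `A` only when the leading coordinate is replaced by another nonzero value, so the
induced degrees are at most `q - 2`. Splitting off the first coordinate gives
`|A_{n+1}| = (q - 1) |B_n| + |A_n|`, and hence `|A_r| = q ^ (r - 1) + (q - 2)`.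
-/

theorem isIndepSet_iff_forall_not_adj {V : Type*} {G : SimpleGraph V} {S : Set V} :
    G.IsIndepSet S ↔ ∀ x ∈ S, ∀ y ∈ S, ¬ G.Adj x y :=
  ⟨fun h _ hx _ hy hxy => h hx hy hxy.ne hxy, fun h _ hx _ hy _ => h _ hx _ hy⟩

theorem nonempty_addCommGroup_of_finite (α : Type*) [Finite α] [Nonempty α] :
    Nonempty (AddCommGroup α) :=
  have : NeZero (Nat.card α) := ⟨Nat.card_pos.ne'⟩
  ⟨(Finite.equivFin α).addCommGroup⟩

/-- The Hamming graph on the words over the alphabet `α` indexed by `ι`: two words are adjacent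
when they differ in exactly one coordinate. -/
def hammingGraph (ι α : Type*) : SimpleGraph (ι → α) where
  Adj x y := ∃ i, x i ≠ y i ∧ ∀ j ≠ i, x j = y j
  symm := ⟨fun _ _ ⟨i, hi, h⟩ => ⟨i, hi.symm, fun j hj => (h j hj).symm⟩⟩
  loopless := ⟨fun _ ⟨_, hi, _⟩ => hi rfl⟩

theorem fromRel_single_eq_hammingGraph (ι : Type*) [DecidableEq ι] :
    SimpleGraph.fromRel (fun x y : ι → ZMod 3 =>
      ∃ i, y = x + Pi.single i 1 ∨ y = x - Pi.single i 1) = hammingGraph ι (ZMod 3) := by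
  have eq_add_or_sub : ∀ a b : ZMod 3, a ≠ b → b = a + 1 ∨ b = a - 1 := by decide
  ext x y
  rw [SimpleGraph.fromRel_adj]
  constructor
  · rintro ⟨-, ⟨i, rfl | rfl⟩ | ⟨i, rfl | rfl⟩⟩ <;>
      exact ⟨i, by simp [eq_sub_iff_add_eq], fun j hj => by simp [hj]⟩
  · rintro ⟨i, hi, hxy⟩
    have y_eq : y = Function.update x i (y i) := by
      rw [Function.eq_update_iff]
      exact ⟨rfl, fun j hj => (hxy j hj).symm⟩
    refine ⟨fun h => hi (congrFun h i), Or.inl ⟨i, ?_⟩⟩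
    rw [y_eq, Function.update_eq_iff, Function.update_eq_iff]
    exact (eq_add_or_sub _ _ hi).imp (fun h => ⟨by simp [h], fun j hj => by simp [hj]⟩)
      fun h => ⟨by simp [h], fun j hj => by simp [hj]⟩

section IndependentSets

variable {ι α : Type*} {S : Set (ι → α)}

theorem injOn_restrict_of_isIndepSet_hammingGraph (hS : (hammingGraph ι α).IsIndepSet S) (i : ι) :
    S.InjOn (Subtype.restrict (· ≠ i)) := by
  intro x hx y hy hxy
  have agree : ∀ j ≠ i, x j = y j := fun j hj => congrFun hxy ⟨j, hj⟩
  by_contra hne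
  have differ : x i ≠ y i := fun hi =>
    hne (funext fun j => (eq_or_ne j i).elim (fun h => h ▸ hi) (agree j))
  exact hS hx hy hne ⟨i, differ, agree⟩

theorem natCard_ne_fun [Finite ι] (α : Type*) (i : ι) :
    Nat.card ({j // j ≠ i} → α) = Nat.card α ^ (Nat.card ι - 1) := by
  classical
  have := Fintype.ofFinite ι
  simp [Nat.card_fun]

theorem ncard_le_of_isIndepSet_hammingGraph [Finite ι] [Nonempty ι] [Finite α]
    (hS : (hammingGraph ι α).IsIndepSet S) : S.ncard ≤ Nat.card α ^ (Nat.card ι - 1) := by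
  obtain ⟨i⟩ := ‹Nonempty ι›
  rw [← natCard_ne_fun α i, ← (injOn_restrict_of_isIndepSet_hammingGraph hS i).ncard_image]
  exact Set.ncard_le_card _

end IndependentSets

section SumFibers

variable {ι M : Type*} [Fintype ι]

theorem sum_add_apply_eq_of_forall_ne_eq [AddCommMonoid M] {x y : ι → M} {i : ι}
    (h : ∀ j ≠ i, x j = y j) : ∑ j, x j + y i = ∑ j, y j + x i := by
  classical
  rw [Fintype.sum_eq_add_sum_subtype_ne x i, Fintype.sum_eq_add_sum_subtype_ne y i,
    Fintype.sum_congr _ _ fun j : {j // j ≠ i} => h j j.2]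
  abel

variable [AddCommGroup M]

theorem sum_ne_sum_of_hammingGraph_adj {x y : ι → M} (hxy : (hammingGraph ι M).Adj x y) :
    ∑ i, x i ≠ ∑ i, y i := by
  obtain ⟨i, hi, h⟩ := hxy
  intro sum_eq
  have sum_add := sum_add_apply_eq_of_forall_ne_eq h
  rw [sum_eq] at sum_add
  exact hi (add_left_cancel sum_add).symm

theorem isIndepSet_hammingGraph_sum_eq (c : M) :
    (hammingGraph ι M).IsIndepSet {x | ∑ i, x i = c} :=
  fun _ hx _ hy _ hxy => sum_ne_sum_of_hammingGraph_adj hxy (Eq.trans hx (Eq.symm hy))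

theorem image_restrict_sum_eq (i : ι) (c : M) :
    Subtype.restrict (· ≠ i) '' {x : ι → M | ∑ j, x j = c} = Set.univ := by
  classical
  refine Set.eq_univ_of_forall fun t => ?_
  obtain ⟨x, hx⟩ := (Equiv.funSplitAt i M).surjective (c - ∑ j, t j, t)
  have x_apply : x i = c - ∑ j, t j := congrArg Prod.fst hx
  have x_restrict : Subtype.restrict (· ≠ i) x = t := congrArg Prod.snd hx
  have sum_restrict : ∑ j : {j // j ≠ i}, x j = ∑ j, t j :=
    Fintype.sum_congr _ _ (congrFun x_restrict)
  refine ⟨x, ?_, x_restrict⟩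
  rw [Set.mem_ofPred_eq, Fintype.sum_eq_add_sum_subtype_ne x i, x_apply, sum_restrict,
    sub_add_cancel]

theorem ncard_sum_eq [Nonempty ι] (c : M) :
    {x : ι → M | ∑ i, x i = c}.ncard = Nat.card M ^ (Nat.card ι - 1) := by
  obtain ⟨i⟩ := ‹Nonempty ι›
  rw [← natCard_ne_fun M i, ← Set.ncard_univ, ← image_restrict_sum_eq i c,
    (injOn_restrict_of_isIndepSet_hammingGraph (isIndepSet_hammingGraph_sum_eq c) i).ncard_image]

end SumFibers

section LeadingSum

variable {ι M : Type*} [LinearOrder ι]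

/-- `i` is the leading index of the word `x`: the position of its first nonzero coordinate. -/
def IsLeadingIndex [Zero M] (x : ι → M) (i : ι) : Prop :=
  x i ≠ 0 ∧ ∀ j < i, x j = 0

variable [Fintype ι]

variable (ι M) in
/-- The nonzero words whose coordinate sum equals their leading coordinate, the large set of
small induced degree. When addition is cancellative, this says that the coordinates after the
leading one sum to zero. -/
def leadingSumSet [AddCommMonoid M] : Set (ι → M) :=
  {x | ∃ i, IsLeadingIndex x i ∧ ∑ j, x j = x i}

theorem disjoint_leadingSumSet_sum_eq_zero [AddCommMonoid M] :
    Disjoint (leadingSumSet ι M) {x | ∑ i, x i = 0} :=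
  Set.disjoint_left.mpr fun _ ⟨_, hi, hsum⟩ hzero => hi.1 (hsum.symm.trans hzero)

variable [AddCommGroup M]

theorem IsLeadingIndex.le_of_adj {x y : ι → M} {i j : ι} (hi : IsLeadingIndex x i)
    (hxsum : ∑ k, x k = x i) (hj : IsLeadingIndex y j) (hysum : ∑ k, y k = y j)
    (hxy : (hammingGraph ι M).Adj x y) : j ≤ i := by
  obtain ⟨k, -, hk⟩ := hxy
  by_contra! hij
  have hyi : y i = 0 := hj.2 i hij
  obtain rfl : i = k := by
    by_contra hik
    exact hi.1 ((hk i hik).trans hyi)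
  have sum_y : ∑ k, y k = 0 := by
    simpa [hxsum, hyi] using sum_add_apply_eq_of_forall_ne_eq hk
  exact hj.1 (hysum.symm.trans sum_y)

theorem IsLeadingIndex.inter_neighborSet_subset {x : ι → M} {i : ι} (hi : IsLeadingIndex x i)
    (hsum : ∑ j, x j = x i) :
    leadingSumSet ι M ∩ (hammingGraph ι M).neighborSet x ⊆
      Function.update x i '' {x i, 0}ᶜ := by
  rintro y ⟨⟨j, hj, hysum⟩, hxy⟩
  obtain rfl : i = j := le_antisymm
    (hj.le_of_adj hysum hi hsum hxy.symm) (hi.le_of_adj hsum hj hysum hxy)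
  obtain ⟨k, hne, hk⟩ := hxy
  obtain rfl : i = k := by
    by_contra hik
    have sum_eq : ∑ j, x j = ∑ j, y j := by rw [hsum, hysum, hk i hik]
    exact sum_ne_sum_of_hammingGraph_adj ⟨k, hne, hk⟩ sum_eq
  refine ⟨y i, by simp [hne.symm, hj.1], ?_⟩
  rw [Function.update_eq_iff]
  exact ⟨rfl, hk⟩

theorem ncard_leadingSumSet_inter_neighborSet_le [Finite M] {x : ι → M}
    (hx : x ∈ leadingSumSet ι M) :
    (leadingSumSet ι M ∩ (hammingGraph ι M).neighborSet x).ncard ≤ Nat.card M - 2 := by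
  obtain ⟨i, hi, hsum⟩ := hx
  calc (leadingSumSet ι M ∩ (hammingGraph ι M).neighborSet x).ncard
      ≤ (Function.update x i '' {x i, 0}ᶜ).ncard :=
        Set.ncard_le_ncard (hi.inter_neighborSet_subset hsum)
    _ ≤ ({x i, 0}ᶜ : Set M).ncard := Set.ncard_image_le
    _ = Nat.card M - 2 := by rw [Set.ncard_compl, Set.ncard_pair hi.1]

end LeadingSum

section Cardinality

variable {M : Type*}

theorem isLeadingIndex_cons_zero [Zero M] {n : ℕ} {a : M} {t : Fin n → M} :
    IsLeadingIndex (Fin.cons a t : Fin (n + 1) → M) 0 ↔ a ≠ 0 := by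
  simp [IsLeadingIndex]

theorem isLeadingIndex_cons_succ [Zero M] {n : ℕ} {a : M} {t : Fin n → M} {i : Fin n} :
    IsLeadingIndex (Fin.cons a t : Fin (n + 1) → M) i.succ ↔ a = 0 ∧ IsLeadingIndex t i := by
  simp only [IsLeadingIndex, Fin.cons_succ, Fin.forall_fin_succ, Fin.cons_zero, Fin.succ_pos,
    forall_const, Fin.succ_lt_succ_iff]
  tauto

theorem leadingSumSet_fin_zero [AddCommMonoid M] : leadingSumSet (Fin 0) M = ∅ :=
  Set.eq_empty_of_forall_notMem fun _ ⟨i, _⟩ => i.elim0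

variable [AddCommGroup M]

theorem cons_mem_leadingSumSet {n : ℕ} {a : M} {t : Fin n → M} :
    (Fin.cons a t : Fin (n + 1) → M) ∈ leadingSumSet (Fin (n + 1)) M ↔
      a ≠ 0 ∧ ∑ i, t i = 0 ∨ a = 0 ∧ t ∈ leadingSumSet (Fin n) M := by
  simp only [leadingSumSet, Set.mem_ofPred_eq, Fin.exists_fin_succ, isLeadingIndex_cons_zero,
    isLeadingIndex_cons_succ, Fin.sum_cons, Fin.cons_zero, Fin.cons_succ, add_eq_left]
  refine or_congr_right ⟨?_, ?_⟩
  · rintro ⟨i, ⟨rfl, hi⟩, hsum⟩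
    exact ⟨rfl, i, hi, by simpa using hsum⟩
  · rintro ⟨rfl, i, hi, hsum⟩
    exact ⟨i, ⟨rfl, hi⟩, by simpa using hsum⟩

theorem leadingSumSet_fin_succ (n : ℕ) :
    leadingSumSet (Fin (n + 1)) M = Fin.consEquiv (fun _ => M) ''
      ({0}ᶜ ×ˢ {t | ∑ i, t i = 0} ∪ {0} ×ˢ leadingSumSet (Fin n) M) := by
  rw [Equiv.image_eq_preimage_symm]
  ext x
  rw [← Fin.cons_self_tail x, cons_mem_leadingSumSet]
  simp [Fin.consEquiv]

variable [Finite M]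

theorem ncard_leadingSumSet_fin_succ (n : ℕ) :
    (leadingSumSet (Fin (n + 1)) M).ncard =
      (Nat.card M - 1) * {t : Fin n → M | ∑ i, t i = 0}.ncard +
        (leadingSumSet (Fin n) M).ncard := by
  have disjoint_fst : Disjoint (({0}ᶜ : Set M) ×ˢ {t : Fin n → M | ∑ i, t i = 0})
      ({0} ×ˢ leadingSumSet (Fin n) M) :=
    Set.disjoint_prod.mpr (Or.inl disjoint_compl_left)
  rw [leadingSumSet_fin_succ, Set.ncard_image_of_injective _ (Equiv.injective _),
    Set.ncard_union_eq disjoint_fst, Set.ncard_prod, Set.ncard_prod, Set.ncard_compl,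
    Set.ncard_singleton, one_mul]

theorem ncard_leadingSumSet_fin [Nontrivial M] (n : ℕ) :
    (leadingSumSet (Fin (n + 1)) M).ncard = Nat.card M ^ n + (Nat.card M - 2) := by
  obtain ⟨q, hq⟩ : ∃ q, Nat.card M = q + 2 :=
    Nat.exists_eq_add_of_le' (Finite.one_lt_card (α := M))
  induction n with
  | zero =>
    have ncard_univ : {t : Fin 0 → M | ∑ i, t i = 0}.ncard = 1 := by simp
    rw [ncard_leadingSumSet_fin_succ, leadingSumSet_fin_zero, ncard_univ, Set.ncard_empty, hq,
      pow_zero]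
    omega
  | succ n ih =>
    rw [ncard_leadingSumSet_fin_succ, ih, ncard_sum_eq, Nat.card_fin, hq]
    simp only [Nat.add_sub_cancel, Nat.add_succ_sub_one]
    ring

end Cardinality

theorem stmt19_general (α : Type*) [Finite α] [Nontrivial α] {r : ℕ} (hr : 1 ≤ r) :
    (∀ S : Set (Fin r → α),
      (hammingGraph (Fin r) α).IsIndepSet S → S.ncard ≤ Nat.card α ^ (r - 1)) ∧
    ∃ A B : Set (Fin r → α), Disjoint A B ∧
      A.ncard = Nat.card α ^ (r - 1) + (Nat.card α - 2) ∧ B.ncard = Nat.card α ^ (r - 1) ∧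
      (∀ v ∈ A, (A ∩ (hammingGraph (Fin r) α).neighborSet v).ncard ≤ Nat.card α - 2) ∧
      (hammingGraph (Fin r) α).IsIndepSet B := by
  obtain ⟨n, rfl⟩ := Nat.exists_eq_add_of_le' hr
  obtain ⟨_⟩ := nonempty_addCommGroup_of_finite α
  refine ⟨fun S hS => ?_, leadingSumSet (Fin (n + 1)) α, {x | ∑ i, x i = 0},
    disjoint_leadingSumSet_sum_eq_zero, ncard_leadingSumSet_fin n, ?_,
    fun v hv => ncard_leadingSumSet_inter_neighborSet_le hv, isIndepSet_hammingGraph_sum_eq 0⟩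
  · simpa using ncard_le_of_isIndepSet_hammingGraph hS
  · simpa using ncard_sum_eq (ι := Fin (n + 1)) (0 : α)

/-- In the Cayley graph of `(ℤ/3ℤ)^r` with respect to `{±e_1, …, ±e_r}`:
(i) every independent set has at most `3^{r−1}` elements; and
(ii) there are disjoint sets `A` (of size `3^{r−1} + 1`, inducing maximum degree at
most `1`) and `B` (an independent set of size `3^{r−1}`). -/
theorem stmt19 (r : ℕ) (hr : 1 ≤ r)
    (G : SimpleGraph (Fin r → ZMod 3))
    (hG : G = SimpleGraph.fromRel (fun x y =>
      ∃ i : Fin r, y = x + Pi.single i 1 ∨ y = x - Pi.single i 1)) :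
    (∀ S : Set (Fin r → ZMod 3),
      (∀ x ∈ S, ∀ y ∈ S, ¬ G.Adj x y) → S.ncard ≤ 3 ^ (r - 1)) ∧
    ∃ A B : Set (Fin r → ZMod 3), Disjoint A B ∧
      A.ncard = 3 ^ (r - 1) + 1 ∧ B.ncard = 3 ^ (r - 1) ∧
      (∀ v ∈ A, (A ∩ G.neighborSet v).ncard ≤ 1) ∧
      (∀ x ∈ B, ∀ y ∈ B, ¬ G.Adj x y) := by
  simpa [hG, fromRel_single_eq_hammingGraph, isIndepSet_iff_forall_not_adj]
    using stmt19_general (ZMod 3) hr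
end
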